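/- arXiv:2206.11001 — 7 statements merged into one kernel-verified Lean document; each statement's English description precedes it below -/
import Mathlib

section
/- Let R be a connected reduced order, and suppose (A,G) and (B,H) are elements of GpRg(R) such that A and B are stark. Then there exists a ring automorphism σ of R with σ(A) = B and σ(G) = H; in particular A is isomorphic to B as rings and G is isomorphic to H as groups. Moreover (A,H) and (B,G) also belong to GpRg(R). -/
/-- The natural ring homomorphism `A[G] → R` for a subring `A ⊆ R` and a subgroup `G ⊆ Rˣ`. -/
noncomputable def gpRgHom {R : Type*} [CommRing R] (A : Subring R) (G : Subgroup Rˣ) :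
    MonoidAlgebra A G →+* R :=
  MonoidAlgebra.liftNCRingHom A.subtype ((Units.coeHom R).comp G.subtype)
    (fun _ _ => Commute.all _ _)

/-- `A[G] = R`: the natural map `A[G] → R` is a ring isomorphism. -/
def IsGpRg {R : Type*} [CommRing R] (A : Subring R) (G : Subgroup Rˣ) : Prop :=
  Function.Bijective (gpRgHom A G)

/-- A commutative ring is connected if it is non-zero and `0`, `1` are its only idempotents. -/
def IsConnectedRing (R : Type*) [CommRing R] : Prop :=
  Nontrivial R ∧ ∀ e : R, IsIdempotentElem e → e = 0 ∨ e = 1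

/-- A commutative ring is stark if it is not isomorphic to any group ring `A[G]`
with `A` a ring and `G` a non-trivial group. -/
def IsStark (R : Type u) [CommRing R] : Prop :=
  ∀ (A : Type u) (_ : Ring A) (G : Type u) (_ : Group G),
    Nontrivial G → IsEmpty (R ≃+* MonoidAlgebra A G)



section Analysis
variable {R : Type*} [CommRing R]

theorem gr_finite_hom [Module.Free ℤ R] [Module.Finite ℤ R] : Finite (R →+* ℂ) := by
  have : Finite (R →ₐ[ℤ] ℂ) := inferInstance
  exact Finite.of_injective (fun f : R →+* ℂ => f.toIntAlgHom) (fun f g h => by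
    ext x; exact DFunLike.congr_fun h x)

theorem gr_exists_hom [Module.Free ℤ R] [Module.Finite ℤ R] [IsReduced R]
    (x : R) (hx : x ≠ 0) : ∃ σ : R →+* ℂ, σ x ≠ 0 := by
  let S : Submonoid R := Submonoid.powers x ⊔ (nonZeroDivisors ℤ).map (algebraMap ℤ R)
  have h0 : (0 : R) ∉ S := by
    intro h
    rw [Submonoid.mem_sup] at h
    obtain ⟨y, ⟨k, rfl⟩, z, ⟨n, hn, rfl⟩, h⟩ := h
    have hn' : n ≠ 0 := nonZeroDivisors.ne_zero hn
    have : n • (x ^ k) = 0 := by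
      rw [Algebra.smul_def, mul_comm]; exact h
    rcases smul_eq_zero.1 this with h | h
    · exact hn' h
    · exact hx (eq_zero_of_pow_eq_zero h)
  obtain ⟨p, hp, -, hpS⟩ := Ideal.exists_le_prime_disjoint (⊥ : Ideal R) S (by
    rw [Set.disjoint_left]
    intro a ha hS
    have : a = 0 := by simpa using ha
    exact h0 (this ▸ hS))
  rw [Set.disjoint_left] at hpS
  have hxp : x ∉ p := fun h => hpS h (Submonoid.mem_sup_left (Submonoid.mem_powers x))
  have hnp : ∀ n : ℤ, n ≠ 0 → (algebraMap ℤ R n) ∉ p := fun n hn h =>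
    hpS h (Submonoid.mem_sup_right ⟨n, mem_nonZeroDivisors_of_ne_zero hn, rfl⟩)
  have htf : Module.IsTorsionFree ℤ (R ⧸ p) := by
    rw [Module.isTorsionFree_iff_algebraMap_injective]
    rw [injective_iff_map_eq_zero]
    intro n hn
    by_contra hne
    apply hnp n hne
    rw [← Ideal.Quotient.eq_zero_iff_mem, ← hn]
    simp
  have : Module.Finite ℤ (R ⧸ p) :=
    Module.Finite.of_surjective ((Ideal.Quotient.mk p).toIntAlgHom.toLinearMap)
      Ideal.Quotient.mk_surjective
  let f : (R ⧸ p) →ₐ[ℤ] ℂ := IsAlgClosed.lift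
  by_cases hf : Function.Injective f
  · refine ⟨f.toRingHom.comp (Ideal.Quotient.mk p), fun h => hxp ?_⟩
    rw [← Ideal.Quotient.eq_zero_iff_mem]
    apply hf
    rw [map_zero]; exact h
  · exfalso
    apply hf
    have h1 : (RingHom.ker f.toRingHom).comap (algebraMap ℤ (R ⧸ p)) = ⊥ := by
      rw [eq_bot_iff]
      intro n hn
      have : f (algebraMap ℤ _ n) = 0 := hn
      rw [AlgHom.commutes] at this
      simpa using this
    have h2 := Ideal.eq_bot_of_comap_eq_bot (R := ℤ) (S := R ⧸ p) h1
    exact (RingHom.injective_iff_ker_eq_bot f.toRingHom).2 h2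

/-- The sum of the squared absolute values of all conjugates. -/
noncomputable def grq [Fintype (R →+* ℂ)] (x : R) : ℝ := ∑ σ : R →+* ℂ, ‖σ x‖ ^ 2

variable [Fintype (R →+* ℂ)]

theorem grq_pos [Module.Free ℤ R] [Module.Finite ℤ R] [IsReduced R] (x : R) (hx : x ≠ 0) :
    0 < grq x := by
  obtain ⟨σ, hσ⟩ := gr_exists_hom x hx
  exact Finset.sum_pos' (fun _ _ => by positivity) ⟨σ, Finset.mem_univ _, by positivity⟩

theorem grq_finite [Module.Free ℤ R] [Module.Finite ℤ R] [IsReduced R] (C : ℝ) :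
    {x : R | grq x < C}.Finite := by
  classical
  let b := Module.Free.chooseBasis ℤ R
  let s : Set ℂ := Set.range (fun p : (R →+* ℂ) × Module.Free.ChooseBasisIndex ℤ R => p.1 (b p.2))
  have hIntegral : ∀ (σ : R →+* ℂ) (x : R), IsIntegral ℤ (σ x) := fun σ x =>
    (Algebra.IsIntegral.isIntegral (R := ℤ) x).map σ.toIntAlgHom
  let K := IntermediateField.adjoin ℚ s
  have : FiniteDimensional ℚ K := IntermediateField.finiteDimensional_adjoin (by
    rintro _ ⟨p, rfl⟩
    exact (hIntegral _ _).tower_top)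
  have : NumberField K := {}
  have hmem : ∀ (σ : R →+* ℂ) (x : R), σ x ∈ K.toSubring := by
    intro σ x
    rw [← b.sum_repr x, map_sum]
    refine sum_mem fun i _ => ?_
    rw [map_zsmul]
    exact zsmul_mem (IntermediateField.subset_adjoin ℚ s ⟨(σ, i), rfl⟩) _
  let σ' : (R →+* ℂ) → (R →+* K) := fun σ => σ.codRestrict K.toSubring (hmem σ)
  have hσ' : ∀ σ x, ((σ' σ x : K) : ℂ) = σ x := fun σ x => rfl
  have hfin := NumberField.Embeddings.finite_of_norm_le K ℂ (Real.sqrt C)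
  have hfin2 := Set.Finite.pi (fun _ : (R →+* ℂ) => hfin)
  refine Set.Finite.of_injOn (f := fun x σ => σ' σ x) (t := _) ?_ ?_ hfin2
  · intro x hx σ _
    refine ⟨?_, fun φ => ?_⟩
    · exact (Algebra.IsIntegral.isIntegral (R := ℤ) x).map (σ' σ).toIntAlgHom
    · apply Real.le_sqrt_of_sq_le
      refine le_trans ?_ (le_of_lt hx)
      exact Finset.single_le_sum (f := fun τ : R →+* ℂ => ‖τ x‖ ^ 2)
        (fun _ _ => by positivity) (Finset.mem_univ (φ.comp (σ' σ)))
  · intro x _ y _ h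
    by_contra hne
    obtain ⟨σ, hσ⟩ := gr_exists_hom (x - y) (sub_ne_zero.2 hne)
    apply hσ
    rw [map_sub, ← hσ', ← hσ', sub_eq_zero]
    exact congrArg _ (congrFun h σ)

theorem grq_induction [Module.Free ℤ R] [Module.Finite ℤ R] [IsReduced R] {P : R → Prop}
    (h : ∀ x, (∀ y, grq y < grq x → P y) → P x) (x : R) : P x := by
  have : WellFounded (InvImage (· < ·) (fun x : R => {y : R | grq y < grq x}.ncard)) :=
    InvImage.wf _ wellFounded_lt
  refine this.induction x fun x ih => h x fun y hy => ih y ?_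
  refine Set.ncard_lt_ncard ?_ (grq_finite _)
  refine ⟨fun z hz => lt_trans hz hy, fun hsub => ?_⟩
  exact lt_irrefl (grq y) (show grq y < grq y from hsub hy)

/-- An additive idempotent which is orthogonal for the conjugates norm. -/
def IsOProj (P : R →+ R) : Prop := (∀ x, P (P x) = P x) ∧ ∀ x, grq x = grq (P x) + grq (x - P x)

theorem IsOProj.comm [Module.Free ℤ R] [Module.Finite ℤ R] [IsReduced R] {P Q : R →+ R}
    (hP : IsOProj P) (hQ : IsOProj Q) (x : R) : P (Q x) = Q (P x) := by
  induction x using grq_induction with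
  | h x ih =>
  have key : ∀ T : R →+ R, IsOProj T → T x = 0 ∨ T x = x ∨ P (Q x) = Q (P x) := by
    intro T hT
    by_cases h0 : T x = 0
    · exact Or.inl h0
    by_cases h1 : T x = x
    · exact Or.inr (Or.inl h1)
    right; right
    have p0 := grq_pos _ h0
    have p1 := grq_pos _ (sub_ne_zero.2 (Ne.symm h1))
    have e := hT.2 x
    have i0 := ih (T x) (by linarith)
    have i1 := ih (x - T x) (by linarith)
    have : x = T x + (x - T x) := by abel
    rw [this, map_add, map_add, map_add, map_add, i0, i1]
  rcases key P hP with h | h | h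
  · rcases key Q hQ with h' | h' | h'
    · simp [h, h']
    · simp [h, h']
    · exact h'
  · rcases key Q hQ with h' | h' | h'
    · simp [h, h']
    · simp [h, h']
    · exact h'
  · exact h

theorem grq_mul_torsion (u : R) (hu : IsOfFinOrder u) (x : R) : grq (u * x) = grq x := by
  obtain ⟨n, hn, h⟩ := isOfFinOrder_iff_pow_eq_one.1 hu
  refine Finset.sum_congr rfl fun σ _ => ?_
  have : ‖σ u‖ = 1 := by
    refine Complex.norm_eq_one_of_pow_eq_one (n := n) ?_ hn.ne'
    rw [← map_pow, h, map_one]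
  rw [map_mul, norm_mul, this, one_mul]

/-- The sesquilinear form. -/
noncomputable def grS (x y : R) : ℂ := ∑ σ : R →+* ℂ, σ x * (starRingEnd ℂ) (σ y)

theorem grq_add_of_grS (x y : R) (h : grS x y = 0) : grq (x + y) = grq x + grq y := by
  have : grq (x + y) = grq x + grq y + 2 * (grS x y).re := by
    simp only [grq, grS, Complex.re_sum, Finset.mul_sum, ← Finset.sum_add_distrib]
    refine Finset.sum_congr rfl fun σ _ => ?_
    rw [map_add, ← Complex.normSq_eq_norm_sq, ← Complex.normSq_eq_norm_sq,
      ← Complex.normSq_eq_norm_sq, Complex.normSq_add]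
  rw [this, h]; simp

theorem grS_sum {ι : Type*} (s : Finset ι) (x : R) (y : ι → R) :
    grS x (∑ i ∈ s, y i) = ∑ i ∈ s, grS x (y i) := by
  simp only [grS, map_sum, Finset.mul_sum]
  rw [Finset.sum_comm]

end Analysis

section Api
open MonoidAlgebra
variable {R : Type*} [CommRing R] {A : Subring R} {G : Subgroup Rˣ}

/-- The group ring isomorphism. -/
noncomputable def grEquiv (h : IsGpRg A G) : MonoidAlgebra A G ≃+* R := RingEquiv.ofBijective _ h

theorem grEquiv_single (h : IsGpRg A G) (a : A) (g : G) :
    grEquiv h (single g a) = a * ((g : Rˣ) : R) := by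
  change gpRgHom A G (single g a) = _
  unfold gpRgHom
  change liftNC _ _ (single g a) = _
  rw [liftNC_single]; rfl

theorem grEquiv_symm (h : IsGpRg A G) (a : A) (g : G) :
    (grEquiv h).symm (a * ((g : Rˣ) : R)) = single g a := by
  rw [RingEquiv.symm_apply_eq, grEquiv_single]

theorem gr_ind (h : IsGpRg A G) {P : R → Prop} (h0 : P 0)
    (hadd : ∀ x y, P x → P y → P (x + y)) (hs : ∀ (a : A) (g : G), P (a * ((g : Rˣ) : R)))
    (x : R) : P x := by
  obtain ⟨y, rfl⟩ := (grEquiv h).surjective x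
  induction y using MonoidAlgebra.induction_linear with
  | zero => simpa using h0
  | add x y hx hy => rw [map_add]; exact hadd _ _ hx hy
  | single g a => rw [grEquiv_single]; exact hs a g

/-- The homogeneous components. -/
noncomputable def grComp (h : IsGpRg A G) (g : G) : R →+ R :=
  AddMonoidHom.mk' (fun x => (((grEquiv h).symm x).coeff g : R) * ((g : Rˣ) : R)) (by
    intro x y
    simp [add_mul])

open scoped Classical in
theorem grComp_hom (h : IsGpRg A G) (g g' : G) (a : A) :
    grComp h g (a * ((g' : Rˣ) : R)) = if g' = g then a * ((g' : Rˣ) : R) else 0 := by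
  simp only [grComp, AddMonoidHom.mk'_apply, grEquiv_symm, coeff_single, Finsupp.single_apply]
  split_ifs with hg
  · rw [hg]
  · simp

theorem grComp_hom_same (h : IsGpRg A G) (g : G) (a : A) :
    grComp h g (a * ((g : Rˣ) : R)) = a * ((g : Rˣ) : R) := by
  rw [grComp_hom, if_pos rfl]

theorem grComp_hom_ne (h : IsGpRg A G) (g g' : G) (hg : g' ≠ g) (a : A) :
    grComp h g (a * ((g' : Rˣ) : R)) = 0 := by
  rw [grComp_hom, if_neg hg]

theorem grComp_mem (h : IsGpRg A G) (g : G) (x : R) :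
    ∃ a : A, grComp h g x = a * ((g : Rˣ) : R) := ⟨_, rfl⟩

theorem grComp_sum [Fintype G] (h : IsGpRg A G) (x : R) : ∑ g, grComp h g x = x := by
  classical
  induction x using gr_ind h with
  | h0 => simp
  | hadd x y hx hy => simp only [map_add, Finset.sum_add_distrib, hx, hy]
  | hs a g => simp [grComp_hom]

theorem grComp_mul_left (h : IsGpRg A G) (g : G) (a : A) (x : R) :
    grComp h g (a * x) = a * grComp h g x := by
  classical
  induction x using gr_ind h with
  | h0 => simp
  | hadd x y hx hy => simp only [map_add, mul_add, hx, hy]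
  | hs b g' =>
    have := grComp_hom h g g' (a * b)
    rw [grComp_hom, ← mul_assoc]
    rw [Subring.coe_mul] at this
    rw [this]
    split_ifs <;> simp [mul_assoc]

theorem grComp_mul_right (h : IsGpRg A G) (g g' : G) (x : R) :
    grComp h g (x * ((g' : Rˣ) : R)) = grComp h (g * g'⁻¹) x * ((g' : Rˣ) : R) := by
  classical
  induction x using gr_ind h with
  | h0 => simp
  | hadd x y hx hy => simp only [map_add, add_mul, hx, hy]
  | hs b k =>
    have := grComp_hom h g (k * g') b
    rw [Subgroup.coe_mul, Units.val_mul, ← mul_assoc] at this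
    rw [this, grComp_hom]
    simp only [eq_mul_inv_iff_mul_eq]
    split_ifs <;> simp

/-- multiplication by a homogeneous element -/
theorem grComp_mul_homog (h : IsGpRg A G) (g g' : G) (x y : R) (hy : grComp h g' y = y) :
    grComp h g (x * y) = grComp h (g * g'⁻¹) x * y := by
  obtain ⟨a, ha⟩ := grComp_mem h g' y
  rw [hy] at ha
  have : x * y = a * (x * ((g' : Rˣ) : R)) := by rw [ha]; ring
  rw [this, grComp_mul_left, grComp_mul_right, ha]; ring

theorem grComp_same (h : IsGpRg A G) (g : G) (x : R) :
    grComp h g (grComp h g x) = grComp h g x := by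
  obtain ⟨a, ha⟩ := grComp_mem h g x
  rw [ha, grComp_hom_same]

theorem grComp_ne (h : IsGpRg A G) (g g' : G) (hg : g' ≠ g) (x : R) :
    grComp h g (grComp h g' x) = 0 := by
  obtain ⟨a, ha⟩ := grComp_mem h g' x
  rw [ha, grComp_hom_ne h g g' hg]

theorem gr_mem_iff (h : IsGpRg A G) (x : R) : x ∈ A ↔ grComp h 1 x = x := by
  constructor
  · intro hx
    have := grComp_hom_same h 1 ⟨x, hx⟩
    simpa using this
  · intro hx
    obtain ⟨a, ha⟩ := grComp_mem h 1 x
    rw [hx] at ha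
    rw [ha]; simp

theorem gr_deg_unique (h : IsGpRg A G) (g g' : G) (x : R) (hx : x ≠ 0)
    (h1 : grComp h g x = x) (h2 : grComp h g' x = x) : g = g' := by
  by_contra hne
  apply hx
  rw [← h2, ← h1]
  exact grComp_ne h g' g hne x

theorem gr_finite [Nontrivial R] [Module.Free ℤ R] [Module.Finite ℤ R] (h : IsGpRg A G) :
    Finite G := by
  classical
  have : LinearIndependent ℤ (fun g : G => ((g : Rˣ) : R)) := by
    rw [linearIndependent_iff']
    intro s n hs g hg
    have h1 := congrArg (grComp h g) hs
    have h2 : ∀ i : G, grComp h g (n i • ((i : Rˣ) : R)) =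
        if i = g then n i • ((i : Rˣ) : R) else 0 := by
      intro i
      rw [map_zsmul]
      have := grComp_hom h g i 1
      simp only [Subring.coe_one, one_mul] at this
      rw [this]
      split_ifs <;> simp
    simp only [map_sum, h2, map_zero, Finset.sum_ite_eq', hg, if_true] at h1
    rcases smul_eq_zero.1 h1 with h | h
    · exact h
    · exact absurd h (Units.ne_zero _)
  exact this.finite

/-- Twisting a complex character by a character of the group. -/
noncomputable def grTwist (h : IsGpRg A G) (χ : G →* ℂˣ) (σ : R →+* ℂ) : R →+* ℂ :=
  (MonoidAlgebra.liftNCRingHom (σ.comp A.subtype)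
    ((σ.toMonoidHom.comp ((Units.coeHom R).comp G.subtype)) * (Units.coeHom ℂ).comp χ)
    (fun _ _ => Commute.all _ _)).comp (grEquiv h).symm.toRingHom

theorem grTwist_apply (h : IsGpRg A G) (χ : G →* ℂˣ) (σ : R →+* ℂ) (g : G) (x : R)
    (hx : grComp h g x = x) :
    grTwist h χ σ x = σ x * χ g := by
  obtain ⟨a, ha⟩ := grComp_mem h g x
  rw [hx] at ha
  rw [ha]
  change liftNC _ _ ((grEquiv h).symm _) = _
  rw [grEquiv_symm, liftNC_single]
  simp [mul_assoc]

theorem grTwist_inv (h : IsGpRg A G) (χ : G →* ℂˣ) (σ : R →+* ℂ) :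
    grTwist h χ⁻¹ (grTwist h χ σ) = σ := by
  ext x
  induction x using gr_ind h with
  | h0 => simp
  | hadd x y hx hy => simp only [map_add, hx, hy]
  | hs a g =>
    rw [grTwist_apply h _ _ g _ (grComp_hom_same h g a),
      grTwist_apply h _ _ g _ (grComp_hom_same h g a)]
    simp

/-- Twisting as a permutation. -/
noncomputable def grTwistEquiv (h : IsGpRg A G) (χ : G →* ℂˣ) : (R →+* ℂ) ≃ (R →+* ℂ) where
  toFun := grTwist h χ
  invFun := grTwist h χ⁻¹
  left_inv := grTwist_inv h χ
  right_inv σ := by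
    have := grTwist_inv h χ⁻¹ σ
    have e : χ⁻¹⁻¹ = χ := by ext; simp
    rwa [e] at this

theorem grS_orth [Fintype (R →+* ℂ)] [Finite G] (h : IsGpRg A G) (g g' : G) (hg : g ≠ g')
    (x y : R) : grS (grComp h g x) (grComp h g' y) = 0 := by
  obtain ⟨χ, hχ⟩ := CommGroup.exists_apply_ne_one_of_hasEnoughRootsOfUnity G ℂ
    (a := g * g'⁻¹) (by rwa [Ne, mul_inv_eq_one])
  have h1 : grS (grComp h g x) (grComp h g' y) =
      grS (grComp h g x) (grComp h g' y) * ((χ (g * g'⁻¹) : ℂˣ) : ℂ) := by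
    conv_lhs => rw [grS, ← Equiv.sum_comp (grTwistEquiv h χ)]
    rw [grS, Finset.sum_mul]
    refine Finset.sum_congr rfl fun σ _ => ?_
    change grTwist h χ σ _ * (starRingEnd ℂ) (grTwist h χ σ _) = _
    rw [grTwist_apply h χ σ g _ (grComp_same h g x), grTwist_apply h χ σ g' _ (grComp_same h g' y)]
    have hn : ‖((χ g' : ℂˣ) : ℂ)‖ = 1 := by
      refine Complex.norm_eq_one_of_pow_eq_one (n := Nat.card G) ?_ Nat.card_pos.ne'
      rw [← Units.val_pow_eq_pow_val, ← map_pow, pow_card_eq_one']; simp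
    have hc : (starRingEnd ℂ) ((χ g' : ℂˣ) : ℂ) = ((χ g'⁻¹ : ℂˣ) : ℂ) := by
      rw [map_inv, Units.val_inv_eq_inv_val, Complex.inv_eq_conj hn]
    rw [map_mul, hc, map_mul, Units.val_mul]; ring
  have h2 : grS (grComp h g x) (grComp h g' y) * (((χ (g * g'⁻¹) : ℂˣ) : ℂ) - 1) = 0 := by
    rw [mul_sub, ← h1]; ring
  rcases mul_eq_zero.1 h2 with h | h
  · exact h
  · exfalso
    apply hχ
    rw [sub_eq_zero] at h
    exact Units.ext h

theorem grComp_oproj [Fintype (R →+* ℂ)] [Finite G] (h : IsGpRg A G) (g : G) :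
    IsOProj (grComp h g) := by
  classical
  have := Fintype.ofFinite G
  refine ⟨grComp_same h g, fun x => ?_⟩
  have hx : x - grComp h g x = ∑ g' ∈ Finset.univ.erase g, grComp h g' x := by
    rw [sub_eq_iff_eq_add, Finset.sum_erase_add _ _ (Finset.mem_univ g), grComp_sum]
  rw [← grq_add_of_grS, add_sub_cancel]
  rw [hx, grS_sum]
  refine Finset.sum_eq_zero fun g' hg' => grS_orth h g g' (Finset.ne_of_mem_erase hg').symm x x

theorem IsOProj.conj [Fintype (R →+* ℂ)] {P : R →+ R} (hP : IsOProj P) (u : Rˣ)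
    (hu : IsOfFinOrder u) :
    IsOProj ((AddMonoidHom.mulLeft (u : R)).comp (P.comp (AddMonoidHom.mulLeft ((u⁻¹ : Rˣ) : R)))) := by
  have h1 : IsOfFinOrder (u : R) := Units.isOfFinOrder_val.2 hu
  have h2 : IsOfFinOrder ((u⁻¹ : Rˣ) : R) := Units.isOfFinOrder_val.2 hu.inv
  constructor
  · intro x
    simp [hP.1]
  · intro x
    simp only [AddMonoidHom.comp_apply, AddMonoidHom.coe_mulLeft]
    rw [grq_mul_torsion _ h1, ← grq_mul_torsion _ h2 x, hP.2, ← grq_mul_torsion _ h2 (x - _),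
      mul_sub, ← mul_assoc ((u⁻¹ : Rˣ) : R) u, Units.inv_mul, one_mul]

theorem gr_torsion [Module.Free ℤ R] [Module.Finite ℤ R] [IsReduced R]
    (hconn : IsConnectedRing R) (h : IsGpRg A G) (u : Rˣ) (hu : IsOfFinOrder u) :
    ∃ g : G, grComp h g (u : R) = u := by
  classical
  have := hconn.1
  have := gr_finite h
  have := Fintype.ofFinite G
  have := @gr_finite_hom R _ _ _
  have := Fintype.ofFinite (R →+* ℂ)
  -- work with `v = u⁻¹`
  let e : G → R := fun g => ((u⁻¹ : Rˣ) : R) * grComp h g (u : R)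
  have he : ∀ g, IsIdempotentElem (e g) := by
    intro g
    have hO := (grComp_oproj h g).conj u⁻¹ hu.inv
    have hc := (grComp_oproj h 1).comm hO 1
    have hone : grComp h 1 1 = 1 := (gr_mem_iff h 1).1 A.one_mem
    rw [hone] at hc
    simp only [AddMonoidHom.comp_apply, AddMonoidHom.coe_mulLeft, inv_inv, mul_one] at hc
    have hA : e g ∈ A := (gr_mem_iff h _).2 hc
    have h1 : ((u : Rˣ) : R) * e g = grComp h g u := by simp [e]
    have h2 := grComp_mul_left h g ⟨e g, hA⟩ u
    simp only at h2
    change e g * e g = e g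
    have h3 : e g * (u : R) = grComp h g u := by rw [mul_comm]; exact h1
    rw [h3, grComp_same] at h2
    calc e g * e g = ((u⁻¹ : Rˣ) : R) * (e g * grComp h g u) := by simp only [e]; ring
      _ = e g := by rw [← h2]
  have hsum : ∑ g, e g = 1 := by
    simp only [e]
    rw [← Finset.mul_sum, grComp_sum, Units.inv_mul]
  by_contra hcon
  push Not at hcon
  have hz : ∀ g, e g = 0 := by
    intro g
    rcases hconn.2 _ (he g) with h0 | h1
    · exact h0
    · exfalso
      apply hcon g
      have : ((u : Rˣ) : R) * e g = grComp h g u := by simp [e]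
      rw [← this, h1, mul_one]
  simp [hz] at hsum

/-- A criterion for being a group ring. -/
theorem gr_bij {S I : Type*} [CommRing S] [CommGroup I] [Fintype I] (S' : Subring S)
    (γ : I →* S) (E : I → S →+ S) (hsum : ∀ x, ∑ i, E i x = x)
    (hmul : ∀ i j x, E i (x * γ j) = E (i * j⁻¹) x * γ j)
    (hone : ∀ x, x ∈ S' ↔ E 1 x = x) (hne : ∀ i x, i ≠ 1 → E i (E 1 x) = 0)
    (hid : ∀ x, E 1 (E 1 x) = E 1 x) :
    Function.Bijective (MonoidAlgebra.liftNCRingHom S'.subtype γ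
      (fun _ _ => Commute.all _ _)) := by
  classical
  have hval : ∀ y : MonoidAlgebra S' I, MonoidAlgebra.liftNCRingHom S'.subtype γ
      (fun _ _ => Commute.all _ _) y = ∑ i, (y.coeff i : S) * γ i := by
    intro y
    induction y using MonoidAlgebra.induction_linear with
    | zero => simp
    | add x y hx hy => rw [map_add, hx, hy, ← Finset.sum_add_distrib]; simp [add_mul]
    | single g a =>
      change liftNC _ _ (single g a) = _
      rw [liftNC_single, Finset.sum_eq_single g]
      · simp
      · intro b _ hb
        simp [hb.symm]
      · simp
  constructor
  · rw [injective_iff_map_eq_zero]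
    intro y hy
    rw [hval] at hy
    ext i
    have h1 := congrArg (E i) hy
    rw [map_sum, map_zero, Finset.sum_eq_single i] at h1
    · rw [hmul, mul_inv_cancel, (hone _).1 (y.coeff i).2] at h1
      have h2 : (y.coeff i : S) * γ i * γ i⁻¹ = 0 := by rw [h1, zero_mul]
      rw [mul_assoc, ← map_mul, mul_inv_cancel, map_one, mul_one] at h2
      simpa using h2
    · intro j _ hj
      rw [hmul, ← (hone _).1 (y.coeff j).2, hne, zero_mul]
      rw [Ne, mul_inv_eq_one]; exact hj.symm
    · simp
  · intro x
    refine ⟨.ofCoeff (Finsupp.equivFunOnFinite.symm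
      (fun i => ⟨E 1 (x * γ i⁻¹), (hone _).2 (hid _)⟩)), ?_⟩
    rw [hval]
    conv_rhs => rw [← hsum x]
    refine Finset.sum_congr rfl fun i _ => ?_
    have := hmul i i (x * γ i⁻¹)
    rw [mul_assoc, ← map_mul, inv_mul_cancel, map_one, mul_one, mul_inv_cancel] at this
    rw [this]
    rfl

end Api

section Coarse
open scoped Classical in
/-- The coarsened grading. -/
noncomputable def grE {R : Type*} [CommRing R] {A : Subring R} {G : Subgroup Rˣ} {I : Type*}
    [CommGroup I] [Fintype G] (h : IsGpRg A G) (r : G →* I) (i : I) : R →+ R :=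
  ∑ g ∈ Finset.univ.filter (fun g => r g = i), grComp h g

variable {R : Type*} [CommRing R] {A : Subring R} {G : Subgroup Rˣ} {I : Type*}
    [CommGroup I] [Fintype G] (h : IsGpRg A G) (r : G →* I)

open scoped Classical in
theorem grE_apply (i : I) (x : R) :
    grE h r i x = ∑ g, if r g = i then grComp h g x else 0 := by
  rw [grE, AddMonoidHom.finsetSum_apply, Finset.sum_filter]

theorem grE_sum [Fintype I] (x : R) : ∑ i, grE h r i x = x := by
  classical
  simp only [grE_apply]
  rw [Finset.sum_comm]
  simp [grComp_sum]

theorem grE_mul_homog (i : I) (g : G) (x y : R) (hy : grComp h g y = y) :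
    grE h r i (x * y) = grE h r (i * (r g)⁻¹) x * y := by
  classical
  simp only [grE_apply, Finset.sum_mul]
  conv_rhs => rw [← Equiv.sum_comp (Equiv.mulRight g⁻¹)]
  refine Finset.sum_congr rfl fun k _ => ?_
  simp only [Equiv.coe_mulRight, map_mul, map_inv, mul_left_inj]
  split_ifs
  · exact grComp_mul_homog h k g x y hy
  · simp

theorem grComp_grE (i : I) (g : G) (x : R) (hg : r g = i) :
    grComp h g (grE h r i x) = grComp h g x := by
  classical
  rw [grE_apply, map_sum, Finset.sum_eq_single g]
  · rw [if_pos hg, grComp_same]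
  · intro b _ hb
    split_ifs
    · exact grComp_ne h g b hb x
    · simp
  · simp

theorem grComp_grE_ne (i : I) (g : G) (x : R) (hg : r g ≠ i) :
    grComp h g (grE h r i x) = 0 := by
  classical
  rw [grE_apply, map_sum]
  refine Finset.sum_eq_zero fun b _ => ?_
  split_ifs with hb
  · exact grComp_ne h g b (fun e => hg (by rw [← e, hb])) x
  · simp

theorem grE_same (i : I) (x : R) : grE h r i (grE h r i x) = grE h r i x := by
  classical
  rw [grE_apply h r i (grE h r i x), grE_apply h r i x]
  refine Finset.sum_congr rfl fun g _ => ?_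
  split_ifs with hg
  · rw [← grE_apply]; exact grComp_grE h r i g x hg
  · rfl

theorem grE_ne (i j : I) (hij : i ≠ j) (x : R) : grE h r i (grE h r j x) = 0 := by
  classical
  rw [grE_apply h r i (grE h r j x)]
  refine Finset.sum_eq_zero fun g _ => ?_
  split_ifs with hg
  · exact grComp_grE_ne h r j g x (by rw [hg]; exact hij)
  · rfl

theorem grE_one_mul (x y : R) (hx : grE h r 1 x = x) (hy : grE h r 1 y = y) :
    grE h r 1 (x * y) = x * y := by
  classical
  have e : x * y = ∑ g, x * (if r g = 1 then grComp h g y else 0) := by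
    rw [← Finset.mul_sum, ← grE_apply, hy]
  conv_lhs => rw [e]
  rw [map_sum]
  conv_rhs => rw [e]
  refine Finset.sum_congr rfl fun g _ => ?_
  split_ifs with hg
  · rw [grE_mul_homog h r 1 g x _ (grComp_same h g y), hg, inv_one, mul_one, hx]
  · simp

theorem grE_one_one : grE h r 1 1 = 1 := by
  have h1 : grComp h 1 1 = 1 := (gr_mem_iff h 1).1 A.one_mem
  classical
  rw [grE_apply, Finset.sum_eq_single 1]
  · simp [h1]
  · intro b _ hb
    split_ifs
    · rw [← h1]; exact grComp_ne h b 1 hb.symm 1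
    · rfl
  · simp

end Coarse

section Groups

theorem gr_degHom {R : Type*} [CommRing R] [Module.Free ℤ R] [Module.Finite ℤ R] [IsReduced R]
    {A : Subring R} {G : Subgroup Rˣ}
    (hconn : IsConnectedRing R) (h : IsGpRg A G) (H : Subgroup Rˣ) [Finite H] :
    ∃ φ : H →* G, ∀ k : H, grComp h (φ k) ((k : Rˣ) : R) = ((k : Rˣ) : R) := by
  have := hconn.1
  have h1 : ∀ k : H, ∃ g : G, grComp h g ((k : Rˣ) : R) = ((k : Rˣ) : R) := fun k =>
    gr_torsion hconn h k (H.subtype.isOfFinOrder (isOfFinOrder_of_finite k))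
  choose φ hφ using h1
  refine ⟨MonoidHom.mk' φ ?_, hφ⟩
  intro k k'
  refine gr_deg_unique h _ _ (((k * k' : H) : Rˣ) : R) (Units.ne_zero _) (hφ _) ?_
  rw [Subgroup.coe_mul, Units.val_mul, grComp_mul_homog h _ (φ k') _ _ (hφ k'),
    mul_inv_cancel_right, hφ]

theorem gr_exists_idem {M : Type*} [Monoid M] [Finite M] (a : M) :
    ∃ n : ℕ, a ^ (n + 1) * a ^ (n + 1) = a ^ (n + 1) := by
  obtain ⟨i, j, hij, e⟩ : ∃ i j : ℕ, i < j ∧ a ^ i = a ^ j := by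
    obtain ⟨i, j, hne, e⟩ := Finite.exists_ne_map_eq_of_infinite (fun n : ℕ => a ^ n)
    rcases lt_or_gt_of_ne hne with h | h
    · exact ⟨i, j, h, e⟩
    · exact ⟨j, i, h, e.symm⟩
  obtain ⟨d, rfl⟩ := Nat.exists_eq_add_of_lt hij
  have h1 : ∀ m, i ≤ m → a ^ (m + (d + 1)) = a ^ m := by
    intro m hm
    obtain ⟨c, rfl⟩ := Nat.exists_eq_add_of_le hm
    rw [show i + c + (d + 1) = (i + d + 1) + c by ring, pow_add, ← e, ← pow_add]
  have h2 : ∀ k m, i ≤ m → a ^ (m + k * (d + 1)) = a ^ m := by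
    intro k
    induction k with
    | zero => simp
    | succ k ih =>
      intro m hm
      rw [Nat.succ_mul, ← add_assoc, h1 _ (by omega), ih m hm]
  refine ⟨(i + 1) * (d + 1) - 1, ?_⟩
  have h3 : (i + 1) * (d + 1) - 1 + 1 = (i + 1) * (d + 1) :=
    Nat.sub_add_cancel (Nat.mul_pos (by omega) (by omega))
  rw [h3, ← pow_add, h2 _ _ (by nlinarith)]

theorem gr_inj {R : Type u} [CommRing R] [Module.Free ℤ R] [Module.Finite ℤ R] [IsReduced R]
    (hconn : IsConnectedRing R) {A B : Subring R} {G H : Subgroup Rˣ} (hB : IsStark B)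
    (hAG : IsGpRg A G) (hBH : IsGpRg B H) (φ : H →* G) (ψ : G →* H)
    (hφ : ∀ k : H, grComp hAG (φ k) ((k : Rˣ) : R) = ((k : Rˣ) : R))
    (hψ : ∀ k : G, grComp hBH (ψ k) ((k : Rˣ) : R) = ((k : Rˣ) : R)) :
    Function.Injective ψ := by
  classical
  have := hconn.1
  have := gr_finite hAG
  have := gr_finite hBH
  have := Fintype.ofFinite G
  have := @gr_finite_hom R _ _ _
  have := Fintype.ofFinite (R →+* ℂ)
  let α : Monoid.End G := (MonoidHom.id G / φ.comp ψ : G →* G)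
  have hα : ∀ g, α g = g * (φ (ψ g))⁻¹ := fun g => div_eq_mul_inv _ _
  let β : G →* Rˣ := G.subtype / H.subtype.comp ψ
  have hβ : ∀ g : G, ((β g : Rˣ) : R) = ((g : Rˣ) : R) * (((ψ g)⁻¹ : H) : Rˣ) := fun g => by
    simp [β, div_eq_mul_inv]
  have hβB : ∀ g, ((β g : Rˣ) : R) ∈ B := by
    intro g
    rw [gr_mem_iff hBH, hβ, grComp_mul_right, inv_inv, one_mul, hψ]
  have hβα : ∀ g, grComp hAG (α g) ((β g : Rˣ) : R) = ((β g : Rˣ) : R) := by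
    intro g
    have h1 := hφ ((ψ g)⁻¹)
    rw [hβ, grComp_mul_homog hAG _ _ _ _ h1, hα, map_inv, mul_inv_cancel_right]
    have := grComp_hom_same hAG g 1
    simp only [Subring.coe_one, one_mul] at this
    rw [this]
  have hfinEnd : Finite (Monoid.End G) := Finite.of_injective (fun f : Monoid.End G => (f : G → G))
    DFunLike.coe_injective
  obtain ⟨n, hn⟩ := gr_exists_idem α
  let e : G →* G := (α ^ (n + 1) : Monoid.End G)
  have hee : ∀ g, e (e g) = e g := fun g => DFunLike.congr_fun hn g
  let I := e.range
  let r : G →* I := e.rangeRestrict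
  have hrI : ∀ i : I, r (i : G) = i := by
    rintro ⟨_, g, rfl⟩
    exact Subtype.ext (hee g)
  have hαn : ∀ g, α ((α ^ n : Monoid.End G) g) = e g := by
    intro g
    have : α ^ (n + 1) = α * α ^ n := pow_succ' α n
    exact (DFunLike.congr_fun this g).symm
  let γ0 : I →* Rˣ := β.comp ((α ^ n : Monoid.End G) : G →* G) |>.comp I.subtype
  let γ : I →* B := 
    { toFun := fun i => ⟨((γ0 i : Rˣ) : R), hβB _⟩
      map_one' := by apply Subtype.ext; simp
      map_mul' := fun i j => by apply Subtype.ext; simp }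
  have hγ : ∀ i : I, grComp hAG (i : G) ((γ i : B) : R) = ((γ i : B) : R) := by
    intro i
    have h1 := hβα ((α ^ n : Monoid.End G) (i : G))
    rw [hαn] at h1
    have h2 : e (i : G) = i := congrArg Subtype.val (hrI i)
    rw [h2] at h1
    exact h1
  have hEB : ∀ (i : I) (x : R), x ∈ B → grE hAG r i x ∈ B := by
    intro i x hx
    rw [grE_apply]
    refine sum_mem fun g _ => ?_
    split_ifs
    · rw [gr_mem_iff hBH, (grComp_oproj hBH 1).comm (grComp_oproj hAG g), (gr_mem_iff hBH x).1 hx]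
    · exact B.zero_mem
  let E : I → B →+ B := fun i => AddMonoidHom.mk' (fun x => ⟨grE hAG r i x, hEB i x x.2⟩)
    (fun x y => by apply Subtype.ext; simp)
  have hE : ∀ i x, ((E i x : B) : R) = grE hAG r i x := fun _ _ => rfl
  let B' : Subring B :=
    { carrier := {x | E 1 x = x}
      mul_mem' := fun {x y} hx hy => Subtype.ext (grE_one_mul hAG r x y
        (congrArg Subtype.val hx) (congrArg Subtype.val hy))
      one_mem' := Subtype.ext (grE_one_one hAG r)
      add_mem' := fun {x y} hx hy => by
        change E 1 (x + y) = x + y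
        rw [map_add]; exact congrArg₂ (· + ·) hx hy
      zero_mem' := map_zero _
      neg_mem' := fun {x} hx => by
        change E 1 (-x) = -x
        rw [map_neg]; exact congrArg Neg.neg hx }
  have hfinI : Finite I := inferInstance
  have := Fintype.ofFinite I
  have hbij := gr_bij B' γ E
    (fun x => by
      apply Subtype.ext
      rw [AddSubmonoidClass.coe_finsetSum]
      exact grE_sum hAG r x)
    (fun i j x => by
      apply Subtype.ext
      have := grE_mul_homog hAG r i (j : G) x (γ j) (hγ j)
      rw [hrI] at this
      exact this)
    (fun x => Iff.rfl)
    (fun i x hi => Subtype.ext (grE_ne hAG r i 1 hi x))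
    (fun x => Subtype.ext (grE_same hAG r 1 x))
  have hI : Subsingleton I := by
    by_contra hns
    rw [not_subsingleton_iff_nontrivial] at hns
    exact (hB B' inferInstance I inferInstance hns).false (RingEquiv.ofBijective _ hbij).symm
  have he1 : ∀ g, e g = 1 := fun g => congrArg Subtype.val (Subsingleton.elim (r g) 1)
  rw [injective_iff_map_eq_one]
  intro g hg
  have hag : α g = g := by rw [hα, hg]; simp
  have hpow : ∀ m : ℕ, (α ^ m : Monoid.End G) g = g := by
    intro m
    induction m with
    | zero => rfl
    | succ m ih =>
      have : α ^ (m + 1) = α ^ m * α := pow_succ α m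
      rw [this]
      change (α ^ m : Monoid.End G) (α g) = g
      rw [hag, ih]
  rw [← hpow (n + 1)]
  exact he1 g

theorem gr_swap {R : Type*} [CommRing R] {A : Subring R} {G H : Subgroup Rˣ} [Finite G] [Finite H]
    (h : IsGpRg A G) (φ : H →* G) (hb : Function.Bijective φ)
    (hφ : ∀ k : H, grComp h (φ k) ((k : Rˣ) : R) = ((k : Rˣ) : R)) : IsGpRg A H := by
  have := Fintype.ofFinite G
  have := Fintype.ofFinite H
  refine gr_bij A ((Units.coeHom R).comp H.subtype) (fun k => grComp h (φ k)) ?_ ?_ ?_ ?_ ?_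
  · intro x
    rw [← grComp_sum h x]
    exact (Equiv.sum_comp (Equiv.ofBijective φ hb) (fun g => grComp h g _)).trans
      (by rw [grComp_sum])
  · intro i j x
    have := grComp_mul_homog h (φ i) (φ j) x _ (hφ j)
    rw [← map_inv φ, ← map_mul φ] at this
    exact this
  · intro x
    rw [map_one]; exact gr_mem_iff h x
  · intro i x hi
    rw [map_one]
    refine grComp_ne h _ _ ?_ x
    intro e
    apply hi
    apply hb.1
    rw [← e, map_one]
  · intro x
    exact grComp_same h _ x

/-- The augmentation. -/
noncomputable def grAug {R : Type*} [CommRing R] {A : Subring R} {G : Subgroup Rˣ}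
    (h : IsGpRg A G) : R →+* A :=
  (MonoidAlgebra.liftNCRingHom (RingHom.id A) (1 : G →* A)
    (fun _ _ => Commute.all _ _)).comp (grEquiv h).symm.toRingHom

theorem grAug_apply {R : Type*} [CommRing R] {A : Subring R} {G : Subgroup Rˣ}
    (h : IsGpRg A G) (a : A) (g : G) : grAug h (a * ((g : Rˣ) : R)) = a := by
  change MonoidAlgebra.liftNC _ _ ((grEquiv h).symm _) = _
  rw [grEquiv_symm, MonoidAlgebra.liftNC_single]
  simp

theorem grAug_left {R : Type*} [CommRing R] {A : Subring R} {G : Subgroup Rˣ}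
    (h : IsGpRg A G) (a : A) : grAug h (a : R) = a := by
  simpa using grAug_apply h a 1

theorem grAug_right {R : Type*} [CommRing R] {A : Subring R} {G : Subgroup Rˣ}
    (h : IsGpRg A G) (g : G) : grAug h ((g : Rˣ) : R) = 1 := by
  simpa using grAug_apply h 1 g

theorem grAug_grAug {R : Type*} [CommRing R] {A B : Subring R} {H : Subgroup Rˣ}
    (hA : IsGpRg A H) (hB : IsGpRg B H) (x : R) : grAug hA (grAug hB x : R) = grAug hA x := by
  induction x using gr_ind hB with
  | h0 => simp
  | hadd x y hx hy => simp only [map_add, Subring.coe_add, hx, hy]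
  | hs b g => rw [grAug_apply, map_mul, grAug_right, mul_one]

/-- Coefficient rings with the same group are isomorphic. -/
noncomputable def grCoeffEquiv {R : Type*} [CommRing R] {A B : Subring R} {H : Subgroup Rˣ}
    (hA : IsGpRg A H) (hB : IsGpRg B H) : A ≃+* B where
  toFun a := grAug hB a
  invFun b := grAug hA b
  left_inv a := by
    change grAug hA (grAug hB (a : R) : R) = a
    rw [grAug_grAug, grAug_left]
  right_inv b := by
    change grAug hB (grAug hA (b : R) : R) = b
    rw [grAug_grAug, grAug_left]
  map_mul' x y := by simp
  map_add' x y := by simp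

theorem gr_auto {R : Type*} [CommRing R] {A B : Subring R} {G H : Subgroup Rˣ}
    (hA : IsGpRg A G) (hB : IsGpRg B H) (τ : A ≃+* B) (f : G ≃* H) :
    ∃ σ : R ≃+* R, A.map σ.toRingHom = B ∧
        G.map (Units.map σ.toRingHom.toMonoidHom) = H := by
  let σ : R ≃+* R := (grEquiv hA).symm.trans ((MonoidAlgebra.mapRingEquiv G τ).trans
    ((MonoidAlgebra.mapDomainRingEquiv B f).trans (grEquiv hB)))
  have hσ : ∀ (a : A) (g : G), σ (a * ((g : Rˣ) : R)) = τ a * ((f g : Rˣ) : R) := by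
    intro a g
    simp only [σ, RingEquiv.trans_apply]
    rw [grEquiv_symm, MonoidAlgebra.mapRingEquiv_single, MonoidAlgebra.mapDomainRingEquiv_single,
      grEquiv_single]
  have hσA : ∀ a : A, σ (a : R) = τ a := fun a => by simpa using hσ a 1
  have hσG : ∀ g : G, σ ((g : Rˣ) : R) = ((f g : Rˣ) : R) := fun g => by simpa using hσ 1 g
  refine ⟨σ, ?_, ?_⟩
  · ext x
    constructor
    · rintro ⟨a, ha, rfl⟩
      have := hσA ⟨a, ha⟩
      change σ a ∈ B
      rw [this]; exact (τ _).2
    · intro hx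
      refine ⟨τ.symm ⟨x, hx⟩, (τ.symm ⟨x, hx⟩).2, ?_⟩
      change σ _ = x
      rw [hσA]; simp
  · ext x
    constructor
    · rintro ⟨g, hg, rfl⟩
      have := hσG ⟨g, hg⟩
      have e : Units.map σ.toRingHom.toMonoidHom g = (f ⟨g, hg⟩ : Rˣ) := Units.ext this
      rw [e]; exact (f _).2
    · intro hx
      refine ⟨f.symm ⟨x, hx⟩, (f.symm ⟨x, hx⟩).2, ?_⟩
      apply Units.ext
      change σ _ = x
      rw [hσG]; simp

end Groups

/-- Let `R` be a connected reduced order and let `(A,G), (B,H) ∈ GpRg(R)`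
with `A` and `B` stark. Then some ring automorphism `σ` of `R` maps `A` onto `B` and `G`
onto `H`; in particular `A ≅ B` as rings and `G ≅ H` as groups. Moreover
`(A,H), (B,G) ∈ GpRg(R)`. -/
theorem stark_pairs_conjugate
    {R : Type u} [CommRing R] [Module.Free ℤ R] [Module.Finite ℤ R] [IsReduced R]
    (hconn : IsConnectedRing R)
    (A B : Subring R) (G H : Subgroup Rˣ)
    (hAstark : IsStark A) (hBstark : IsStark B)
    (hAG : IsGpRg A G) (hBH : IsGpRg B H) :
    (∃ σ : R ≃+* R,
        A.map σ.toRingHom = B ∧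
        G.map (Units.map σ.toRingHom.toMonoidHom) = H) ∧
      Nonempty (A ≃+* B) ∧ Nonempty (G ≃* H) ∧ IsGpRg A H ∧ IsGpRg B G := by
  have := hconn.1
  have := gr_finite hAG
  have := gr_finite hBH
  obtain ⟨φ, hφ⟩ := gr_degHom hconn hAG H
  obtain ⟨ψ, hψ⟩ := gr_degHom hconn hBH G
  have iψ := gr_inj hconn hBstark hAG hBH φ ψ hφ hψ
  have iφ := gr_inj hconn hAstark hBH hAG ψ φ hψ hφ
  have hcard : Nat.card G = Nat.card H :=
    le_antisymm (Nat.card_le_card_of_injective ψ iψ) (Nat.card_le_card_of_injective φ iφ)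
  have bψ : Function.Bijective ψ := (Nat.bijective_iff_injective_and_card ψ).2 ⟨iψ, hcard⟩
  have bφ : Function.Bijective φ := (Nat.bijective_iff_injective_and_card φ).2 ⟨iφ, hcard.symm⟩
  have hAH : IsGpRg A H := gr_swap hAG φ bφ hφ
  have hBG : IsGpRg B G := gr_swap hBH ψ bψ hψ
  let τ := grCoeffEquiv hAH hBH
  let f : G ≃* H := MulEquiv.ofBijective ψ bψ
  exact ⟨gr_auto hAG hBH τ f, ⟨τ⟩, ⟨f⟩, hAH, hBG⟩
end

section
/- Let R be a (not necessarily commutative) ring, let M and N be left R-modules, and let f: M → N and g: N → M be R-linear maps. For an endomorphism h of an R-module P, define Im(h) = ⋂_{n≥1} h^n(P) and Ker(h) = ⋃_{n≥1} ker(h^n). Then f maps Im(g∘f) into Im(f∘g) and maps Ker(g∘f) into Ker(f∘g); and if M and N have finite length, then the restriction of f to a map Im(g∘f) → Im(f∘g) is an isomorphism. -/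
/-- `Im(h) = ⋂_{n ≥ 1} h^n(P)` for an endomorphism `h` of a module `P`. -/
def stableIm {R M : Type*} [Ring R] [AddCommGroup M] [Module R M] (h : Module.End R M) :
    Submodule R M :=
  ⨅ n : ℕ, LinearMap.range (h ^ (n + 1))

/-- `Ker(h) = ⋃_{n ≥ 1} ker(h^n)` for an endomorphism `h` of a module `P`. -/
def stableKer {R M : Type*} [Ring R] [AddCommGroup M] [Module R M] (h : Module.End R M) :
    Submodule R M :=
  ⨆ n : ℕ, LinearMap.ker (h ^ (n + 1))

theorem map_pow_comp_aux
    {R M N : Type*} [Ring R] [AddCommGroup M] [Module R M] [AddCommGroup N] [Module R N]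
    (f : M →ₗ[R] N) (g : N →ₗ[R] M) (n : ℕ) (x : M) :
    f (((g ∘ₗ f : Module.End R M) ^ n) x) = ((f ∘ₗ g : Module.End R N) ^ n) (f x) := by
  induction n generalizing x with
  | zero => simp
  | succ k ih =>
    rw [pow_succ, pow_succ, Module.End.mul_apply, Module.End.mul_apply, ih]
    rfl

/-- For `R`-linear maps `f : M → N` and `g : N → M`, `f` maps `Im(g∘f)` into
`Im(f∘g)` and `Ker(g∘f)` into `Ker(f∘g)`; if moreover `M` and `N` have finite length, then the
restriction of `f` to a map `Im(g∘f) → Im(f∘g)` is an isomorphism. -/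
theorem fitting_restriction
    {R M N : Type*} [Ring R] [AddCommGroup M] [Module R M] [AddCommGroup N] [Module R N]
    (f : M →ₗ[R] N) (g : N →ₗ[R] M) :
    (∀ x ∈ stableIm (g ∘ₗ f), f x ∈ stableIm (f ∘ₗ g)) ∧
    (∀ x ∈ stableKer (g ∘ₗ f), f x ∈ stableKer (f ∘ₗ g)) ∧
    (IsFiniteLength R M → IsFiniteLength R N →
      ∀ hmap : ∀ x ∈ stableIm (g ∘ₗ f), f x ∈ stableIm (f ∘ₗ g),
        Function.Bijective (f.restrict hmap)) := by
  refine ⟨?_, ?_, ?_⟩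
  · intro x hx
    simp only [stableIm, Submodule.mem_iInf] at hx ⊢
    intro n
    obtain ⟨z, rfl⟩ := hx n
    exact ⟨f z, (map_pow_comp_aux f g _ z).symm⟩
  · have h : stableKer (g ∘ₗ f) ≤ (stableKer (f ∘ₗ g)).comap f := by
      refine iSup_le fun n x hx => ?_
      refine Submodule.mem_iSup_of_mem n ?_
      rw [LinearMap.mem_ker] at hx ⊢
      rw [← map_pow_comp_aux, hx, map_zero]
    exact fun x hx => h hx
  · intro hM _ hmap
    obtain ⟨_, _⟩ := isFiniteLength_iff_isNoetherian_isArtinian.mp hM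
    obtain ⟨k, hk⟩ := Filter.eventually_atTop.mp
      ((LinearMap.eventually_isCompl_ker_pow_range_pow (g ∘ₗ f)).and
        (LinearMap.eventually_iInf_range_pow_eq (g ∘ₗ f)))
    obtain ⟨hc, he⟩ := hk (k + 1) (Nat.le_succ k)
    constructor
    · rw [injective_iff_map_eq_zero]
      rintro ⟨x, hx⟩ h0
      have hfx : f x = 0 := congrArg Subtype.val h0
      have h1 : x ∈ LinearMap.range ((g ∘ₗ f : Module.End R M) ^ (k + 1)) :=
        (Submodule.mem_iInf _).mp hx k
      have h2 : x ∈ LinearMap.ker ((g ∘ₗ f : Module.End R M) ^ (k + 1)) := by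
        rw [LinearMap.mem_ker, pow_succ, Module.End.mul_apply, LinearMap.comp_apply, hfx,
          map_zero, map_zero]
      exact Subtype.ext (Submodule.disjoint_def.mp hc.disjoint x h2 h1)
    · rintro ⟨y, hy⟩
      obtain ⟨z, hz⟩ := (Submodule.mem_iInf _).mp hy (k + 1)
      refine ⟨⟨((g ∘ₗ f : Module.End R M) ^ (k + 1)) (g z), ?_⟩, Subtype.ext ?_⟩
      · have h3 : ((g ∘ₗ f : Module.End R M) ^ (k + 1)) (g z) ∈
            ⨅ m, LinearMap.range ((g ∘ₗ f : Module.End R M) ^ m) := by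
          rw [he]
          exact ⟨_, rfl⟩
        exact (Submodule.mem_iInf _).mpr fun n => (Submodule.mem_iInf _).mp h3 (n + 1)
      · change f (((g ∘ₗ f : Module.End R M) ^ (k + 1)) (g z)) = y
        rw [map_pow_comp_aux, ← hz, pow_succ _ (k + 1), Module.End.mul_apply]
        rfl
end

section
/- Let A be a connected order and G a finite abelian group. Then the map μ(A) × G → μ(A[G]) sending (ζ, g) to the element ζ·g of the group ring A[G] is a group isomorphism onto the group of roots of unity of A[G]. -/
open MonoidAlgebra

noncomputable def gstar (G : Type*) [CommGroup G] : MonoidAlgebra ℂ G →+* MonoidAlgebra ℂ G :=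
  (mapDomainRingHom ℂ (invMonoidHom : G →* G)).comp (mapRingHom G (starRingEnd ℂ))

lemma gstar_coeff {G : Type*} [CommGroup G] (x : MonoidAlgebra ℂ G) (g : G) :
    (gstar G x).coeff g = starRingEnd ℂ (x.coeff g⁻¹) := by
  induction x using MonoidAlgebra.induction_linear with
  | zero => simp
  | add x y hx hy => simp [hx, hy]
  | single a b =>
    classical
    simp [gstar, Finsupp.single_apply, inv_eq_iff_eq_inv]
    split_ifs <;> simp

lemma gstar_gstar {G : Type*} [CommGroup G] (x : MonoidAlgebra ℂ G) :
    gstar G (gstar G x) = x := by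
  ext g; simp [gstar_coeff]

lemma coeff_mul_gstar {G : Type*} [CommGroup G] [Fintype G] (x : MonoidAlgebra ℂ G) :
    (x * gstar G x).coeff 1 = ((∑ g, ‖x.coeff g‖ ^ 2 : ℝ) : ℂ) := by
  rw [coeff_mul_apply_left, Finsupp.sum_fintype _ _ (by simp)]
  push_cast
  refine Finset.sum_congr rfl fun g _ => ?_
  rw [gstar_coeff]
  simp [Complex.mul_conj, Complex.normSq_eq_norm_sq]

lemma pow_lower {G : Type*} [CommGroup G] [Fintype G] (w : MonoidAlgebra ℂ G)
    (hw : gstar G w = w) (k : ℕ) : ‖w.coeff 1‖ ^ 2 ^ k ≤ ‖(w ^ 2 ^ k).coeff 1‖ := by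
  induction k with
  | zero => simp
  | succ k ih =>
    set y := w ^ 2 ^ k with hy
    have h1 : gstar G y = y := by rw [hy, map_pow, hw]
    have h2 : w ^ 2 ^ (k+1) = y * gstar G y := by rw [h1, hy]; ring
    rw [h2, coeff_mul_gstar, Complex.norm_real, Real.norm_of_nonneg (by positivity), pow_succ 2 k, pow_mul]
    calc _ ≤ ‖y.coeff 1‖ ^ 2 := by gcongr
      _ ≤ _ := Finset.single_le_sum (f := fun g => ‖y.coeff g‖ ^ 2) (fun _ _ => by positivity) (Finset.mem_univ 1)

lemma sum_le_one {G : Type*} [CommGroup G] [Fintype G] (v : MonoidAlgebra ℂ G)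
    (n : ℕ) (hn : 0 < n) (hv : v ^ n = 1) : ∑ g, ‖v.coeff g‖ ^ 2 ≤ 1 := by
  set w := v * gstar G v with hw
  have hws : gstar G w = w := by rw [hw, map_mul, gstar_gstar, mul_comm]
  have hwn : w ^ n = 1 := by rw [hw, mul_pow, ← map_pow, hv]; simp
  have hs : ‖w.coeff 1‖ = ∑ g, ‖v.coeff g‖ ^ 2 := by
    rw [hw, coeff_mul_gstar, Complex.norm_real, Real.norm_of_nonneg (by positivity)]
  rw [← hs]
  by_contra! hlt
  set B := ∑ i ∈ Finset.range n, ‖(w ^ i).coeff 1‖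
  have hB : ∀ m, ‖(w ^ m).coeff 1‖ ≤ B := fun m => by
    have : w ^ m = w ^ (m % n) := by
      conv_lhs => rw [← Nat.div_add_mod m n, pow_add, pow_mul, hwn, one_pow, one_mul]
    rw [this]
    exact Finset.single_le_sum (f := fun i => ‖(w ^ i).coeff 1‖) (fun _ _ => norm_nonneg _)
      (Finset.mem_range.2 (Nat.mod_lt _ hn))
  obtain ⟨k, hk⟩ := pow_unbounded_of_one_lt B hlt
  have h1 := pow_lower w hws k
  have h2 : ‖w.coeff 1‖ ^ k ≤ ‖w.coeff 1‖ ^ 2 ^ k := pow_le_pow_right₀ hlt.le Nat.lt_two_pow_self.le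
  linarith [hB (2 ^ k)]

lemma unip {R : Type*} [CommRing R] [IsAddTorsionFree R] (x : R) (hx : IsNilpotent x) (n : ℕ) (hn : 0 < n)
    (h : (1 + x) ^ n = 1) : x = 0 := by
  obtain ⟨k, hk⟩ := Polynomial.powAddExpansion 1 x n
  rw [h] at hk
  have h1 : n • x = (-k * x) * x := by rw [nsmul_eq_mul]; simp at hk; linear_combination - hk
  have h2 : ∀ m : ℕ, (n ^ m) • x = (-k * x) ^ m * x := by
    intro m
    induction m with
    | zero => simp
    | succ m ih =>
      rw [pow_succ (-k * x), mul_assoc, ← h1, pow_succ', mul_nsmul', ih]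
      simp only [nsmul_eq_mul]; ring
  obtain ⟨m, hm⟩ := hx
  have h3 := h2 m
  rw [mul_pow, hm] at h3
  simp only [mul_zero, zero_mul] at h3
  exact (nsmul_eq_zero_iff_right (pow_pos hn m).ne').1 h3

lemma integral_small {D K : Type*} [CommRing D] [IsDomain D] [CharZero D] [Module.Finite ℤ D]
    [Field K] [Algebra D K] [IsFractionRing D K] (x : D) (hx : x ≠ 0)
    (hb : ∀ σ : K →+* ℂ, ‖σ (algebraMap D K x)‖ ≤ 1 / 2) : False := by
  have : CharZero K := charZero_of_injective_algebraMap (IsFractionRing.injective D K)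
  have : IsLocalization (Algebra.algebraMapSubmonoid D (nonZeroDivisors ℤ)) K :=
    inferInstance
  have : Module.Finite ℚ K := .of_isLocalization ℤ D (nonZeroDivisors ℤ)
  have : NumberField K := ⟨⟩
  have hφx : algebraMap D K x ≠ 0 := by
    intro h0
    exact hx ((IsFractionRing.injective D K) (by simpa using h0))
  have hint : IsIntegral ℤ (algebraMap D K x) :=
    (Algebra.IsIntegral.isIntegral (R := ℤ) x).map (algebraMap D K).toIntAlgHom
  obtain ⟨m, hm, h1⟩ := NumberField.Embeddings.pow_eq_one_of_norm_le_one K ℂ hφx hint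
    (fun σ => (hb σ).trans (by norm_num))
  obtain ⟨σ⟩ : Nonempty (K →+* ℂ) := inferInstance
  have h2 : ‖σ (algebraMap D K x)‖ ^ m = 1 := by rw [← norm_pow, ← map_pow, h1]; simp
  have h3 : ‖σ (algebraMap D K x)‖ = 1 := (pow_eq_one_iff_of_nonneg (norm_nonneg _) hm.ne').1 h2
  linarith [hb σ]

lemma prod_nilp {A : Type*} [CommRing A] [Module.Free ℤ A] [Module.Finite ℤ A]
    {G : Type*} [CommGroup G] [Fintype G] (u : MonoidAlgebra A G) (n : ℕ) (hn : 0 < n)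
    (hu : u ^ n = 1) (g h : G) (hgh : g ≠ h) : IsNilpotent (u.coeff g * u.coeff h) := by
  classical
  by_contra hx
  set x := u.coeff g * u.coeff h with hxdef
  let S : Submonoid A := Submonoid.powers x ⊔ (nonZeroDivisors ℤ).map (Int.castRingHom A)
  have hS : Disjoint ((⊥ : Ideal A) : Set A) S := by
    rw [Set.disjoint_left]
    rintro a ha haS
    have ha : a = 0 := by simpa using ha
    subst ha
    obtain ⟨y, ⟨k, rfl⟩, z, ⟨m, hm, rfl⟩, hyz⟩ := Submonoid.mem_sup.1 haS
    have : m • x ^ k = 0 := by rw [zsmul_eq_mul, mul_comm]; simpa using hyz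
    rcases smul_eq_zero.1 this with h | h
    · exact nonZeroDivisors.ne_zero hm h
    · exact hx ⟨k, h⟩
  obtain ⟨p, hp, -, hpS⟩ := Ideal.exists_le_prime_disjoint _ _ hS
  have hxp : x ∉ p := fun h => Set.disjoint_left.1 hpS h
    ((le_sup_left : _ ≤ S) (Submonoid.mem_powers x))
  have hmp : ∀ m : ℤ, m ≠ 0 → (m : A) ∉ p := fun m hm h => Set.disjoint_left.1 hpS h
    ((le_sup_right : _ ≤ S) ⟨m, mem_nonZeroDivisors_of_ne_zero hm, rfl⟩)
  let D := A ⧸ p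
  let K := FractionRing D
  have : CharZero D := by
    refine charZero_of_inj_zero fun m hm => ?_
    by_contra h0
    refine hmp m (by exact_mod_cast h0) (Ideal.Quotient.eq_zero_iff_mem.1 ?_)
    simpa using hm
  let φ : A →+* K := (algebraMap D K).comp (Ideal.Quotient.mk p)
  have hb : ∀ σ : K →+* ℂ, ‖σ (φ x)‖ ≤ 1 / 2 := fun σ => by
    have := sum_le_one (mapRingHom G (σ.comp φ) u) n hn (by rw [← map_pow, hu, map_one])
    have h2 := (Finset.add_le_sum (f := fun g => ‖(mapRingHom G (σ.comp φ) u).coeff g‖ ^ 2)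
      (fun _ _ => by positivity) (Finset.mem_univ g) (Finset.mem_univ h) hgh).trans this
    simp only [coeff_mapRingHom, RingHom.comp_apply] at h2
    rw [hxdef, map_mul, map_mul, norm_mul]
    nlinarith [sq_nonneg (‖σ (φ (u.coeff g))‖ - ‖σ (φ (u.coeff h))‖)]
  exact integral_small (K := K) (Ideal.Quotient.mk p x)
    (fun h0 => hxp (Ideal.Quotient.eq_zero_iff_mem.1 h0)) hb

lemma idem_nilp {A : Type*} [CommRing A] (hc : ∀ e : A, IsIdempotentElem e → e = 0 ∨ e = 1) (e : A)
    (he : IsNilpotent (e * e - e)) : IsNilpotent e ∨ IsNilpotent (e - 1) := by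
  let f := Ideal.Quotient.mk (nilradical A)
  have hf : ∀ a, f a = 0 ↔ IsNilpotent a := fun a => by
    rw [Ideal.Quotient.eq_zero_iff_mem, mem_nilradical]
  obtain ⟨e2, h1, h2⟩ := exists_isIdempotentElem_eq_of_ker_isNilpotent f
    (fun x hx => (hf x).1 hx) (f e) ⟨e, rfl⟩ (by
      rw [IsIdempotentElem, ← sub_eq_zero, ← map_mul, ← map_sub, hf]; exact he)
  rw [← hf, ← hf, map_sub, ← h2]
  rcases hc e2 h1 with rfl | rfl <;> simp

lemma key {A : Type*} [CommRing A] [Module.Free ℤ A] [Module.Finite ℤ A] [Nontrivial A]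
    (hc : ∀ e : A, IsIdempotentElem e → e = 0 ∨ e = 1)
    {G : Type*} [CommGroup G] [Fintype G] (u : MonoidAlgebra A G) (n : ℕ) (hn : 0 < n)
    (hu : u ^ n = 1) : ∃ (z : A) (g : G), z ^ n = 1 ∧ u = single g z := by
  classical
  let ε : MonoidAlgebra A G →+* A := (MonoidAlgebra.lift A A G (1 : G →* A)).toRingHom
  have hε : ∀ y, ε y = ∑ g, y.coeff g := fun y => by
    simp [ε, MonoidAlgebra.lift_apply, Finsupp.sum_fintype]
  let z := ε u
  have hz : z ^ n = 1 := by simp only [z]; rw [← map_pow, hu, map_one]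
  let w := z ^ (n - 1)
  have hwz : w * z = 1 := by rw [← pow_succ, Nat.sub_add_cancel hn, hz]
  have hwn : w ^ n = 1 := by simp only [w]; rw [← pow_mul, mul_comm, pow_mul, hz, one_pow]
  let e : G → A := fun g => w * u.coeff g
  have hsum : ∑ g, e g = 1 := by simp only [e]; rw [← Finset.mul_sum, ← hε, hwz]
  have horth : ∀ g h, g ≠ h → IsNilpotent (e g * e h) := fun g h hgh => by
    have : e g * e h = (w * w) * (u.coeff g * u.coeff h) := by simp only [e]; ring
    rw [this]
    exact (Commute.all _ _).isNilpotent_mul_left (prod_nilp u n hn hu g h hgh)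
  simp only [← mem_nilradical] at horth
  have hid : ∀ g, e g ∈ nilradical A ∨ e g - 1 ∈ nilradical A := fun g => by
    apply idem_nilp hc
    rw [← mem_nilradical]
    have : e g * e g - e g = - ∑ h ∈ Finset.univ.erase g, e g * e h := by
      have h1 := Finset.add_sum_erase Finset.univ (fun h => e g * e h) (Finset.mem_univ g)
      rw [← Finset.mul_sum Finset.univ, hsum] at h1
      linear_combination h1
    rw [this]
    exact neg_mem (sum_mem fun h hh => horth g h (Finset.ne_of_mem_erase hh).symm)
  obtain ⟨g, hg⟩ : ∃ g, e g - 1 ∈ nilradical A := by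
    by_contra! hno
    have : (1 : A) ∈ nilradical A := hsum ▸ sum_mem fun g _ => (hid g).resolve_right (hno g)
    rw [mem_nilradical] at this
    exact not_isNilpotent_one this
  have hne : ∀ h, h ≠ g → e h ∈ nilradical A := fun h hh => by
    have : e h = e h * e g - e h * (e g - 1) := by ring
    rw [this]
    exact sub_mem (horth h g hh) (Ideal.mul_mem_left _ _ hg)
  let v := single g⁻¹ w * u
  have hv : IsNilpotent (v - 1) := by
    rw [← mem_nilradical]
    have : v - 1 = ∑ h, single h ((v - 1).coeff h) := by
      ext k; simp [Finsupp.single_apply]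
    rw [this]
    refine sum_mem fun h _ => ?_
    have hh : IsNilpotent ((v - 1).coeff h) := by
      rw [← mem_nilradical]
      have : (v - 1).coeff h = e (g * h) - if h = 1 then 1 else 0 := by
        simp [v, e, MonoidAlgebra.one_def, Finsupp.single_apply, eq_comm]
      rw [this]
      split_ifs with h1
      · simpa [h1] using hg
      · simpa using hne (g * h) (by simpa using h1)
    obtain ⟨m, hm⟩ := hh
    rw [mem_nilradical]
    refine ⟨m, ?_⟩
    rw [single_pow, hm, single_zero]
  have : IsAddTorsionFree A := Module.isTorsionFree_int_iff_isAddTorsionFree.1 inferInstance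
  have : IsAddTorsionFree (MonoidAlgebra A G) :=
    Function.Injective.isAddTorsionFree (coeffAddEquiv : MonoidAlgebra A G ≃+ _).toAddMonoidHom
      coeffAddEquiv.injective
  have hgm : ∃ m > 0, v ^ m = 1 := by
    refine ⟨Fintype.card G * n, Nat.mul_pos Fintype.card_pos hn, ?_⟩
    simp only [v]
    have h1 : g⁻¹ ^ (Fintype.card G * n) = 1 := by rw [pow_mul, pow_card_eq_one, one_pow]
    have h2 : w ^ (Fintype.card G * n) = 1 := by rw [mul_comm, pow_mul, hwn, one_pow]
    have h3 : u ^ (Fintype.card G * n) = 1 := by rw [mul_comm, pow_mul, hu, one_pow]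
    rw [mul_pow, single_pow, h1, h2, h3, mul_one, one_def]
  obtain ⟨m, hm, hvm⟩ := hgm
  have hv1 := unip (v - 1) hv m hm (by simpa using hvm)
  refine ⟨z, g, hz, ?_⟩
  have : single g z * v = u := by
    simp only [v]; rw [← mul_assoc, single_mul_single, mul_comm z, hwz, mul_inv_cancel, ← one_def, one_mul]
  rw [← this, sub_eq_zero.1 hv1, mul_one]

lemma exists_single_hom (A G : Type*) [CommRing A] [CommGroup G] :
    ∃ f : Aˣ × G →* (MonoidAlgebra A G)ˣ,
      ∀ z g, ((f (z, g) : (MonoidAlgebra A G)ˣ) : MonoidAlgebra A G) = single g (z : A) := by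
  let sg : A × G →* MonoidAlgebra A G :=
    { toFun := fun p => single p.2 p.1
      map_one' := rfl
      map_mul' := fun p q => by simp [single_mul_single] }
  let f0 : Aˣ × G →* (MonoidAlgebra A G)ˣ :=
    (Units.map sg).comp ((MulEquiv.prodUnits (M := A) (N := G)).symm.toMonoidHom.comp
      ((MonoidHom.id Aˣ).prodMap (toUnits (G := G)).toMonoidHom))
  exact ⟨f0, fun z g => rfl⟩

theorem rootsOfUnity_groupring
    {A : Type u} [CommRing A] [Module.Free ℤ A] [Module.Finite ℤ A]
    (hconn : IsConnectedRing A)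
    {G : Type v} [CommGroup G] [Finite G] :
    ∃ e : (CommGroup.torsion Aˣ × G) ≃* CommGroup.torsion (MonoidAlgebra A G)ˣ,
      ∀ (ζ : CommGroup.torsion Aˣ) (g : G),
        ((e (ζ, g) : (MonoidAlgebra A G)ˣ) : MonoidAlgebra A G) =
          MonoidAlgebra.single g ((ζ : Aˣ) : A) := by
  obtain ⟨hnt, hc⟩ := hconn
  have : Fintype G := Fintype.ofFinite G
  obtain ⟨f0, hf0⟩ := exists_single_hom A G
  have htor : ∀ p : CommGroup.torsion Aˣ × G, f0 (p.1, p.2) ∈ CommGroup.torsion (MonoidAlgebra A G)ˣ := by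
    rintro ⟨⟨z, hz⟩, g⟩
    obtain ⟨n, hn, hzn⟩ := isOfFinOrder_iff_pow_eq_one.1 ((CommGroup.mem_torsion _).1 hz)
    refine (CommGroup.mem_torsion _).2 <| isOfFinOrder_iff_pow_eq_one.2
      ⟨n * Fintype.card G, Nat.mul_pos hn Fintype.card_pos, ?_⟩
    have h1 : ((z, g) : Aˣ × G) ^ (n * Fintype.card G) = 1 := by
      rw [Prod.pow_mk, pow_mul, hzn, one_pow, mul_comm, pow_mul, pow_card_eq_one, one_pow]
      rfl
    rw [← map_pow, h1, map_one]
  let f : CommGroup.torsion Aˣ × G →* CommGroup.torsion (MonoidAlgebra A G)ˣ :=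
    { toFun := fun p => ⟨f0 (p.1, p.2), htor p⟩
      map_one' := Subtype.ext (map_one f0)
      map_mul' := fun p q => Subtype.ext (map_mul f0 ((p.1 : Aˣ), p.2) ((q.1 : Aˣ), q.2)) }
  have hf : ∀ z g, ((f (z, g) : (MonoidAlgebra A G)ˣ) : MonoidAlgebra A G) =
      single g ((z : Aˣ) : A) := fun z g => hf0 z g
  refine ⟨MulEquiv.ofBijective f ⟨?_, ?_⟩, hf⟩
  · rintro ⟨z, g⟩ ⟨z2, g2⟩ h
    have h1 : (single g ((z : Aˣ) : A) : MonoidAlgebra A G) = single g2 ((z2 : Aˣ) : A) := by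
      rw [← hf, ← hf, h]
    rcases (Finsupp.single_eq_single_iff _ _ _ _).1 (congrArg MonoidAlgebra.coeff h1) with ⟨h2, h3⟩ | ⟨h2, -⟩
    · exact Prod.ext (Subtype.ext (Units.ext h3)) h2
    · exact absurd h2 (z : Aˣ).ne_zero
  · rintro ⟨u, hu⟩
    obtain ⟨n, hn, hun⟩ := isOfFinOrder_iff_pow_eq_one.1 ((CommGroup.mem_torsion _).1 hu)
    obtain ⟨z, g, hz, hug⟩ := key hc (u : MonoidAlgebra A G) n hn (by rw [← Units.val_pow_eq_pow_val, hun]; rfl)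
    refine ⟨(⟨Units.ofPowEqOne z n hz hn.ne', (CommGroup.mem_torsion _).2 <|
      isOfFinOrder_iff_pow_eq_one.2 ⟨n, hn, Units.pow_ofPowEqOne hz hn.ne'⟩⟩, g), Subtype.ext (Units.ext ?_)⟩
    rw [hf, hug]
    rfl
end

section
/- Let S and T be orders, let R = S × T, and let (E, (S_ε)_{ε∈E}) and (Z, (T_ζ)_{ζ∈Z}) be gradings of S and T respectively. Define additive subgroups of R indexed by E × Z by R_{(1,1)} = S_1 × T_1, R_{(ε,1)} = S_ε × {0} for ε ≠ 1, R_{(1,ζ)} = {0} × T_ζ for ζ ≠ 1, and R_{(ε,ζ)} = {(0,0)} for ε ≠ 1 and ζ ≠ 1. Then (E × Z, (R_{(ε,ζ)})_{(ε,ζ)}) is a grading of R, and if the two given gradings are universal, then so is this grading of R. -/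
/-- A grading of a commutative ring `R` by a (multiplicatively written) abelian group `Δ`:
a `Δ`-indexed internal direct sum decomposition of `R` into additive subgroups such that
`R_γ · R_δ ⊆ R_{γδ}`. -/
structure Grading (R : Type u) [CommRing R] (Δ : Type v) [CommGroup Δ] where
  comp : Δ → AddSubgroup R
  mul_mem : ∀ ⦃γ δ : Δ⦄ ⦃x y : R⦄, x ∈ comp γ → y ∈ comp δ → x * y ∈ comp (γ * δ)
  isInternal : letI := Classical.decEq Δ; DirectSum.IsInternal comp

/-- A grading is universal if every grading of `R` is obtained from it by pushforward
(`S_ε = Σ_{δ ∈ f⁻¹(ε)} R_δ`) along a unique group homomorphism. -/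
def Grading.IsUniversal {R : Type u} [CommRing R] {Δ : Type v} [CommGroup Δ]
    (g : Grading R Δ) : Prop :=
  ∀ (E : Type v) (_ : CommGroup E) (s : Grading R E),
    ∃! f : Δ →* E, ∀ ε : E, s.comp ε = ⨆ δ ∈ f ⁻¹' {ε}, g.comp δ


namespace Grading

section basic

variable {R : Type*} [CommRing R] {D : Type*} [CommGroup D]

/-- A criterion for a family of subgroups to be an internal direct sum, via projections. -/
theorem isInternal_of_proj {M : Type*} [AddCommGroup M] {ι : Type*} [DecidableEq ι]
    (A : ι → AddSubgroup M) (π : ι → M → M) (hadd : ∀ i x y, π i (x + y) = π i x + π i y)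
    (h1 : ∀ i, ∀ x ∈ A i, π i x = x)
    (h2 : ∀ i j, i ≠ j → ∀ x ∈ A j, π i x = 0) (h3 : ∀ x, x ∈ ⨆ i, A i) :
    DirectSum.IsInternal A := by
  let P : ι → M →+ M := fun i => AddMonoidHom.mk' (π i) (hadd i)
  constructor
  · rw [injective_iff_map_eq_zero]
    intro v hv
    have key : ∀ (i : ι) (v : DirectSum ι fun i => A i),
        P i (DirectSum.coeAddMonoidHom A v) = v i := by
      intro i v
      induction v using DirectSum.induction_on with
      | zero => simp
      | of j x =>
        rw [DirectSum.coeAddMonoidHom_of]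
        by_cases hij : i = j
        · subst hij
          rw [DirectSum.of_eq_same]
          exact h1 i x x.2
        · rw [DirectSum.of_eq_of_ne _ _ _ hij]
          exact h2 i j hij x x.2
      | add x y hx hy => rw [map_add, map_add, hx, hy]; rfl
    ext i
    rw [← key, hv, map_zero]
    rfl
  · intro x
    have : (⨆ i, A i) ≤ (DirectSum.coeAddMonoidHom A).range := by
      refine iSup_le fun i y hy => ?_
      exact ⟨DirectSum.of (fun i => A i) i ⟨y, hy⟩, DirectSum.coeAddMonoidHom_of A i ⟨y, hy⟩⟩
    exact this (h3 x)

theorem exists_proj (s : Grading R D) : ∃ π : D → R →+ R,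
    (∀ i x, π i x ∈ s.comp i) ∧ (∀ i, ∀ x ∈ s.comp i, π i x = x) ∧
    (∀ i j, i ≠ j → ∀ x ∈ s.comp j, π i x = 0) ∧
    (∀ x, ∃ F : Finset D, x = ∑ i ∈ F, π i x ∧ ∀ i ∈ F, π i x ≠ 0) := by
  classical
  have h := s.isInternal
  have hdec : Classical.decEq D = fun a b => Classical.propDecidable (a = b) :=
    Subsingleton.elim _ _
  have h' : DirectSum.IsInternal s.comp := by convert h
  let e : (DirectSum D fun i => s.comp i) ≃+ R :=
    AddEquiv.ofBijective (DirectSum.coeAddMonoidHom s.comp) h'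
  have he : ∀ i (x : s.comp i), e.symm x = DirectSum.of (fun i => s.comp i) i x := by
    intro i x
    rw [AddEquiv.symm_apply_eq]
    exact (DirectSum.coeAddMonoidHom_of s.comp i x).symm
  refine ⟨fun i => AddMonoidHom.mk' (fun x => (e.symm x i : R)) ?_, ?_, ?_, ?_, ?_⟩
  · intro x y
    rw [map_add]; rfl
  · intro i x
    exact (e.symm x i).2
  · intro i x hx
    change ((e.symm x) i : R) = x
    rw [he i ⟨x, hx⟩, DirectSum.of_eq_same]
  · intro i j hij x hx
    change ((e.symm x) i : R) = 0
    rw [he j ⟨x, hx⟩, DirectSum.of_eq_of_ne _ _ _ hij]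
    rfl
  · intro x
    refine ⟨DFinsupp.support (e.symm x), ?_, ?_⟩
    · have := DirectSum.coeAddMonoidHom_eq_dfinsuppSum (A := s.comp) (e.symm x)
      have h2 : DirectSum.coeAddMonoidHom s.comp (e.symm x) = x := e.apply_symm_apply x
      rw [h2] at this
      exact this
    · intro i hi
      have := DFinsupp.mem_support_iff.1 hi
      intro h0
      exact this (Subtype.ext h0)

theorem mem_iSup (s : Grading R D) (x : R) : x ∈ ⨆ i, s.comp i := by
  obtain ⟨π, h1, -, -, h4⟩ := s.exists_proj
  obtain ⟨F, hF, -⟩ := h4 x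
  rw [hF]
  exact sum_mem fun i _ => AddSubgroup.mem_iSup_of_mem i (h1 i x)

theorem eq_of_mem (s : Grading R D) {i j : D} {x : R} (hi : x ∈ s.comp i) (hj : x ∈ s.comp j)
    (hx : x ≠ 0) : i = j := by
  obtain ⟨π, h1, h2, h3, h4⟩ := s.exists_proj
  by_contra hij
  exact hx ((h2 i x hi).symm.trans (h3 i j hij x hj))

theorem push_iff {E : Type*} [CommGroup E] (g : Grading R D) (s : Grading R E) (f : D →* E) :
    (∀ ε : E, s.comp ε = ⨆ δ ∈ f ⁻¹' {ε}, g.comp δ) ↔ ∀ δ, g.comp δ ≤ s.comp (f δ) := by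
  constructor
  · intro h δ
    rw [h]
    exact le_iSup₂_of_le δ rfl le_rfl
  · intro h ε
    apply le_antisymm
    · obtain ⟨π, h1, h2, h3, h4⟩ := s.exists_proj
      have key : ∀ x, π ε x ∈ ⨆ δ ∈ f ⁻¹' {ε}, g.comp δ := by
        intro x
        refine AddSubgroup.iSup_induction g.comp
          (C := fun x => π ε x ∈ ⨆ δ ∈ f ⁻¹' {ε}, g.comp δ) (g.mem_iSup x) ?_ ?_ ?_
        · intro δ x hx
          by_cases hd : f δ = ε
          · rw [h2 ε x (hd ▸ h δ hx)]
            exact (le_iSup₂_of_le (f := fun δ (_ : δ ∈ f ⁻¹' {ε}) => g.comp δ) δ hd le_rfl) hx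
          · rw [h3 ε (f δ) (Ne.symm hd) x (h δ hx)]
            exact zero_mem _
        · simp
        · intro x y hx hy
          rw [map_add]
          exact add_mem hx hy
      intro x hx
      rw [← h2 ε x hx]
      exact key x
    · refine iSup₂_le fun δ hδ => ?_
      have : f δ = ε := hδ
      exact this ▸ h δ

theorem isUniversal_iff.{u₁, v₁} {R : Type u₁} [CommRing R] {D : Type v₁} [CommGroup D]
    (g : Grading R D) : g.IsUniversal ↔
    ∀ (E : Type v₁) (_ : CommGroup E) (s : Grading R E),
      ∃! f : D →* E, ∀ δ, g.comp δ ≤ s.comp (f δ) := by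
  simp only [IsUniversal, push_iff]

/-- Restriction of a grading along an injective homomorphism hitting the support. -/
def restrict {K : Type*} [CommGroup K] (s : Grading R D) (j : K →* D)
    (hj : Function.Injective j) (hs : ∀ δ, s.comp δ ≠ ⊥ → δ ∈ Set.range j) : Grading R K where
  comp k := s.comp (j k)
  mul_mem := by
    intro γ δ x y hx hy
    rw [map_mul]
    exact s.mul_mem hx hy
  isInternal := by
    obtain ⟨π, h1, h2, h3, h4⟩ := s.exists_proj
    refine @isInternal_of_proj _ _ _ (Classical.decEq K) _ (fun k x => π (j k) x) ?_ ?_ ?_ ?_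
    · intro i x y
      exact map_add _ _ _
    · intro i x hx
      exact h2 _ x hx
    · intro i i' hne x hx
      exact h3 _ _ (fun h => hne (hj h)) x hx
    · intro x
      have : (⨆ i, s.comp i) ≤ ⨆ k, s.comp (j k) := by
        refine iSup_le fun i => ?_
        by_cases hi : s.comp i = ⊥
        · rw [hi]; exact bot_le
        · obtain ⟨k, rfl⟩ := hs i hi
          exact le_iSup (fun k => s.comp (j k)) k
      exact this (s.mem_iSup x)

end basic

theorem small_closure {D : Type*} [CommGroup D] (U : Set D) (hU : U.Countable) :
    Countable (Subgroup.closure U) := by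
  have : Countable U := hU
  have h : (Subgroup.closure U : Set D) ⊆
      Set.range (fun l : List (U × Bool) => (l.map fun p => if p.2 then (p.1 : D) else (p.1 : D)⁻¹).prod) := by
    intro x hx
    refine Subgroup.closure_induction (p := fun x _ => x ∈ Set.range
      (fun l : List (U × Bool) => (l.map fun p => if p.2 then (p.1 : D) else (p.1 : D)⁻¹).prod))
      ?_ ?_ ?_ ?_ hx
    · intro y hy
      exact ⟨[(⟨y, hy⟩, true)], by simp⟩
    · exact ⟨[], by simp⟩
    · rintro _ _ _ _ ⟨a, rfl⟩ ⟨b, rfl⟩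
      exact ⟨a ++ b, by simp⟩
    · rintro _ _ ⟨a, rfl⟩
      refine ⟨a.map fun p => (p.1, !p.2), ?_⟩
      simp only [List.map_map]
      rw [List.prod_inv]
      rw [List.map_map]
      congr 1
      apply List.map_congr_left
      rintro ⟨p, b⟩ _
      cases b <;> simp
  exact (Set.countable_range _).mono h

universe w

/-- Universality of a grading of an order holds against gradings in any universe. -/
theorem universal_lift {R : Type*} [CommRing R] [Module.Finite ℤ R]
    {E : Type w} [CommGroup E] (g : Grading R E) (hg : g.IsUniversal)
    {D : Type*} [CommGroup D] (s : Grading R D) :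
    ∃! f : E →* D, ∀ δ, g.comp δ ≤ s.comp (f δ) := by
  rw [isUniversal_iff] at hg
  have hcR : Countable R := Finsupp.Countable.of_moduleFinite (R := ℤ)
  have hsupp : {δ | s.comp δ ≠ ⊥}.Countable := by
    have hch : ∀ δ : {δ | s.comp δ ≠ ⊥}, ∃ x ∈ s.comp δ, x ≠ 0 := by
      rintro ⟨δ, hδ⟩
      exact (AddSubgroup.ne_bot_iff_exists_ne_zero.1 hδ).elim
        fun a ha => ⟨a, a.2, fun h => ha (Subtype.ext h)⟩
    choose c hc hc0 using hch
    have : Function.Injective c := by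
      intro a b hab
      apply Subtype.ext
      exact s.eq_of_mem (hc a) (hab ▸ hc b) (hc0 a)
    exact this.countable
  have hC := small_closure _ hsupp
  -- the general step
  have key : ∀ H : Subgroup D, Small.{w} H → Subgroup.closure {δ | s.comp δ ≠ ⊥} ≤ H →
      ∃! f : E →* H, ∀ δ, g.comp δ ≤ s.comp (f δ) := by
    intro H hH hle
    let m : Shrink.{w} H ≃* H := Shrink.mulEquiv
    let s' := s.restrict (H.subtype.comp m.toMonoidHom)
      (fun a b hab => m.injective (Subtype.ext hab))
      (fun δ hδ => ⟨m.symm ⟨δ, hle (Subgroup.subset_closure hδ)⟩, by simp⟩)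
    obtain ⟨f, hf, hu⟩ := hg _ inferInstance s'
    refine ⟨m.toMonoidHom.comp f, hf, ?_⟩
    intro f' hf'
    have := hu (m.symm.toMonoidHom.comp f') (by
      intro δ
      have h := hf' δ
      change g.comp δ ≤ s.comp (m (m.symm (f' δ)))
      rwa [m.apply_symm_apply])
    rw [← this]
    ext x
    simp
  obtain ⟨f, hf, -⟩ := key _ (Countable.toSmall _) le_rfl
  refine ⟨(Subgroup.subtype _).comp f, hf, ?_⟩
  intro f' hf'
  let C := Subgroup.closure {δ | s.comp δ ≠ ⊥}
  let H : Subgroup D := C ⊔ f'.range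
  have hCs : Small.{w} C := Countable.toSmall _
  have hH : Small.{w} H := by
    refine small_of_surjective (α := C × E) (f := fun p => ⟨p.1 * f' p.2,
      Subgroup.mul_mem_sup p.1.2 ⟨p.2, rfl⟩⟩) ?_
    rintro ⟨x, hx⟩
    obtain ⟨a, ha, b, ⟨c, rfl⟩, rfl⟩ := Subgroup.mem_sup.1 hx
    exact ⟨(⟨a, ha⟩, c), rfl⟩
  have hu := (key H hH le_sup_left).unique
    (y₁ := f'.codRestrict H (fun x => (le_sup_right : f'.range ≤ H) ⟨x, rfl⟩))
    (y₂ := (Subgroup.inclusion (le_sup_left : C ≤ H)).comp f) hf' hf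
  ext x
  exact congrArg Subtype.val (DFunLike.congr_fun hu x)

/-! ### Idempotents have degree one -/

theorem eq_bot_of_divisible {D : Type*} [CommGroup D] (H : Subgroup D) (hfg : H.FG)
    (h : ∀ p : ℕ, p.Prime → H ≤ H.map (powMonoidHom p)) : H = ⊥ := by
  have hn : ∀ n : ℕ, n ≠ 0 → ∀ x ∈ H, ∃ y ∈ H, y ^ n = x := by
    intro n
    induction n using induction_on_primes with
    | zero => simp
    | one => intro _ x hx; exact ⟨x, hx, pow_one x⟩
    | prime_mul p a hp ih =>
      intro h0 x hx
      obtain ⟨y, hy, rfl⟩ := h p hp hx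
      obtain ⟨z, hz, rfl⟩ := ih (right_ne_zero_of_mul h0) y hy
      exact ⟨z, hz, by simp [← pow_mul, mul_comm]⟩
  let N : Submodule ℤ (Additive D) := AddSubgroup.toIntSubmodule (Subgroup.toAddSubgroup H)
  have hN : N.FG := by
    rw [Submodule.fg_iff_addSubgroup_fg]
    exact (Subgroup.fg_iff_add_fg H).1 hfg
  obtain ⟨r, hr, hr0⟩ := Submodule.exists_sub_one_mem_and_smul_eq_zero_of_fg_of_le_smul
    (Ideal.span {(2 : ℤ)}) N hN (by
      intro x hx
      obtain ⟨y, hy, hxy⟩ := hn 2 (by norm_num) (Additive.toMul x) hx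
      have : x = (2 : ℤ) • Additive.ofMul y := by
        apply Additive.toMul.injective
        rw [← hxy]
        simp
        try norm_cast
      rw [this]
      exact Submodule.smul_mem_smul (Ideal.mem_span_singleton_self _) hy)
  have hrne : r ≠ 0 := by
    rintro rfl
    rw [Ideal.mem_span_singleton] at hr
    omega
  rw [eq_bot_iff]
  intro x hx
  obtain ⟨y, hy, rfl⟩ := hn r.natAbs (by simpa using hrne) x hx
  have h1 := hr0 (Additive.ofMul y) hy
  have h2 : y ^ r = 1 := by
    have := congrArg Additive.toMul h1
    simpa using this
  rw [Subgroup.mem_bot]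
  exact pow_natAbs_eq_one.2 h2

theorem sum_pow_dvd {R : Type*} [CommRing R] {p : ℕ} (hp : p.Prime) {ι : Type*} (F : Finset ι)
    (v : ι → R) : (p : R) ∣ (∑ i ∈ F, v i) ^ p - ∑ i ∈ F, v i ^ p := by
  classical
  induction F using Finset.induction_on with
  | empty => simp [hp.ne_zero]
  | insert a F ha ih =>
    rw [Finset.sum_insert ha, Finset.sum_insert ha]
    obtain ⟨r, hr⟩ := exists_add_pow_prime_eq hp (v a) (∑ i ∈ F, v i)
    obtain ⟨c, hc⟩ := ih
    rw [hr]
    refine ⟨c + v a * (∑ i ∈ F, v i) * r, ?_⟩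
    linear_combination hc

theorem eq_zero_of_pow_dvd {R : Type*} [CommRing R] [Module.Free ℤ R]
    {p : ℕ} (hp : p.Prime) (x : R) (h : ∀ k : ℕ, ((p : R) ^ (k + 1)) ∣ x) : x = 0 := by
  let b := Module.Free.chooseBasis ℤ R
  apply b.repr.injective
  ext i
  rw [map_zero, Finsupp.zero_apply]
  by_contra hne
  have hd : ∀ k : ℕ, ((p : ℤ) ^ (k + 1)) ∣ b.repr x i := by
    intro k
    obtain ⟨c, hc⟩ := h k
    refine ⟨b.repr c i, ?_⟩
    have : x = ((p : ℤ) ^ (k + 1)) • c := by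
      rw [hc, zsmul_eq_mul]; push_cast; rfl
    rw [this, map_smul, Finsupp.smul_apply, smul_eq_mul]
  have h1 := Int.natAbs_dvd_natAbs.2 (hd (b.repr x i).natAbs)
  rw [Int.natAbs_pow, Int.natAbs_natCast] at h1
  have h2 := Nat.le_of_dvd (Int.natAbs_pos.2 hne) h1
  have h3 := Nat.lt_pow_self hp.one_lt (n := (b.repr x i).natAbs + 1)
  omega

theorem idem_mem_one {R : Type*} [CommRing R] [Module.Free ℤ R]
    {D : Type*} [CommGroup D] (s : Grading R D) (e : R) (he : IsIdempotentElem e) :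
    e ∈ s.comp 1 := by
  obtain ⟨π, h1, h2, h3, h4⟩ := s.exists_proj
  obtain ⟨F, hF, hF0⟩ := h4 e
  let H : Subgroup D := Subgroup.closure F
  have hH : H = ⊥ := by
    apply eq_bot_of_divisible H ⟨F, rfl⟩
    intro p hp
    rw [Subgroup.closure_le]
    intro γ hγ
    by_contra hγP
    apply hF0 γ hγ
    let P := H.map (powMonoidHom p)
    let U : Set R := {x | ∃ δ ∈ P, x ∈ s.comp δ}
    let A := AddSubgroup.closure U
    have hmul : ∀ x ∈ A, ∀ y ∈ A, x * y ∈ A := by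
      intro x hx y hy
      induction hx, hy using AddSubgroup.closure_induction₂ with
      | mem x y hx hy =>
        obtain ⟨a, ha, hxa⟩ := hx
        obtain ⟨b, hb, hyb⟩ := hy
        exact AddSubgroup.subset_closure ⟨a * b, P.mul_mem ha hb, s.mul_mem hxa hyb⟩
      | zero_left => rw [zero_mul]; exact zero_mem _
      | zero_right => rw [mul_zero]; exact zero_mem _
      | add_left x y z _ _ _ h h' => rw [add_mul]; exact add_mem h h'
      | add_right x y z _ _ _ h h' => rw [mul_add]; exact add_mem h h'
      | neg_left x y _ _ h => rw [neg_mul]; exact neg_mem h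
      | neg_right x y _ _ h => rw [mul_neg]; exact neg_mem h
    have hpow : ∀ x ∈ A, ∀ n : ℕ, x ^ (n + 1) ∈ A := by
      intro x hx n
      induction n with
      | zero => simpa using hx
      | succ n ih => rw [pow_succ]; exact hmul _ ih _ hx
    have hπ : ∀ x ∈ A, π γ x = 0 := by
      intro x hx
      have : A ≤ (π γ).ker := by
        rw [AddSubgroup.closure_le]
        rintro y ⟨δ, hδ, hy⟩
        refine h3 γ δ ?_ y hy
        rintro rfl
        exact hγP hδ
      exact this hx
    have hhom : ∀ (n : ℕ) (δ : D) (x : R), x ∈ s.comp δ → x ^ (n + 1) ∈ s.comp (δ ^ (n + 1)) := by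
      intro n δ x hx
      induction n with
      | zero => simpa using hx
      | succ n ih => rw [pow_succ x (n + 1), pow_succ δ (n + 1)]; exact s.mul_mem ih hx
    let a := ∑ i ∈ F, π i e ^ p
    have ha : a ∈ A := by
      refine sum_mem fun i hi => AddSubgroup.subset_closure ⟨i ^ p, ?_, ?_⟩
      · exact ⟨i, Subgroup.subset_closure hi, rfl⟩
      · have := hhom (p - 1) i _ (h1 i e)
        rwa [Nat.sub_add_cancel hp.one_le] at this
    have hepow : ∀ n : ℕ, n ≠ 0 → e ^ n = e := fun n hn => he.pow_eq hn
    have hdvd : (p : R) ∣ e - a := by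
      have := sum_pow_dvd hp F (fun i => π i e)
      rw [← hF, hepow p hp.ne_zero] at this
      exact this
    apply eq_zero_of_pow_dvd hp
    intro k
    obtain ⟨c, hc⟩ := dvd_sub_pow_of_dvd_sub hdvd k
    have hk : p ^ k ≠ 0 := pow_ne_zero _ hp.ne_zero
    rw [hepow _ hk] at hc
    have hak : a ^ p ^ k ∈ A := by
      have := hpow a ha (p ^ k - 1)
      rwa [Nat.sub_add_cancel (Nat.one_le_iff_ne_zero.2 hk)] at this
    refine ⟨π γ c, ?_⟩
    have h5 := congrArg (π γ) hc
    rw [map_sub, hπ _ hak, sub_zero] at h5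
    rw [h5]
    have : (p : R) ^ (k + 1) * c = (p ^ (k + 1)) • c := by
      rw [nsmul_eq_mul]; push_cast; rfl
    rw [this, map_nsmul, nsmul_eq_mul]
    push_cast; rfl
  rw [hF]
  refine sum_mem fun i hi => ?_
  have : i ∈ H := Subgroup.subset_closure hi
  rw [hH, Subgroup.mem_bot] at this
  subst this
  exact h1 _ _

/-- The grading induced on a direct factor cut out by an idempotent of degree one. -/
def factor {R A : Type*} [CommRing R] [CommRing A] {D : Type*} [CommGroup D] (s : Grading R D)
    (i : A →+ R) (himul : ∀ x y, i (x * y) = i x * i y) (q : R →+* A) (e : R) (he : e ∈ s.comp 1) (hqi : ∀ x, q (i x) = x)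
    (hiq : ∀ y, i (q y) = e * y) : Grading A D where
  comp δ := (s.comp δ).comap i
  mul_mem := by
    intro γ δ x y hx hy
    rw [AddSubgroup.mem_comap]
    rw [himul]
    exact s.mul_mem hx hy
  isInternal := by
    obtain ⟨π, h1, h2, h3, h4⟩ := s.exists_proj
    refine @isInternal_of_proj _ _ _ (Classical.decEq D) _ (fun k x => q (π k (i x))) ?_ ?_ ?_ ?_
    · intro k x y
      simp only [map_add]
    · intro k x hx
      change q (π k (i x)) = x
      rw [h2 k _ hx, hqi]
    · intro k k' hne x hx
      change q (π k (i x)) = 0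
      rw [h3 k k' hne _ hx, map_zero]
    · intro x
      rw [← hqi x]
      refine AddSubgroup.iSup_induction s.comp
        (C := fun y => q y ∈ ⨆ δ, (s.comp δ).comap i) (s.mem_iSup (i x)) ?_ ?_ ?_
      · intro δ y hy
        refine AddSubgroup.mem_iSup_of_mem δ ?_
        rw [AddSubgroup.mem_comap, hiq]
        have := s.mul_mem he hy
        rwa [one_mul] at this
      · rw [map_zero]; exact zero_mem _
      · intro y z hy hz
        rw [map_add]; exact add_mem hy hz

open Classical in
/-- The product grading. -/
noncomputable def prodGrading {S T E Z : Type*} [CommRing S] [CommRing T] [CommGroup E]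
    [CommGroup Z] (gS : Grading S E) (gT : Grading T Z) : Grading (S × T) (E × Z) where
  comp p := AddSubgroup.prod (if p.2 = 1 then gS.comp p.1 else ⊥)
    (if p.1 = 1 then gT.comp p.2 else ⊥)
  mul_mem := by
    rintro ⟨a, b⟩ ⟨c, d⟩ ⟨x, y⟩ ⟨x', y'⟩ ⟨hx, hy⟩ ⟨hx', hy'⟩
    dsimp only [Prod.mk_mul_mk] at *
    constructor
    · dsimp only
      by_cases hb : b = 1
      · by_cases hd : d = 1
        · simp only [hb, hd, if_true, mul_one] at hx hx' ⊢
          exact gS.mul_mem hx hx'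
        · rw [if_neg hd] at hx'; replace hx' := AddSubgroup.mem_bot.1 hx'
          rw [hx', mul_zero]; exact zero_mem _
      · rw [if_neg hb] at hx; replace hx := AddSubgroup.mem_bot.1 hx
        rw [hx, zero_mul]; exact zero_mem _
    · dsimp only
      by_cases hb : a = 1
      · by_cases hd : c = 1
        · simp only [hb, hd, if_true, mul_one] at hy hy' ⊢
          exact gT.mul_mem hy hy'
        · rw [if_neg hd] at hy'; replace hy' := AddSubgroup.mem_bot.1 hy'
          rw [hy', mul_zero]; exact zero_mem _
      · rw [if_neg hb] at hy; replace hy := AddSubgroup.mem_bot.1 hy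
        rw [hy, zero_mul]; exact zero_mem _
  isInternal := by
    obtain ⟨π, h1, h2, h3, h4⟩ := gS.exists_proj
    obtain ⟨ρ, k1, k2, k3, k4⟩ := gT.exists_proj
    refine @isInternal_of_proj _ _ _ (Classical.decEq (E × Z)) _
      (fun p x => (if p.2 = 1 then π p.1 x.1 else 0, if p.1 = 1 then ρ p.2 x.2 else 0)) ?_ ?_ ?_ ?_
    · intro p x y
      ext
      · by_cases h : p.2 = 1 <;> simp [h]
      · by_cases h : p.1 = 1 <;> simp [h]
    · rintro ⟨a, b⟩ ⟨x, y⟩ ⟨hx, hy⟩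
      dsimp only at *
      ext
      · by_cases h : b = 1
        · rw [if_pos h] at hx
          simp [h, h2 a x hx]
        · rw [if_neg h] at hx; replace hx := AddSubgroup.mem_bot.1 hx
          simp [h, hx]
      · by_cases h : a = 1
        · rw [if_pos h] at hy
          simp [h, k2 b y hy]
        · rw [if_neg h] at hy; replace hy := AddSubgroup.mem_bot.1 hy
          simp [h, hy]
    · rintro ⟨a, b⟩ ⟨c, d⟩ hne ⟨x, y⟩ ⟨hx, hy⟩
      dsimp only at *
      ext
      · by_cases h : b = 1
        · by_cases hd : d = 1
          · rw [if_pos hd] at hx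
            have : a ≠ c := by rintro rfl; exact hne (by rw [h, hd])
            simp [h3 a c this x hx]
          · rw [if_neg hd] at hx; replace hx := AddSubgroup.mem_bot.1 hx
            simp [hx]
        · simp [h]
      · by_cases h : a = 1
        · by_cases hd : c = 1
          · rw [if_pos hd] at hy
            have : b ≠ d := by rintro rfl; exact hne (by rw [h, hd])
            simp [k3 b d this y hy]
          · rw [if_neg hd] at hy; replace hy := AddSubgroup.mem_bot.1 hy
            simp [hy]
        · simp [h]
    · rintro ⟨x, y⟩
      set C : E × Z → AddSubgroup (S × T) := fun p =>
        AddSubgroup.prod (if p.2 = 1 then gS.comp p.1 else ⊥)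
          (if p.1 = 1 then gT.comp p.2 else ⊥) with hC
      have hx : ((x, 0) : S × T) ∈ ⨆ p, C p := by
        refine AddSubgroup.iSup_induction gS.comp
          (C := fun x => ((x, 0) : S × T) ∈ ⨆ p, C p) (gS.mem_iSup x) ?_ ?_ ?_
        · intro a x hx
          refine AddSubgroup.mem_iSup_of_mem (a, 1) ⟨?_, ?_⟩
          · simpa using hx
          · exact zero_mem _
        · exact zero_mem _
        · intro u v hu hv
          have := add_mem hu hv
          simpa using this
      have hy : ((0, y) : S × T) ∈ ⨆ p, C p := by
        refine AddSubgroup.iSup_induction gT.comp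
          (C := fun y => ((0, y) : S × T) ∈ ⨆ p, C p) (gT.mem_iSup y) ?_ ?_ ?_
        · intro a y hy
          refine AddSubgroup.mem_iSup_of_mem (1, a) ⟨?_, ?_⟩
          · exact zero_mem _
          · simpa using hy
        · exact zero_mem _
        · intro u v hu hv
          have := add_mem hu hv
          simpa using this
      have := add_mem hx hy
      simpa using this

end Grading

open Classical in
/-- Let `S` and `T` be orders, `R = S × T`, and let gradings of `S` by `E`
and of `T` by `Z` be given. Then the family over `E × Z` given by `R_{(1,1)} = S_1 × T_1`,
`R_{(ε,1)} = S_ε × 0` (`ε ≠ 1`), `R_{(1,ζ)} = 0 × T_ζ` (`ζ ≠ 1`) and `R_{(ε,ζ)} = 0`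
otherwise, is a grading of `R`; and if both given gradings are universal, so is this one. -/
theorem product_grading
    {S : Type u} [CommRing S] [Module.Free ℤ S] [Module.Finite ℤ S]
    {T : Type v} [CommRing T] [Module.Free ℤ T] [Module.Finite ℤ T]
    {E : Type w} [CommGroup E] {Z : Type x} [CommGroup Z]
    (gS : Grading S E) (gT : Grading T Z) :
    ∃ g : Grading (S × T) (E × Z),
      (∀ p : E × Z, g.comp p =
        if p.1 = 1 ∧ p.2 = 1 then (gS.comp 1).prod (gT.comp 1)
        else if p.2 = 1 then (gS.comp p.1).prod ⊥
        else if p.1 = 1 then AddSubgroup.prod ⊥ (gT.comp p.2)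
        else ⊥) ∧
      (gS.IsUniversal → gT.IsUniversal → g.IsUniversal) := by
  refine ⟨gS.prodGrading gT, ?_, ?_⟩
  · rintro ⟨a, b⟩
    change AddSubgroup.prod (if b = 1 then gS.comp a else ⊥) (if a = 1 then gT.comp b else ⊥) = _
    by_cases ha : a = 1 <;> by_cases hb : b = 1 <;> simp [ha, hb, AddSubgroup.bot_prod_bot]
  · intro hS hT
    rw [Grading.isUniversal_iff]
    intro D _ s
    have he : ((1, 0) : S × T) ∈ s.comp 1 := s.idem_mem_one _ (by simp [IsIdempotentElem])
    have he' : ((0, 1) : S × T) ∈ s.comp 1 := s.idem_mem_one _ (by simp [IsIdempotentElem])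
    let sS : Grading S D := s.factor (AddMonoidHom.inl S T)
      (fun x y => by ext <;> simp) (RingHom.fst S T) (1, 0) he
      (fun x => rfl) (fun y => by ext <;> simp)
    let sT : Grading T D := s.factor (AddMonoidHom.inr S T)
      (fun x y => by ext <;> simp) (RingHom.snd S T) (0, 1) he'
      (fun x => rfl) (fun y => by ext <;> simp)
    obtain ⟨f, hf, huf⟩ := gS.universal_lift hS sS
    obtain ⟨h, hh, huh⟩ := gT.universal_lift hT sT
    refine ⟨f.coprod h, ?_, ?_⟩
    · rintro ⟨a, b⟩ ⟨x, y⟩ ⟨hx, hy⟩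
      dsimp only at hx hy
      have hx' : ((x, 0) : S × T) ∈ s.comp (f a * h b) := by
        by_cases hb : b = 1
        · rw [if_pos hb] at hx
          rw [hb, map_one, mul_one]
          exact hf a hx
        · rw [if_neg hb] at hx; replace hx := AddSubgroup.mem_bot.1 hx
          rw [hx]; exact zero_mem _
      have hy' : ((0, y) : S × T) ∈ s.comp (f a * h b) := by
        by_cases ha : a = 1
        · rw [if_pos ha] at hy
          rw [ha, map_one, one_mul]
          exact hh b hy
        · rw [if_neg ha] at hy; replace hy := AddSubgroup.mem_bot.1 hy
          rw [hy]; exact zero_mem _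
      have := add_mem hx' hy'
      simpa using this
    · intro k hk
      have h1 := huf (k.comp (MonoidHom.inl E Z)) (by
        intro a x hx
        refine hk (a, 1) (x := ((x, 0) : S × T)) ⟨?_, zero_mem _⟩
        simpa using hx)
      have h2 := huh (k.comp (MonoidHom.inr E Z)) (by
        intro a x hx
        refine hk (1, a) (x := ((0, x) : S × T)) ⟨zero_mem _, ?_⟩
        simpa using hx)
      rw [← h1, ← h2]
      exact (MonoidHom.coprod_unique k).symm
end

section
/- Let R be a connected order, and let (A,G), (B,H) ∈ GpRg(R) be such that (B,H) ≤ (A,G), i.e., H ⊆ G and A ⊆ B. Set J = G ∩ μ(B). Then the multiplication map J × H → G is a group isomorphism, and the natural ring homomorphism A[J] → B is an isomorphism. -/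
/-- The subgroup `μ(B)` of roots of unity of a subring `B ⊆ R`, viewed inside `Rˣ`. -/
def torsionUnitsIn {R : Type*} [CommRing R] (B : Subring R) : Subgroup Rˣ where
  carrier := {u : Rˣ | IsOfFinOrder u ∧ (u : R) ∈ B}
  one_mem' := ⟨IsOfFinOrder.one, B.one_mem⟩
  mul_mem' := by
    rintro a b ⟨ha1, ha2⟩ ⟨hb1, hb2⟩
    exact ⟨ha1.mul hb1, by simpa using B.mul_mem ha2 hb2⟩
  inv_mem' := by
    rintro u ⟨hu1, hu2⟩
    refine ⟨hu1.inv, ?_⟩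
    obtain ⟨n, hn, hun⟩ := isOfFinOrder_iff_pow_eq_one.mp hu1
    have h2 : u ^ (n - 1) * u = 1 := by
      rw [← pow_succ, Nat.sub_add_cancel hn]
      exact hun
    rw [inv_eq_of_mul_eq_one_left h2]
    simpa using B.pow_mem hu2 (n - 1)


namespace GpRgAux

abbrev L := AlgebraicClosure ℚ

instance algL : Algebra.IsAlgebraic ℚ L := by
  convert AlgebraicClosure.isAlgebraic ℚ
  · rfl
  · exact Subsingleton.elim _ _

instance galL : IsGalois ℚ L :=
  have : IsAlgClosure ℚ L := ⟨inferInstance, algL⟩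
  IsAlgClosure.isGalois ℚ L

noncomputable abbrev embC : L →+* ℂ := (IsAlgClosed.lift (R := ℚ) (S := L) (M := ℂ)).toRingHom

instance finHom (R : Type*) [CommRing R] [Module.Finite ℤ R] : Finite (R →+* L) :=
  Finite.of_injective (β := R →ₐ[ℤ] L) (fun f => f.toIntAlgHom) (fun f g h => by
    ext x; exact DFunLike.congr_fun h x)

/-- Elements killed by all homs are nilpotent. -/
lemma nilp_of_hom {R : Type*} [CommRing R] [Module.Finite ℤ R] [Module.IsTorsionFree ℤ R]
    (a : R) (h : ∀ σ : R →+* L, σ a = 0) : IsNilpotent a := by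
  rw [← mem_nilradical, nilradical, ← Ideal.sInf_minimalPrimes]
  rw [Ideal.mem_sInf]
  intro P hP
  have hPp : P.IsPrime := hP.1.1
  have hinj : ∀ n : ℤ, n ≠ 0 → (n : R) ∉ P := by
    intro n hn hmem
    refine notMem_nonZeroDivisors_of_mem_mem_minimalPrimes hmem hP ?_
    rw [mem_nonZeroDivisors_iff_right]
    intro x hx
    have : n • x = 0 := by rw [zsmul_eq_mul, mul_comm]; exact hx
    exact (smul_eq_zero_iff_right hn).1 this
  have hc : CharZero (R ⧸ P) := by
    refine charZero_of_inj_zero fun n hn => ?_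
    by_contra hne
    apply hinj n (by exact_mod_cast hne)
    rw [← Ideal.Quotient.eq_zero_iff_mem]
    simpa using hn
  have : Algebra.IsAlgebraic ℤ (R ⧸ P) := inferInstance
  let f : (R ⧸ P) →ₐ[ℤ] L := IsAlgClosed.lift
  have hf : Function.Injective f := by
    rw [injective_iff_map_eq_zero]
    intro x hx
    by_contra hne
    have hx' : IsAlgebraic ℤ x := Algebra.IsAlgebraic.isAlgebraic x
    obtain ⟨y, hy, z, hz⟩ := IsAlgebraic.exists_nonzero_dvd hx' (mem_nonZeroDivisors_of_ne_zero hne)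
    have := congrArg f hz
    rw [map_mul, hx, zero_mul] at this
    simp at this
    exact hy this
  have := h (f.toRingHom.comp (Ideal.Quotient.mk P))
  rw [← Ideal.Quotient.eq_zero_iff_mem]
  exact hf (by simpa using this)

open scoped Classical in
/-- product of the nonzero conjugates has absolute value at least 1. -/
lemma one_le_prod {R : Type*} [CommRing R] [Module.Finite ℤ R] [Fintype (R →+* L)] (a : R) :
    1 ≤ ∏ σ : R →+* L with σ a ≠ 0, ‖embC (σ a)‖ := by
  set P : L := ∏ σ : R →+* L with σ a ≠ 0, σ a with hP
  have hP0 : P ≠ 0 := by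
    rw [hP, Finset.prod_ne_zero_iff]; intro σ hσ; simpa using hσ
  have hint : IsIntegral ℤ P := by
    apply IsIntegral.prod
    intro σ _
    exact (Algebra.IsIntegral.isIntegral (R := ℤ) a).map σ.toIntAlgHom
  have hfix : ∀ f : Gal(L/ℚ), f P = P := by
    intro f
    rw [hP, map_prod]
    refine Finset.prod_bij (fun σ _ => (f : L →+* L).comp σ) ?_ ?_ ?_ ?_
    · intro σ hσ; simpa using hσ
    · intro σ _ τ _ hh
      ext x
      have := DFunLike.congr_fun hh x
      simpa using this
    · intro σ hσ
      refine ⟨(f.symm : L →+* L).comp σ, by simpa using hσ, ?_⟩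
      ext x; simp
    · intro σ _; simp
  obtain ⟨q, hq⟩ := (InfiniteGalois.mem_range_algebraMap_iff_fixed P).2 hfix
  have hqi : IsIntegral ℤ q := by
    rw [← hq] at hint
    exact (isIntegral_algebraMap_iff (algebraMap ℚ L).injective).1 hint
  obtain ⟨n, hn⟩ := IsIntegrallyClosed.isIntegral_iff.1 hqi
  have hPn : P = (n : L) := by rw [← hq, ← hn]; simp
  have : ∏ σ : R →+* L with σ a ≠ 0, ‖embC (σ a)‖ = |(n : ℝ)| := by
    rw [← norm_prod, ← map_prod, ← hP, hPn]; simp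
  rw [this]
  have hn0 : n ≠ 0 := by rintro rfl; simp at hPn; exact hP0 hPn
  exact_mod_cast Int.one_le_abs hn0

open scoped Classical in
lemma card_le_sum {R : Type*} [CommRing R] [Module.Finite ℤ R] [Fintype (R →+* L)] (a : R) :
    ∑ σ : R →+* L with σ a ≠ 0, (1:ℝ) ≤ ∑ σ : R →+* L with σ a ≠ 0, ‖embC (σ a)‖ := by
  have h1 := Real.log_nonneg (one_le_prod a)
  have hpos : ∀ σ ∈ (Finset.univ.filter fun σ : R →+* L => σ a ≠ 0), 0 < ‖embC (σ a)‖ := by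
    intro σ hσ
    simpa using hσ
  rw [Real.log_prod (fun σ hσ => (hpos σ hσ).ne')] at h1
  have h2 := Finset.sum_le_sum (fun σ hσ => Real.log_le_sub_one_of_pos (hpos σ hσ))
  rw [Finset.sum_sub_distrib] at h2
  linarith

/-- orthogonal decomposition of a root of unity -/
lemma nilp_mul {R : Type*} [CommRing R] [Module.Finite ℤ R] [Module.IsTorsionFree ℤ R]
    [Fintype (R →+* L)]
    (x y : R) (hu : IsOfFinOrder (x + y))
    (hxy : ∑ σ : R →+* L, embC (σ x) * (starRingEnd ℂ) (embC (σ y)) = 0) : IsNilpotent (x * y) := by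
  classical
  apply nilp_of_hom
  by_contra! hne
  obtain ⟨σ₀, hσ₀⟩ := hne
  have hn : ∀ σ : R →+* L, ‖embC (σ x) + embC (σ y)‖ = 1 := by
    intro σ
    rw [← map_add, ← map_add]
    exact IsOfFinOrder.norm_eq_one
      (MonoidHom.isOfFinOrder (embC.toMonoidHom.comp σ.toMonoidHom) hu)
  have hsum : ∑ σ : R →+* L, (‖embC (σ x)‖ ^ 2 + ‖embC (σ y)‖ ^ 2) = ∑ σ : R →+* L, (1 : ℝ) := by
    have h1 : ∀ σ : R →+* L, (1:ℝ) = ‖embC (σ x)‖ ^ 2 + ‖embC (σ y)‖ ^ 2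
        + 2 * (embC (σ x) * (starRingEnd ℂ) (embC (σ y))).re := by
      intro σ
      have := hn σ
      have h2 := Complex.normSq_add (embC (σ x)) (embC (σ y))
      rw [Complex.normSq_eq_norm_sq, Complex.normSq_eq_norm_sq, Complex.normSq_eq_norm_sq, this]
        at h2
      linarith
    rw [Finset.sum_congr rfl (fun σ _ => h1 σ), Finset.sum_add_distrib (f := fun σ : R →+* L => ‖embC (σ x)‖ ^ 2 + ‖embC (σ y)‖ ^ 2), ← Finset.mul_sum,
      ← Complex.re_sum, hxy]
    simp
  have hpt : ∀ σ : R →+* L, (if σ (x * y) ≠ 0 then 2 * ‖embC (σ (x * y))‖ else 1)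
      ≤ ‖embC (σ x)‖ ^ 2 + ‖embC (σ y)‖ ^ 2 := by
    intro σ
    split_ifs with h
    · rw [map_mul, map_mul, norm_mul]
      nlinarith [sq_nonneg (‖embC (σ x)‖ - ‖embC (σ y)‖)]
    · push Not at h
      have := hn σ
      rw [map_mul, mul_eq_zero] at h
      rcases h with h | h <;> rw [h] at this ⊢ <;> simp at this ⊢ <;> simp [this]
  have h3 := Finset.sum_le_sum (fun σ (_ : σ ∈ Finset.univ) => hpt σ)
  rw [hsum, Finset.sum_ite, ← Finset.mul_sum] at h3
  have h4 := card_le_sum (x * y)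
  rw [← Finset.sum_filter_add_sum_filter_not Finset.univ (fun σ : R →+* L => σ (x * y) ≠ 0)] at h3
  have h5 : (0:ℝ) < ∑ σ : R →+* L with σ (x * y) ≠ 0, (1:ℝ) := by
    apply Finset.sum_pos
    · intros; norm_num
    · exact ⟨σ₀, by simpa using hσ₀⟩
  linarith

lemma nilp_or {R : Type*} [CommRing R] (hconn : ∀ e : R, IsIdempotentElem e → e = 0 ∨ e = 1)
    (x y : R) (hu : IsUnit (x + y)) (h : IsNilpotent (x * y)) : IsNilpotent x ∨ IsNilpotent y := by
  obtain ⟨u, hu⟩ := hu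
  let π := Ideal.Quotient.mk (nilradical R)
  have hπ : ∀ z, π z = 0 ↔ IsNilpotent z := fun z => by
    rw [Ideal.Quotient.eq_zero_iff_mem, mem_nilradical]
  have hid : IsIdempotentElem (π (x * ↑u⁻¹)) := by
    have : π ((x * y) * (↑u⁻¹ * ↑u⁻¹)) = 0 := by rw [map_mul, (hπ _).2 h, zero_mul]
    have h2 : (x * y) * (↑u⁻¹ * ↑u⁻¹ : R) = x * ↑u⁻¹ - (x * ↑u⁻¹) * (x * ↑u⁻¹) := by
      have h3 : y = u - x := by rw [hu]; ring
      have h4 : (u : R) * ↑u⁻¹ = 1 := by simp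
      rw [h3]; linear_combination x * ↑u⁻¹ * h4
    rw [h2, map_sub, sub_eq_zero, map_mul] at this
    exact this.symm
  obtain ⟨e, he, hee⟩ := exists_isIdempotentElem_eq_of_ker_isNilpotent π
    (fun z hz => (hπ z).1 hz) _ ⟨_, rfl⟩ hid
  rcases hconn e he with rfl | rfl
  · left
    rw [map_zero] at hee
    rw [← hπ]
    have : x = (x * ↑u⁻¹) * u := by simp
    rw [this, map_mul, ← hee, zero_mul]
  · right
    rw [map_one] at hee
    rw [← hπ]
    have : y = u - (x * ↑u⁻¹) * u := by rw [mul_assoc, Units.inv_mul, hu]; ring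
    rw [this, map_sub, map_mul, ← hee, one_mul, sub_self]

/-- a unipotent root of unity is trivial -/
lemma eq_of_nilp {R : Type*} [CommRing R] [Module.IsTorsionFree ℤ R] (v w : R)
    (hv : IsOfFinOrder v) (hw : IsOfFinOrder w) (h : IsNilpotent (v - w)) : v = w := by
  obtain ⟨n, hn, hvn⟩ := isOfFinOrder_iff_pow_eq_one.mp hv
  obtain ⟨m, hm, hwm⟩ := isOfFinOrder_iff_pow_eq_one.mp hw
  set d := w - v with hd
  have hdn : IsNilpotent d := by rw [hd, ← neg_sub]; exact h.neg
  have hN : (n * m : ℕ) ≠ 0 := by positivity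
  have hvN : v ^ (n * m) = 1 := by rw [pow_mul, hvn, one_pow]
  have hwN : w ^ (n * m) = 1 := by rw [mul_comm, pow_mul, hwm, one_pow]
  generalize n * m = N at *
  obtain ⟨c, hc⟩ := Polynomial.powAddExpansion v d N
  have hw2 : v + d = w := by rw [hd]; ring
  rw [hw2, hwN, hvN] at hc
  have hvp : v ^ (N - 1) * v = 1 := by rw [← pow_succ, Nat.sub_add_cancel (by lia), hvN]
  have key : ∀ k, d ^ (k + 1) = 0 → d = 0 := by
    intro k
    induction k with
    | zero => simp
    | succ k ih =>
      intro hk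
      apply ih
      have h1 : (N : R) * d ^ (k + 1) = 0 := by
        linear_combination (-(d ^ k * v)) * hc - v * c * hk - N * d ^ (k + 1) * hvp
      have h2 : (N : ℤ) • d ^ (k + 1) = 0 := by rw [zsmul_eq_mul]; exact_mod_cast h1
      exact (smul_eq_zero_iff_right (by exact_mod_cast hN)).1 h2
  obtain ⟨k, hk⟩ := hdn
  have := key k (by rw [pow_succ, hk, zero_mul])
  rw [hd, sub_eq_zero] at this
  exact this.symm

section MA
variable {B H : Type*} [CommRing B] [CommGroup H]

noncomputable def twist (χ : H →* Lˣ) (σ : MonoidAlgebra B H →+* L) : MonoidAlgebra B H →+* L :=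
  MonoidAlgebra.liftNCRingHom (σ.comp MonoidAlgebra.singleOneRingHom)
    (((Units.coeHom L).comp χ) * ((σ : MonoidAlgebra B H →* L).comp (MonoidAlgebra.of B H)))
    (fun _ _ => Commute.all _ _)

lemma twist_single (χ : H →* Lˣ) (σ : MonoidAlgebra B H →+* L) (h : H) (b : B) :
    twist χ σ (MonoidAlgebra.single h b) = χ h * σ (MonoidAlgebra.single h b) := by
  have : MonoidAlgebra.single h b = MonoidAlgebra.single 1 b * MonoidAlgebra.single h (1 : B) := by
    simp [MonoidAlgebra.single_mul_single]
  rw [this, map_mul σ, ← this, twist, MonoidAlgebra.liftNCRingHom_single]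
  simp
  ring

lemma twist_twist (χ ψ : H →* Lˣ) (hχ : χ * ψ = 1) (σ : MonoidAlgebra B H →+* L) :
    twist χ (twist ψ σ) = σ := by
  have hh : ∀ h, ((χ h : L)) * (ψ h : L) = 1 := fun h => by
    have := DFunLike.congr_fun hχ h
    rw [← Units.val_mul, ← MonoidHom.mul_apply, this]; rfl
  apply MonoidAlgebra.ringHom_ext <;> intro r <;> rw [twist_single, twist_single, ← mul_assoc, hh, one_mul]

lemma orth [Finite H] [Fintype (MonoidAlgebra B H →+* L)] (h k : H) (hk : h ≠ k) (b c : B) :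
    ∑ σ : MonoidAlgebra B H →+* L, embC (σ (MonoidAlgebra.single h b)) *
      (starRingEnd ℂ) (embC (σ (MonoidAlgebra.single k c))) = 0 := by
  have : NeZero (Monoid.exponent H) := ⟨Monoid.exponent_ne_zero_of_finite⟩
  obtain ⟨χ, hχ⟩ := CommGroup.exists_apply_ne_one_of_hasEnoughRootsOfUnity H L
    (a := h * k⁻¹) (by simpa [mul_inv_eq_one] using hk)
  set S := ∑ σ : MonoidAlgebra B H →+* L, embC (σ (MonoidAlgebra.single h b)) *
      (starRingEnd ℂ) (embC (σ (MonoidAlgebra.single k c))) with hS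
  let e : (MonoidAlgebra B H →+* L) ≃ (MonoidAlgebra B H →+* L) :=
    ⟨twist χ, twist χ⁻¹, twist_twist _ _ (inv_mul_cancel χ), twist_twist _ _ (mul_inv_cancel χ)⟩
  have hk1 : IsOfFinOrder (embC (χ k)) :=
    MonoidHom.isOfFinOrder ((embC.toMonoidHom.comp (Units.coeHom L)).comp χ) (isOfFinOrder_of_finite k)
  have hk2 : (starRingEnd ℂ) (embC (χ k)) = (embC (χ k))⁻¹ := by
    rw [Complex.inv_eq_conj hk1.norm_eq_one]
  have h1 : S = (embC (χ h) * (embC (χ k))⁻¹) * S := by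
    conv_lhs => rw [hS, ← Equiv.sum_comp e]
    rw [hS, Finset.mul_sum]
    refine Finset.sum_congr rfl fun σ _ => ?_
    change embC (twist χ σ _) * (starRingEnd ℂ) (embC (twist χ σ _)) = _
    rw [twist_single, twist_single, map_mul, map_mul, map_mul, hk2]
    ring
  have h2 : embC (χ h) * (embC (χ k))⁻¹ ≠ 1 := by
    intro h3
    apply hχ
    rw [← map_inv₀, ← map_mul, ← map_one embC] at h3
    have := embC.injective h3
    ext
    simpa using this
  by_contra hS0
  exact h2 (mul_right_cancel₀ hS0 (by rw [one_mul]; exact h1.symm))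

lemma single_of_unit [Finite H] [Module.Finite ℤ (MonoidAlgebra B H)]
    [Module.IsTorsionFree ℤ (MonoidAlgebra B H)] (hnt : Nontrivial (MonoidAlgebra B H))
    (hconn : ∀ e : MonoidAlgebra B H, IsIdempotentElem e → e = 0 ∨ e = 1)
    (u : MonoidAlgebra B H) (hu : IsOfFinOrder u) :
    ∃ h b, u = MonoidAlgebra.single h b := by
  classical
  have : Fintype (MonoidAlgebra B H →+* L) := Fintype.ofFinite _
  have : Fintype H := Fintype.ofFinite _
  have hsum : u = ∑ h : H, MonoidAlgebra.single h (u.coeff h) := by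
    conv_lhs => rw [← MonoidAlgebra.sum_coeff_single u]
    rw [Finsupp.sum_fintype]; simp
  have huu : IsUnit u := hu.isUnit
  have hdec : ∀ h : H, IsNilpotent (MonoidAlgebra.single h (u.coeff h)) ∨
      IsNilpotent (u - MonoidAlgebra.single h (u.coeff h)) := by
    intro h
    apply nilp_or hconn
    · simpa using huu
    · apply nilp_mul
      · simpa using hu
      · have : u - MonoidAlgebra.single h (u.coeff h) =
            ∑ k ∈ Finset.univ.erase h, MonoidAlgebra.single k (u.coeff k) := by
          rw [sub_eq_iff_eq_add, Finset.sum_erase_add _ _ (Finset.mem_univ h)]; exact hsum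
        simp only [this, map_sum, Finset.mul_sum]
        rw [Finset.sum_comm]
        apply Finset.sum_eq_zero
        intro k hk
        exact orth h k (Finset.ne_of_mem_erase hk).symm _ _
  have hex : ∃ h : H, IsNilpotent (u - MonoidAlgebra.single h (u.coeff h)) := by
    by_contra! hno
    have hall : ∀ h, IsNilpotent (MonoidAlgebra.single h (u.coeff h)) := fun h =>
      (hdec h).resolve_right (hno h)
    have : u ∈ nilradical (MonoidAlgebra B H) := by
      rw [hsum]; exact Ideal.sum_mem _ fun h _ => hall h
    exact huu.not_isNilpotent this
  obtain ⟨h, hh⟩ := hex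
  let ε : MonoidAlgebra B H →+* MonoidAlgebra B H :=
    MonoidAlgebra.liftNCRingHom MonoidAlgebra.singleOneRingHom 1 (fun _ _ => Commute.all _ _)
  have hε1 : ∀ k b, ε (MonoidAlgebra.single k b) = MonoidAlgebra.single 1 b := by
    intro k b; simp [ε, MonoidAlgebra.liftNCRingHom_single]
  have hε2 : ∀ z, ∃ b, ε z = MonoidAlgebra.single 1 b := by
    intro z
    induction z using MonoidAlgebra.induction_linear with
    | zero => exact ⟨0, by simp⟩
    | add x y hx hy =>
      obtain ⟨b, hb⟩ := hx
      obtain ⟨c, hc⟩ := hy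
      exact ⟨b + c, by rw [map_add, hb, hc, MonoidAlgebra.single_add]⟩
    | single m r => exact ⟨r, hε1 _ _⟩
  set t : MonoidAlgebra B H := MonoidAlgebra.single h⁻¹ 1 with ht
  have hto : IsOfFinOrder t := MonoidHom.isOfFinOrder (MonoidAlgebra.of B H) (isOfFinOrder_of_finite h⁻¹)
  have hvo : IsOfFinOrder (u * t) := hu.mul hto
  have hv : IsNilpotent (u * t - MonoidAlgebra.single 1 (u.coeff h)) := by
    have : u * t - MonoidAlgebra.single 1 (u.coeff h) =
        (u - MonoidAlgebra.single h (u.coeff h)) * t := by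
      rw [sub_mul, ht, MonoidAlgebra.single_mul_single]; simp
    rw [this]
    exact (Commute.all _ _).isNilpotent_mul_right hh
  have hv2 := hv.map ε
  rw [map_sub, hε1] at hv2
  have hv3 : IsNilpotent (u * t - ε (u * t)) := by
    have := (Commute.all _ _).isNilpotent_sub hv hv2
    simpa using this
  have heq : u * t = ε (u * t) := eq_of_nilp _ _ hvo (MonoidHom.isOfFinOrder (ε : MonoidAlgebra B H →* MonoidAlgebra B H) hvo) hv3
  obtain ⟨b, hb⟩ := hε2 (u * t)
  refine ⟨h, b, ?_⟩
  have : u = (u * t) * MonoidAlgebra.single h 1 := by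
    rw [mul_assoc, ht, MonoidAlgebra.single_mul_single]; simp [← MonoidAlgebra.one_def]
  rw [this, heq, hb, MonoidAlgebra.single_mul_single]; simp

end MA

end GpRgAux

/-- Let `R` be a connected order and `(A,G), (B,H) ∈ GpRg(R)` with
`(B,H) ≤ (A,G)`, i.e. `H ⊆ G` and `A ⊆ B`. Let `J = G ∩ μ(B)`. Then the multiplication map
`J × H → G` is a group isomorphism and the natural ring homomorphism `A[J] → B` is an
isomorphism. -/
theorem gpRg_intermediate_factorization
    {R : Type u} [CommRing R] [Module.Free ℤ R] [Module.Finite ℤ R]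
    (hconn : IsConnectedRing R)
    (A B : Subring R) (G H : Subgroup Rˣ)
    (hAG : IsGpRg A G) (hBH : IsGpRg B H) (hHG : H ≤ G) (hAB : A ≤ B) :
    (Function.Injective
        (fun p : (G ⊓ torsionUnitsIn B : Subgroup Rˣ) × H => ((p.1 : Rˣ) * (p.2 : Rˣ) : Rˣ)) ∧
      Set.range
        (fun p : (G ⊓ torsionUnitsIn B : Subgroup Rˣ) × H => ((p.1 : Rˣ) * (p.2 : Rˣ) : Rˣ)) =
        (G : Set Rˣ)) ∧
    (Function.Injective (gpRgHom A (G ⊓ torsionUnitsIn B)) ∧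
      Set.range (gpRgHom A (G ⊓ torsionUnitsIn B)) = (B : Set R)) := by
  classical
  obtain ⟨hnt, hidem⟩ := hconn
  have gs : ∀ (A : Subring R) (G : Subgroup Rˣ) (g : G) (a : A),
      gpRgHom A G (MonoidAlgebra.single g a) = (a : R) * ((g : Rˣ) : R) := by
    intro A G g a
    rw [gpRgHom, MonoidAlgebra.liftNCRingHom_single]; rfl
  -- finiteness of `G`
  have hGfin : Finite G := by
    have hli : LinearIndependent ℤ (fun g : G => ((g : Rˣ) : R)) := by
      rw [linearIndependent_iff']
      intro s c hc g hg
      have h1 : gpRgHom A G (∑ g ∈ s, MonoidAlgebra.single g ((c g : ℤ) : A)) = 0 := by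
        rw [map_sum, ← hc]
        refine Finset.sum_congr rfl fun k _ => ?_
        rw [gs, zsmul_eq_mul]; simp
      have h2 := hAG.1 (h1.trans (map_zero _).symm)
      have h3 := congrArg (fun z : MonoidAlgebra A G => z.coeff g) h2
      have h4 : ((c g : ℤ) : A) = 0 := by
        simpa [MonoidAlgebra.coeff_sum, Finsupp.finsetSum_apply, Finsupp.single_apply, hg] using h3
      have h5 : (c g) • (1 : R) = 0 := by
        rw [zsmul_eq_mul, mul_one]
        have := congrArg (fun z : A => (z : R)) h4
        simpa using this
      exact (smul_eq_zero_iff_left one_ne_zero).1 h5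
    exact hli.finite
  have hHfin : Finite H := Finite.of_injective (Subgroup.inclusion hHG)
    (Subgroup.inclusion_injective hHG)
  let φ : MonoidAlgebra B H ≃+* R := RingEquiv.ofBijective (gpRgHom B H) hBH
  have hφs : ∀ h b, φ (MonoidAlgebra.single h b) = (b : R) * ((h : Rˣ) : R) := gs B H
  have i1 : Module.Finite ℤ (MonoidAlgebra B H) :=
    Module.Finite.equiv φ.symm.toAddEquiv.toIntLinearEquiv
  have i2 : Module.IsTorsionFree ℤ (MonoidAlgebra B H) :=
    Function.Injective.moduleIsTorsionFree φ φ.injective (fun c x => map_zsmul φ c x)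
  have i3 : Nontrivial (MonoidAlgebra B H) := φ.toEquiv.nontrivial
  have i4 : ∀ e : MonoidAlgebra B H, IsIdempotentElem e → e = 0 ∨ e = 1 := by
    intro e he
    have := hidem (φ e) (he.map φ)
    simpa using this
  -- the augmentation
  let ε : R →+* R := (MonoidAlgebra.liftNCRingHom B.subtype (1 : H →* R)
    (fun _ _ => Commute.all _ _)).comp (φ.symm : R →+* MonoidAlgebra B H)
  have hε : ∀ (b : R) (_ : b ∈ B) (h : Rˣ) (_ : h ∈ H), ε (b * (h : R)) = b := by
    intro b hb h hh
    have : φ.symm (b * (h : R)) = MonoidAlgebra.single (⟨h, hh⟩ : H) (⟨b, hb⟩ : B) := by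
      rw [RingEquiv.symm_apply_eq, hφs]
    simp [ε, this, MonoidAlgebra.liftNCRingHom_single]
  -- the key decomposition
  have key : ∀ g ∈ G, ∃ j ∈ G ⊓ torsionUnitsIn B, ∃ h ∈ H, j * h = g := by
    intro g hg
    have hgo : IsOfFinOrder g :=
      G.subtype.isOfFinOrder (isOfFinOrder_of_finite (⟨g, hg⟩ : G))
    have huo : IsOfFinOrder (φ.symm (g : R)) :=
      MonoidHom.isOfFinOrder ((φ.symm : R →* MonoidAlgebra B H).comp (Units.coeHom R)) hgo
    obtain ⟨h, b, hb⟩ := GpRgAux.single_of_unit i3 i4 _ huo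
    rw [RingEquiv.symm_apply_eq, hφs] at hb
    have hin : g * (h : Rˣ)⁻¹ ∈ G := G.mul_mem hg (G.inv_mem (hHG h.2))
    refine ⟨g * (h : Rˣ)⁻¹, ⟨hin, ?_, ?_⟩, h, h.2, by simp⟩
    · exact G.subtype.isOfFinOrder (isOfFinOrder_of_finite (⟨_, hin⟩ : G))
    · have : ((g * (h : Rˣ)⁻¹ : Rˣ) : R) = b := by
        rw [Units.val_mul, hb, mul_assoc, Units.mul_inv, mul_one]
      rw [this]; exact b.2
  refine ⟨⟨?_, ?_⟩, ?_, ?_⟩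
  · rintro ⟨⟨j, hj⟩, ⟨h, hh⟩⟩ ⟨⟨j', hj'⟩, ⟨h', hh'⟩⟩ heq
    have heq : j * h = j' * h' := heq
    have h1 : (j : R) * (h : R) = (j' : R) * (h' : R) := by
      rw [← Units.val_mul, heq, Units.val_mul]
    have h2 : j = j' := by
      ext
      rw [← hε j hj.2.2 h hh, h1, hε j' hj'.2.2 h' hh']
    subst h2
    have h3 : h = h' := mul_left_cancel heq
    subst h3
    rfl
  · ext g
    constructor
    · rintro ⟨⟨⟨j, hj⟩, ⟨h, hh⟩⟩, rfl⟩
      exact G.mul_mem hj.1 (hHG hh)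
    · intro hg
      obtain ⟨j, hj, h, hh, rfl⟩ := key g hg
      exact ⟨⟨⟨j, hj⟩, ⟨h, hh⟩⟩, rfl⟩
  · have hcomp : ∀ z, gpRgHom A (G ⊓ torsionUnitsIn B) z =
        gpRgHom A G (MonoidAlgebra.mapDomain (Subgroup.inclusion inf_le_left) z) := by
      intro z
      induction z using MonoidAlgebra.induction_linear with
      | zero => simp
      | add x y hx hy => rw [map_add, hx, hy, MonoidAlgebra.mapDomain_add, map_add]
      | single m r => rw [MonoidAlgebra.mapDomain_single, gs, gs]; rfl
    intro x y hxy
    rw [hcomp, hcomp] at hxy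
    exact MonoidAlgebra.mapDomain_injective (Subgroup.inclusion_injective inf_le_left) (hAG.1 hxy)
  · apply Set.Subset.antisymm
    · rintro _ ⟨z, rfl⟩
      induction z using MonoidAlgebra.induction_linear with
      | zero => simp
      | add x y hx hy => rw [map_add]; exact B.add_mem hx hy
      | single m r => rw [gs]; exact B.mul_mem (hAB r.2) m.2.2.2
    · intro b hb
      have hb1 : ε b = b := by simpa using hε b hb 1 H.one_mem
      obtain ⟨z, hz⟩ := hAG.2 b
      have hall : ∀ z, ε (gpRgHom A G z) ∈ (gpRgHom A (G ⊓ torsionUnitsIn B)).range := by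
        intro z
        induction z using MonoidAlgebra.induction_linear with
        | zero => rw [map_zero, map_zero]; exact zero_mem _
        | add x y hx hy => rw [map_add, map_add]; exact add_mem hx hy
        | single m r =>
          obtain ⟨j, hj, h, hh, hjh⟩ := key m m.2
          rw [gs, ← hjh, Units.val_mul, ← mul_assoc, hε _ (B.mul_mem (hAB r.2) hj.2.2) h hh]
          exact ⟨MonoidAlgebra.single ⟨j, hj⟩ r, gs _ _ _ _⟩
      have := hall z
      rw [hz, hb1] at this
      exact this
end

section
/- Let R be a connected reduced order and let (Γ, (R_γ)_{γ∈Γ}) be a universal grading of R. Then the groups μ(R) and Γ are finite, every root of unity of R lies in R_γ for a unique γ ∈ Γ, and the map d: μ(R) → Γ sending each root of unity ζ to the unique γ with ζ ∈ R_γ is a group homomorphism. -/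
set_option linter.unusedSectionVars false

section Embeddings

variable {R : Type u} [CommRing R] [Module.Free ℤ R] [Module.Finite ℤ R]
variable {K : Type} [Field K] [CharZero K] [IsAlgClosed K] [Algebra.IsAlgebraic ℚ K]

/-- There are finitely many ring homomorphisms from an order to a field. -/
theorem finite_embeddings (R : Type u) [CommRing R] [Module.Free ℤ R] [Module.Finite ℤ R]
    (K : Type) [Field K] [CharZero K] : Finite (R →+* K) := by
  classical
  let b := Module.Free.chooseBasis ℤ R
  have hint : ∀ i, IsIntegral ℤ (b i) := fun i => Algebra.IsIntegral.isIntegral _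
  have hmem : ∀ (s : R →+* K) i, s (b i) ∈
      (((minpoly ℤ (b i)).map (Int.castRingHom K)).roots.toFinset) := by
    intro s i
    rw [Multiset.mem_toFinset, Polynomial.mem_roots]
    · rw [Polynomial.IsRoot, Polynomial.eval_map]
      have h := minpoly.aeval ℤ (b i)
      have h2 := congrArg s h
      rw [Polynomial.aeval_def, Polynomial.hom_eval₂, map_zero] at h2
      rw [← h2]
      congr 1
      exact RingHom.ext_int _ _
    · exact ((minpoly.monic (hint i)).map _).ne_zero
  let F : (R →+* K) → (∀ i, {y // y ∈ (((minpoly ℤ (b i)).map (Int.castRingHom K)).roots.toFinset)}) :=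
    fun s i => ⟨s (b i), hmem s i⟩
  refine Finite.of_injective F ?_
  intro s t h
  have h1 : s.toAddMonoidHom.toIntLinearMap = t.toAddMonoidHom.toIntLinearMap := by
    apply b.ext
    intro i
    exact congrArg Subtype.val (congrFun h i)
  ext x
  exact LinearMap.congr_fun h1 x

/-- Ring homomorphisms to `K` separate points of a reduced order. -/
theorem exists_embedding_ne_zero [IsReduced R] {z : R} (hz : z ≠ 0) :
    ∃ s : R →+* K, s z ≠ 0 := by
  let S : Submonoid R := (nonZeroDivisors ℤ).map (Int.castRingHom R) ⊔ Submonoid.powers z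
  have hS : Disjoint ((⊥ : Ideal R) : Set R) (S : Set R) := by
    rw [Set.disjoint_left]
    intro x hx hxS
    have hx0 : x = 0 := hx
    subst hx0
    obtain ⟨a, ha, c, hc, hac⟩ := Submonoid.mem_sup.1 hxS
    obtain ⟨n, hn, rfl⟩ := ha
    obtain ⟨k, rfl⟩ := hc
    have hn0 : n ≠ 0 := nonZeroDivisors.ne_zero hn
    have h1 : n • (z ^ k) = 0 := by
      rw [zsmul_eq_mul]; exact hac
    rcases smul_eq_zero.1 h1 with h | h
    · exact hn0 h
    · exact hz (IsReduced.eq_zero z ⟨k, h⟩)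
  obtain ⟨p, hp, -, hpS⟩ := Ideal.exists_le_prime_disjoint ⊥ S hS
  have hzp : z ∉ p := fun h => Set.disjoint_left.1 hpS h
    (Submonoid.mem_sup_right (Submonoid.mem_powers z))
  have : Algebra.IsIntegral ℤ (R ⧸ p) := inferInstance
  have : IsDomain (R ⧸ p) := Ideal.Quotient.isDomain p
  have hinj : CharZero (R ⧸ p) := by
    refine charZero_of_inj_zero ?_
    intro n hn
    by_contra hn0
    have h1 : ((n : R)) ∈ p := by
      rw [← Ideal.Quotient.eq_zero_iff_mem]; simpa using hn
    refine Set.disjoint_left.1 hpS h1 (Submonoid.mem_sup_left ⟨(n : ℤ), ?_, by simp⟩)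
    exact mem_nonZeroDivisors_of_ne_zero (by exact_mod_cast hn0)
  let f : (R ⧸ p) →ₐ[ℤ] K := IsAlgClosed.lift
  have hf : ∀ y : R ⧸ p, f y = 0 → y = 0 := by
    have hk : RingHom.ker f.toRingHom = ⊥ := by
      apply Ideal.eq_bot_of_comap_eq_bot (R := ℤ)
      rw [eq_bot_iff]
      intro n hn
      have h2 : f (algebraMap ℤ (R ⧸ p) n) = 0 := hn
      rw [AlgHom.commutes] at h2
      simpa using h2
    intro y hy
    have h3 : y ∈ RingHom.ker f.toRingHom := hy
    rw [hk] at h3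
    exact h3
  refine ⟨f.toRingHom.comp (Ideal.Quotient.mk p), fun h => hzp ?_⟩
  rw [← Ideal.Quotient.eq_zero_iff_mem]
  exact hf _ h

/-- The product of the non-zero conjugates of an element of an order has norm at least one. -/
theorem one_le_prod_norm (i : K →+* ℂ) [Fintype (R →+* K)] [DecidableEq K] (z : R) :
    1 ≤ ∏ s ∈ Finset.univ.filter (fun s : R →+* K => s z ≠ 0), ‖i (s z)‖ := by
  set N : K := ∏ s ∈ Finset.univ.filter (fun s : R →+* K => s z ≠ 0), s z with hN
  have hN0 : N ≠ 0 := by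
    rw [hN, Finset.prod_ne_zero_iff]
    intro s hs
    exact (Finset.mem_filter.1 hs).2
  have hint : IsIntegral ℤ N := by
    apply IsIntegral.prod
    intro s _
    exact (Algebra.IsIntegral.isIntegral (R := ℤ) z).map s.toIntAlgHom
  have : IsAlgClosure ℚ K := ⟨inferInstance, inferInstance⟩
  have : IsGalois ℚ K := {}
  have hfix : ∀ f : Gal(K/ℚ), f N = N := by
    intro f
    rw [hN, map_prod]
    refine Finset.prod_bij (fun s _ => (f : K →+* K).comp s) ?_ ?_ ?_ ?_
    · intro s hs
      simpa using hs
    · intro s _ t _ h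
      ext x
      have := RingHom.congr_fun h x
      simpa using this
    · intro t ht
      refine ⟨(f.symm : K →+* K).comp t, by simpa using ht, ?_⟩
      ext x
      simp
    · intro s _
      rfl
  obtain ⟨q, hq⟩ := (InfiniteGalois.mem_range_algebraMap_iff_fixed N).2 hfix
  have hqi : IsIntegral ℤ q := by
    rw [← hq] at hint
    exact (isIntegral_algebraMap_iff (algebraMap ℚ K).injective).1 hint
  obtain ⟨m, hm⟩ := IsIntegrallyClosed.isIntegral_iff.1 hqi
  have hNm : N = (m : K) := by
    rw [← hq, ← hm]; simp
  have hm0 : m ≠ 0 := by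
    rintro rfl
    exact hN0 (by simpa using hNm)
  have h1 : ∏ s ∈ Finset.univ.filter (fun s : R →+* K => s z ≠ 0), ‖i (s z)‖ = ‖i N‖ := by
    rw [hN, map_prod, norm_prod]
  rw [h1, hNm, map_intCast, Complex.norm_intCast]
  exact_mod_cast Int.one_le_abs hm0

/-- If `x + y = 1` and `x`, `y` are orthogonal then `x * y = 0`. -/
theorem mul_eq_zero_of_orthogonal [IsReduced R] (i : K →+* ℂ) [Fintype (R →+* K)] {x y : R}
    (hxy : x + y = 1)
    (horth : ∑ s : R →+* K, i (s x) * (starRingEnd ℂ) (i (s y)) = 0) : x * y = 0 := by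
  classical
  set P := Finset.univ.filter (fun s : R →+* K => s (x * y) ≠ 0) with hP
  have hsum : ∀ s : R →+* K, i (s x) + i (s y) = 1 := by
    intro s
    rw [← map_add, ← map_add, hxy, map_one, map_one]
  have hre : ∑ s : R →+* K, (‖i (s x)‖ ^ 2 + ‖i (s y)‖ ^ 2 - 1) = 0 := by
    have h2 : ∀ s : R →+* K, ‖i (s x)‖ ^ 2 + ‖i (s y)‖ ^ 2 - 1
        = -2 * (i (s x) * (starRingEnd ℂ) (i (s y))).re := by
      intro s
      have h3 : ‖i (s x) + i (s y)‖ ^ 2 = 1 := by rw [hsum]; simp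
      rw [Complex.sq_norm, Complex.normSq_add] at h3
      rw [Complex.sq_norm, Complex.sq_norm]
      linarith
    rw [Finset.sum_congr rfl (fun s _ => h2 s), ← Finset.mul_sum, ← Complex.re_sum, horth]
    simp
  have hsplit : ∑ s ∈ P, (‖i (s x)‖ ^ 2 + ‖i (s y)‖ ^ 2 - 1) = 0 := by
    rw [← hre]
    apply Finset.sum_subset (Finset.subset_univ _)
    intro s _ hs
    have h0 : s x * s y = 0 := by
      by_contra h
      exact hs (Finset.mem_filter.2 ⟨Finset.mem_univ _, by rwa [map_mul]⟩)
    have := hsum s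
    rcases mul_eq_zero.1 h0 with h | h
    · rw [h, map_zero, zero_add] at this
      rw [h, this]; simp
    · rw [h, map_zero, add_zero] at this
      rw [h, this]; simp
  have hterm : ∀ s ∈ P, 1 + 2 * Real.log ‖i (s (x * y))‖ ≤
      ‖i (s x)‖ ^ 2 + ‖i (s y)‖ ^ 2 - 1 := by
    intro s hs
    have hne : s (x * y) ≠ 0 := (Finset.mem_filter.1 hs).2
    have hpos : 0 < ‖i (s (x * y))‖ := by
      rw [norm_pos_iff]; exact (map_ne_zero i).2 hne
    have h4 := Real.log_le_sub_one_of_pos hpos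
    have h5 : ‖i (s (x * y))‖ = ‖i (s x)‖ * ‖i (s y)‖ := by
      rw [map_mul, map_mul, norm_mul]
    have h6 := two_mul_le_add_sq ‖i (s x)‖ ‖i (s y)‖
    nlinarith
  have hle := Finset.sum_le_sum hterm
  rw [hsplit, Finset.sum_add_distrib, ← Finset.mul_sum, ← Real.log_prod] at hle
  · have h7 := one_le_prod_norm (K := K) i (x * y)
    have h8 := Real.log_nonneg h7
    rw [← hP] at h8
    have h9 : (P.card : ℝ) ≤ 0 := by
      simp only [Finset.sum_const, nsmul_eq_mul, mul_one] at hle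
      linarith
    have h10 : P = ∅ := by
      rw [← Finset.card_eq_zero]
      exact_mod_cast le_antisymm h9 (by positivity)
    by_contra hne
    obtain ⟨s, hs⟩ := exists_embedding_ne_zero (K := K) hne
    have : s ∈ P := Finset.mem_filter.2 ⟨Finset.mem_univ _, hs⟩
    rw [h10] at this
    simp at this
  · intro s hs
    exact norm_ne_zero_iff.2 ((map_ne_zero i).2 (Finset.mem_filter.1 hs).2)

theorem norm_torsion (i : K →+* ℂ) (s : R →+* K) (ζ : CommGroup.torsion Rˣ) :
    ‖i (s ((ζ : Rˣ) : R))‖ = 1 := by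
  obtain ⟨n, hn, h⟩ := (isOfFinOrder_iff_pow_eq_one).1 ((CommGroup.mem_torsion _).1 ζ.2)
  apply Complex.norm_eq_one_of_pow_eq_one (n := n) _ hn.ne'
  rw [← map_pow, ← map_pow, ← Units.val_pow_eq_pow_val, h]
  simp

/-- The group of roots of unity of a reduced order is finite. -/
theorem finite_torsion [IsReduced R] (i : K →+* ℂ) : Finite (CommGroup.torsion Rˣ) := by
  classical
  have := finite_embeddings R K
  have := Fintype.ofFinite (R →+* K)
  let b := Module.Free.chooseBasis ℤ R
  let F : CommGroup.torsion Rˣ → (Module.Free.ChooseBasisIndex ℤ R → ZMod 3) :=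
    fun ζ j => ((b.repr ((ζ : Rˣ) : R) j : ℤ) : ZMod 3)
  refine Finite.of_injective F ?_
  intro ζ ξ h
  have hdvd : ∀ j, ∃ c : ℤ, b.repr (((ζ : Rˣ) : R) - ((ξ : Rˣ) : R)) j = 3 * c := by
    intro j
    have h1 : ((b.repr ((ζ : Rˣ) : R) j : ℤ) : ZMod 3) = ((b.repr ((ξ : Rˣ) : R) j : ℤ) : ZMod 3) :=
      congrFun h j
    rw [ZMod.intCast_eq_intCast_iff_dvd_sub] at h1
    obtain ⟨c, hc⟩ := h1
    refine ⟨-c, ?_⟩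
    rw [map_sub, Finsupp.sub_apply]
    push_cast at hc
    linarith
  choose c hc using hdvd
  let w : R := ∑ j, c j • b j
  have hw : ((ζ : Rˣ) : R) - ((ξ : Rˣ) : R) = 3 * w := by
    apply b.ext_elem
    intro j
    rw [hc, show (3 : R) * w = (3 : ℤ) • w by rw [zsmul_eq_mul]; norm_num, map_smul,
      Finsupp.smul_apply, b.repr_sum_self, smul_eq_mul]
  have hw0 : w = 0 := by
    by_contra hne
    obtain ⟨s, hs⟩ := exists_embedding_ne_zero (K := K) hne
    have h1 := one_le_prod_norm (K := K) i w
    refine absurd h1 (not_le.2 ?_)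
    refine lt_of_lt_of_eq (Finset.prod_lt_prod_of_nonempty (g := fun _ => (1 : ℝ)) ?_ ?_
      ⟨s, Finset.mem_filter.2 ⟨Finset.mem_univ _, hs⟩⟩) (by simp)
    · intro t ht
      exact norm_pos_iff.2 ((map_ne_zero i).2 (Finset.mem_filter.1 ht).2)
    · intro t _
      have h2 : 3 * i (t w) = i (t ((ζ : Rˣ) : R)) - i (t ((ξ : Rˣ) : R)) := by
        rw [← map_sub, ← map_sub, hw, map_mul, map_mul, map_ofNat, map_ofNat]
      have h3 := congrArg norm h2
      have h4 := norm_sub_le (i (t ((ζ : Rˣ) : R))) (i (t ((ξ : Rˣ) : R)))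
      rw [norm_torsion, norm_torsion, ← h3, norm_mul] at h4
      norm_num at h4
      linarith
  rw [hw0, mul_zero, sub_eq_zero] at hw
  exact Subtype.ext (Units.ext hw)

end Embeddings
section Gradings

variable {R : Type u} [CommRing R] {Γ : Type v} [CommGroup Γ]

/-- Projections on the homogeneous components. -/
theorem Grading.exists_proj_s14 (g : Grading R Γ) :
    ∃ π : Γ → R →+ R, (∀ γ x, π γ x ∈ g.comp γ) ∧ (∀ γ x, x ∈ g.comp γ → π γ x = x) ∧
      (∀ γ δ x, x ∈ g.comp γ → γ ≠ δ → π δ x = 0) ∧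
      (∀ [Fintype Γ], ∀ x, ∑ γ, π γ x = x) := by
  let _ := Classical.decEq Γ
  have hI : DirectSum.IsInternal g.comp := g.isInternal
  let _ := hI.chooseDecomposition
  refine ⟨fun γ => (g.comp γ).subtype.comp ((DFinsupp.evalAddMonoidHom γ).comp
    (DirectSum.decomposeAddEquiv g.comp).toAddMonoidHom), ?_, ?_, ?_, ?_⟩
  · intro γ x
    exact SetLike.coe_mem _
  · intro γ x hx
    exact DirectSum.decompose_of_mem_same g.comp hx
  · intro γ δ x hx h
    exact DirectSum.decompose_of_mem_ne g.comp hx h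
  · intro _ x
    classical
    have h := DirectSum.sum_support_decompose g.comp x
    refine Eq.trans ?_ h
    symm
    apply Finset.sum_subset (Finset.subset_univ _)
    intro γ _ hγ
    have h0 : DirectSum.decompose g.comp x γ = 0 := by simpa using hγ
    rw [h0]; rfl

theorem Grading.eq_of_mem_s14 (g : Grading R Γ) {γ δ : Γ} {x : R} (h1 : x ∈ g.comp γ)
    (h2 : x ∈ g.comp δ) (hx : x ≠ 0) : γ = δ := by
  obtain ⟨π, -, hs, hn, -⟩ := g.exists_proj_s14
  by_contra h
  exact hx ((hs δ x h2).symm.trans (hn γ δ x h1 h))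

theorem Grading.iSup_comp (g : Grading R Γ) : ⨆ γ, g.comp γ = ⊤ := by
  let _ := Classical.decEq Γ
  have hI : DirectSum.IsInternal g.comp := g.isInternal
  let _ := hI.chooseDecomposition
  rw [eq_top_iff]
  intro x _
  refine DirectSum.Decomposition.inductionOn (ℳ := g.comp) (motive := fun x => x ∈ ⨆ γ, g.comp γ)
    (zero_mem _) ?_ ?_ x
  · intro γ m
    exact AddSubgroup.mem_iSup_of_mem γ m.2
  · intro m m' h h'
    exact add_mem h h'

theorem Grading.finite_support [Module.Finite ℤ R] (g : Grading R Γ) :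
    {γ | g.comp γ ≠ ⊥}.Finite := by
  let _ := Classical.decEq Γ
  have hI : DirectSum.IsInternal g.comp := g.isInternal
  have h1 := hI.addSubgroup_iSupIndep
  have h2 := (iSupIndep_map_orderIso_iff (AddSubgroup.toIntSubmodule (M := R))).2 h1
  have : IsNoetherian ℤ R := inferInstance
  have h3 := WellFoundedGT.finite_ne_bot_of_iSupIndep h2
  refine h3.subset ?_
  intro γ hγ h
  apply hγ
  have h4 : AddSubgroup.toIntSubmodule (g.comp γ) = ⊥ := h
  simpa using h4

/-- The trivial grading, concentrated in degree `1`. -/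
theorem exists_trivial_grading (R : Type u) [CommRing R] (E : Type v) [CommGroup E] :
    ∃ s : Grading R E, s.comp 1 = ⊤ ∧ ∀ ε, ε ≠ 1 → s.comp ε = ⊥ := by
  classical
  let c : E → AddSubgroup R := fun ε => if ε = 1 then ⊤ else ⊥
  have hc1 : c 1 = ⊤ := if_pos rfl
  have hc : ∀ ε, ε ≠ 1 → c ε = ⊥ := fun ε h => if_neg h
  refine ⟨⟨c, ?_, ?_⟩, hc1, hc⟩
  · intro γ δ x y hx hy
    by_cases hγ : γ = 1
    · by_cases hδ : δ = 1
      · rw [hγ, hδ, mul_one, hc1]; trivial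
      · rw [hc δ hδ, AddSubgroup.mem_bot] at hy
        rw [hy, mul_zero]; exact zero_mem _
    · rw [hc γ hγ, AddSubgroup.mem_bot] at hx
      rw [hx, zero_mul]; exact zero_mem _
  · let _ := Classical.decEq E
    change DirectSum.IsInternal c
    constructor
    · rw [injective_iff_map_eq_zero]
      intro a ha
      have hz : ∀ ε, ε ≠ 1 → a ε = 0 := by
        intro ε hε
        have h : ∀ w ∈ c ε, w = 0 := fun w hw => by
          rwa [hc ε hε, AddSubgroup.mem_bot] at hw
        exact Subtype.ext (h _ (a ε).2)
      have h1 : a = DirectSum.of (fun ε => c ε) 1 (a 1) := by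
        ext ε
        by_cases h : ε = 1
        · subst h; rw [DirectSum.of_eq_same]
        · rw [hz ε h, DirectSum.of_eq_of_ne _ _ _ h]
      rw [h1, DirectSum.coeAddMonoidHom_of] at ha
      have h2 : a 1 = 0 := Subtype.ext ha
      rw [h1, h2, map_zero]
    · intro x
      refine ⟨DirectSum.of (fun ε => c ε) 1 ⟨x, by rw [hc1]; trivial⟩, ?_⟩
      rw [DirectSum.coeAddMonoidHom_of]

theorem Grading.IsUniversal.closure_support {g : Grading R Γ} (hg : g.IsUniversal) :
    Subgroup.closure {γ | g.comp γ ≠ ⊥} = ⊤ := by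
  set H := Subgroup.closure {γ | g.comp γ ≠ ⊥} with hH
  have hbot : ∀ γ, γ ∉ H → g.comp γ = ⊥ := by
    intro γ h
    by_contra h'
    exact h (Subgroup.subset_closure h')
  obtain ⟨s, hs1, hs⟩ := exists_trivial_grading R (Γ ⧸ H)
  obtain ⟨f, -, hf⟩ := hg (Γ ⧸ H) inferInstance s
  have e1 : (1 : Γ →* Γ ⧸ H) = f := by
    apply hf
    intro ε
    by_cases hε : ε = 1
    · subst hε
      rw [hs1, ← g.iSup_comp]
      simp
    · rw [hs ε hε]
      symm
      simp only [iSup_eq_bot]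
      intro δ hδ
      exact absurd hδ.symm hε
  have e2 : QuotientGroup.mk' H = f := by
    apply hf
    intro ε
    by_cases hε : ε = 1
    · subst hε
      rw [hs1, ← g.iSup_comp]
      apply le_antisymm
      · apply iSup_le
        intro γ
        by_cases hγ : γ ∈ H
        · exact le_iSup₂_of_le γ ((QuotientGroup.eq_one_iff γ).2 hγ) le_rfl
        · rw [hbot γ hγ]; exact bot_le
      · exact iSup₂_le fun γ _ => le_iSup g.comp γ
    · rw [hs ε hε]
      symm
      simp only [iSup_eq_bot]
      intro δ hδ
      apply hbot
      intro h
      have h5 : (QuotientGroup.mk' H) δ = 1 := (QuotientGroup.eq_one_iff δ).2 h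
      exact hε (hδ.symm.trans h5)
  rw [eq_top_iff]
  intro γ _
  rw [← QuotientGroup.eq_one_iff]
  exact (DFunLike.congr_fun (e2.trans e1.symm) γ)

theorem Grading.IsUniversal.finite [Module.Finite ℤ R] [IsReduced R] {g : Grading R Γ}
    (hg : g.IsUniversal) : Finite Γ := by
  have hfin := g.finite_support
  have hcl := hg.closure_support
  have hFG : Group.FG Γ := Group.fg_iff.2 ⟨_, hcl, hfin⟩
  have hpow : ∀ (γ : Γ) (x : R), x ∈ g.comp γ → ∀ n : ℕ, x ^ (n + 1) ∈ g.comp (γ ^ (n + 1)) := by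
    intro γ x hx n
    induction n with
    | zero => simpa using hx
    | succ n ih => rw [pow_succ x, pow_succ γ]; exact g.mul_mem ih hx
  have htor : Subgroup.closure {γ | g.comp γ ≠ ⊥} ≤ CommGroup.torsion Γ := by
    rw [Subgroup.closure_le]
    intro γ hγ
    obtain ⟨x, hx, hx0⟩ := (AddSubgroup.ne_bot_iff_exists_ne_zero.1 hγ).elim
      fun a ha => (⟨a.1, a.2, fun h => ha (Subtype.ext h)⟩ : ∃ x : R, x ∈ g.comp γ ∧ x ≠ 0)
    have hmem : ∀ n : ℕ, γ ^ (n + 1) ∈ {γ | g.comp γ ≠ ⊥} := by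
      intro n h
      have h1 := hpow γ x hx n
      rw [h, AddSubgroup.mem_bot] at h1
      exact hx0 (IsReduced.eq_zero x ⟨n + 1, h1⟩)
    have hninj : ¬ Function.Injective (fun n : ℕ => γ ^ (n + 1)) := by
      intro hinj
      exact Set.infinite_of_injective_forall_mem hinj hmem hfin
    show γ ∈ CommGroup.torsion Γ
    rw [CommGroup.mem_torsion]
    by_contra hno
    apply hninj
    intro a c h
    have := (injective_pow_iff_not_isOfFinOrder.2 hno) h
    omega
  rw [hcl] at htor
  apply CommGroup.finite_of_fg_isMulTorsion
  intro γ
  exact (CommGroup.mem_torsion γ).1 (htor trivial)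

theorem Grading.one_mem [Finite Γ] (g : Grading R Γ) : (1 : R) ∈ g.comp 1 := by
  have := Fintype.ofFinite Γ
  obtain ⟨π, hm, hs, hn, hsum⟩ := g.exists_proj_s14
  have hhom : ∀ γ x, x ∈ g.comp γ → π 1 1 * x = x := by
    intro δ x hx
    have h1 : π δ x = π δ (∑ γ, π γ 1 * x) := by
      rw [← Finset.sum_mul, hsum, one_mul]
    rw [hs δ x hx, map_sum, Finset.sum_eq_single 1] at h1
    · rw [hs δ _ (by simpa using g.mul_mem (hm 1 1) hx)] at h1
      exact h1.symm
    · intro γ _ hγ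
      exact hn (γ * δ) δ _ (g.mul_mem (hm γ 1) hx) (by simpa using hγ)
    · intro h
      exact absurd (Finset.mem_univ _) h
  have h2 : π 1 1 = 1 := by
    calc π 1 1 = π 1 1 * ∑ γ, π γ 1 := by rw [hsum, mul_one]
      _ = ∑ γ, π γ 1 := by
        rw [Finset.mul_sum]
        exact Finset.sum_congr rfl fun γ _ => hhom γ _ (hm γ 1)
      _ = 1 := hsum 1
  rw [← h2]
  exact hm 1 1

/-- Twisting a ring homomorphism by a character of the grading group. -/
theorem Grading.exists_twist [Finite Γ] (g : Grading R Γ) {K : Type} [Field K] (χ : Γ →* Kˣ)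
    (s : R →+* K) : ∃ t : R →+* K, ∀ γ x, x ∈ g.comp γ → t x = χ γ * s x := by
  have := Fintype.ofFinite Γ
  obtain ⟨π, hm, hs, hn, hsum⟩ := g.exists_proj_s14
  let F : R →+ K := ∑ γ, (AddMonoidHom.mulLeft ((χ γ : Kˣ) : K)).comp (s.toAddMonoidHom.comp (π γ))
  have hF : ∀ γ x, x ∈ g.comp γ → F x = χ γ * s x := by
    intro γ x hx
    have h1 : F x = ∑ δ, ((χ δ : Kˣ) : K) * s (π δ x) := by
      simp [F]
    rw [h1, Finset.sum_eq_single γ]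
    · rw [hs γ x hx]
    · intro δ _ hδ
      rw [hn γ δ x hx hδ.symm, map_zero, mul_zero]
    · intro h
      exact absurd (Finset.mem_univ _) h
  have hone : F 1 = 1 := by
    rw [hF 1 1 g.one_mem]; simp
  have hmul : ∀ x y, F (x * y) = F x * F y := by
    intro x y
    conv_lhs => rw [← hsum x, ← hsum y]
    conv_rhs => rw [← hsum x, ← hsum y]
    rw [Finset.sum_mul_sum, map_sum, map_sum, map_sum, Finset.sum_mul_sum]
    refine Finset.sum_congr rfl fun γ _ => ?_
    rw [map_sum]
    refine Finset.sum_congr rfl fun δ _ => ?_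
    rw [hF _ _ (g.mul_mem (hm γ x) (hm δ y)), hF _ _ (hm γ x), hF _ _ (hm δ y), map_mul, map_mul]
    push_cast
    ring
  exact ⟨{ F with map_one' := hone, map_mul' := hmul }, hF⟩

/-- Distinct homogeneous components are orthogonal. -/
theorem Grading.orthogonal [Finite Γ] (g : Grading R Γ) {K : Type} [Field K] [CharZero K]
    [IsAlgClosed K] (i : K →+* ℂ) [Fintype (R →+* K)] {γ δ : Γ} (hne : γ ≠ δ) {x y : R}
    (hx : x ∈ g.comp γ) (hy : y ∈ g.comp δ) :
    ∑ s : R →+* K, i (s x) * (starRingEnd ℂ) (i (s y)) = 0 := by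
  have := Fintype.ofFinite Γ
  have hexp : NeZero (Monoid.exponent Γ) := ⟨Monoid.exponent_ne_zero_of_finite⟩
  have hexpK : NeZero ((Monoid.exponent Γ : ℕ) : K) := ⟨by exact_mod_cast hexp.out⟩
  obtain ⟨χ, hχ⟩ := CommGroup.exists_apply_ne_one_of_hasEnoughRootsOfUnity Γ K
    (a := γ * δ⁻¹) (fun h => hne (mul_inv_eq_one.1 h))
  choose t ht using g.exists_twist χ
  have hinj : Function.Injective t := by
    intro s s' h
    obtain ⟨π, hm, -, -, hsum⟩ := g.exists_proj_s14
    ext z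
    rw [← hsum z, map_sum, map_sum]
    refine Finset.sum_congr rfl fun ε _ => ?_
    have h1 := ht s ε _ (hm ε z)
    rw [h, ht s' ε _ (hm ε z)] at h1
    exact (mul_left_cancel₀ (Units.ne_zero _) h1).symm
  have hbij : Function.Bijective t := Finite.injective_iff_bijective.1 hinj
  set A := ∑ s : R →+* K, i (s x) * (starRingEnd ℂ) (i (s y)) with hA
  have h1 : A = (i (χ γ) * (starRingEnd ℂ) (i (χ δ))) * A := by
    conv_lhs => rw [hA, ← hbij.sum_comp]
    rw [hA, Finset.mul_sum]
    refine Finset.sum_congr rfl fun s _ => ?_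
    rw [ht s γ x hx, ht s δ y hy, map_mul, map_mul, map_mul]
    ring
  by_contra hA0
  have h2 : i (χ γ) * (starRingEnd ℂ) (i (χ δ)) = 1 := by
    have : (i (χ γ) * (starRingEnd ℂ) (i (χ δ))) * A = 1 * A := by rw [one_mul]; exact h1.symm
    exact mul_right_cancel₀ hA0 this
  have h3 : ‖i (χ δ)‖ = 1 := by
    apply Complex.norm_eq_one_of_pow_eq_one (n := Monoid.exponent Γ) _ hexp.out
    rw [← map_pow, ← Units.val_pow_eq_pow_val, ← map_pow, Monoid.pow_exponent_eq_one]
    simp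
  have h4 : i (χ δ) * (starRingEnd ℂ) (i (χ δ)) = 1 := by
    rw [Complex.mul_conj, Complex.normSq_eq_norm_sq, h3]; simp
  have h5 : i (χ γ) = i (χ δ) := by
    have h6 : (starRingEnd ℂ) (i (χ δ)) ≠ 0 := right_ne_zero_of_mul_eq_one h4
    exact mul_right_cancel₀ h6 (h2.trans h4.symm)
  apply hχ
  rw [map_mul, map_inv, mul_inv_eq_one]
  exact Units.ext (i.injective h5)

/-- Roots of unity are homogeneous. -/
theorem Grading.exists_degree [Finite Γ] [Module.Free ℤ R] [Module.Finite ℤ R] [IsReduced R]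
    (hconn : IsConnectedRing R) (g : Grading R Γ) {K : Type} [Field K] [CharZero K]
    [IsAlgClosed K] [Algebra.IsAlgebraic ℚ K] (i : K →+* ℂ) (ζ : CommGroup.torsion Rˣ) :
    ∃ γ, ((ζ : Rˣ) : R) ∈ g.comp γ := by
  classical
  have := Fintype.ofFinite Γ
  have := finite_embeddings R K
  have := Fintype.ofFinite (R →+* K)
  have := hconn.1
  obtain ⟨π, hm, hs, hn, hsum⟩ := g.exists_proj_s14
  set z : R := ((ζ : Rˣ) : R) with hz
  set z' : R := (((ζ⁻¹ : CommGroup.torsion Rˣ) : Rˣ) : R) with hz'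
  have hzz : z' * z = 1 := by
    rw [hz, hz']; simp
  have key : ∀ γ, z' * π γ z = 0 ∨ z' * π γ z = 1 := by
    intro γ
    apply hconn.2
    have hsplit : π γ z + ∑ δ ∈ Finset.univ.erase γ, π δ z = z := by
      rw [Finset.add_sum_erase _ (fun δ => π δ z) (Finset.mem_univ γ), hsum]
    set y := ∑ δ ∈ Finset.univ.erase γ, π δ z with hy
    have h1 : z' * π γ z + z' * y = 1 := by rw [← mul_add, hsplit, hzz]
    have h2 : ∑ s : R →+* K, i (s (π γ z)) * (starRingEnd ℂ) (i (s y)) = 0 := by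
      have h3 : ∀ s : R →+* K, i (s (π γ z)) * (starRingEnd ℂ) (i (s y)) =
          ∑ δ ∈ Finset.univ.erase γ, i (s (π γ z)) * (starRingEnd ℂ) (i (s (π δ z))) := by
        intro s
        rw [hy, map_sum, map_sum, map_sum, Finset.mul_sum]
      rw [Finset.sum_congr rfl fun s _ => h3 s, Finset.sum_comm]
      apply Finset.sum_eq_zero
      intro δ hδ
      exact g.orthogonal i (Finset.ne_of_mem_erase hδ).symm (hm γ z) (hm δ z)
    have h4 : (z' * π γ z) * (z' * y) = 0 := by
      apply mul_eq_zero_of_orthogonal i h1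
      rw [← h2]
      refine Finset.sum_congr rfl fun s _ => ?_
      have h5 : i (s z') * (starRingEnd ℂ) (i (s z')) = 1 := by
        rw [Complex.mul_conj, Complex.normSq_eq_norm_sq, hz', norm_torsion]; simp
      rw [map_mul, map_mul, map_mul s, map_mul i, map_mul (starRingEnd ℂ)]
      linear_combination (i (s (π γ z)) * (starRingEnd ℂ) (i (s y))) * h5
    have h6 : z' * y = 1 - z' * π γ z := by rw [← h1]; ring
    rw [h6] at h4
    show z' * π γ z * (z' * π γ z) = z' * π γ z
    linear_combination -h4
  by_cases hall : ∀ γ, z' * π γ z = 0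
  · exfalso
    have h7 : z' * z = 0 := by
      conv_lhs => rw [← hsum z]
      rw [Finset.mul_sum]
      exact Finset.sum_eq_zero fun γ _ => hall γ
    rw [hzz] at h7
    exact one_ne_zero h7
  · push Not at hall
    obtain ⟨γ, hγ⟩ := hall
    have h8 := (key γ).resolve_left hγ
    refine ⟨γ, ?_⟩
    have h9 : π γ z = z := by
      linear_combination z * h8 - (π γ z) * hzz
    rw [← h9]
    exact hm γ z

end Gradings

/-- There is an algebraic closure of `ℚ` inside the complex numbers. -/
theorem exists_algebraic_closure : ∃ (K : Type) (_ : Field K) (_ : CharZero K) (_ : IsAlgClosed K)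
    (_ : Algebra.IsAlgebraic ℚ K), Nonempty (K →+* ℂ) := by
  have hchar : CharZero (AlgebraicClosure ℚ) := inferInstance
  have halg : @Algebra.IsAlgebraic ℚ (AlgebraicClosure ℚ) _ _ DivisionRing.toRatAlgebra := by
    have h : (DivisionRing.toRatAlgebra : Algebra ℚ (AlgebraicClosure ℚ)) =
      AlgebraicClosure.instAlgebra ℚ := Subsingleton.elim _ _
    rw [h]
    exact AlgebraicClosure.isAlgebraic ℚ
  refine ⟨AlgebraicClosure ℚ, inferInstance, hchar, inferInstance, halg, ⟨?_⟩⟩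
  exact (IsAlgClosed.lift : AlgebraicClosure ℚ →ₐ[ℚ] ℂ).toRingHom

/-- Let `R` be a connected reduced order with universal grading
`(Γ, (R_γ))`. Then `μ(R)` and `Γ` are finite, every root of unity of `R` lies in a unique
component `R_γ`, and sending each root of unity to the component containing it defines
a group homomorphism `d : μ(R) → Γ` (the degree map). -/
theorem degree_map_exists
    {R : Type u} [CommRing R] [Module.Free ℤ R] [Module.Finite ℤ R] [IsReduced R]
    (hconn : IsConnectedRing R)
    {Γ : Type v} [CommGroup Γ] (gr : Grading R Γ) (hgr : gr.IsUniversal) :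
    Finite (CommGroup.torsion Rˣ) ∧ Finite Γ ∧
    (∀ ζ : CommGroup.torsion Rˣ, ∃! γ : Γ, ((ζ : Rˣ) : R) ∈ gr.comp γ) ∧
    ∃ d : CommGroup.torsion Rˣ →* Γ,
      ∀ ζ : CommGroup.torsion Rˣ, ((ζ : Rˣ) : R) ∈ gr.comp (d ζ) := by
  obtain ⟨K, _, _, _, _, ⟨i⟩⟩ := exists_algebraic_closure
  have hfin : Finite Γ := hgr.finite
  have hnt := hconn.1
  have huniq : ∀ ζ : CommGroup.torsion Rˣ, ∃! γ : Γ, ((ζ : Rˣ) : R) ∈ gr.comp γ := by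
    intro ζ
    obtain ⟨γ, hγ⟩ := gr.exists_degree hconn i ζ
    exact ⟨γ, hγ, fun δ hδ => gr.eq_of_mem_s14 hδ hγ (Units.ne_zero _)⟩
  refine ⟨finite_torsion i, hfin, huniq, ?_⟩
  choose d hd hd' using huniq
  refine ⟨MonoidHom.mk' d ?_, hd⟩
  intro ζ ξ
  symm
  apply hd'
  have := gr.mul_mem (hd ζ) (hd ξ)
  simpa using this
end

section
/- Let A be a connected reduced order with universal grading (Γ, (A_γ)_{γ∈Γ}) and let G be a finite abelian group. For γ ∈ Γ and g ∈ G, let (A[G])_{(γ,g)} = A_γ·g be the additive subgroup {x·g : x ∈ A_γ} of the group ring A[G]. Then (Γ × G, ((A[G])_{(γ,g)})_{(γ,g)}) is a universal grading of A[G]. Moreover, identifying μ(A[G]) with μ(A) × G via the isomorphism (ζ,g) ↦ ζ·g, the degree map of A[G] with respect to this universal grading equals d_A × id_G, where d_A is the degree map of A. -/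
namespace UG

section Basic
variable {R : Type*} [CommRing R] {E : Type*} [CommGroup E] (s : Grading R E)

noncomputable def lift {M : Type*} [AddCommGroup M] (f : E → R →+ M) : R →+ M :=
  letI := Classical.decEq E
  letI := DirectSum.IsInternal.chooseDecomposition s.comp s.isInternal
  (DirectSum.toAddMonoid (fun ε => (f ε).comp (s.comp ε).subtype)).comp
    (DirectSum.decomposeAddEquiv s.comp).toAddMonoidHom

lemma lift_of_mem {M : Type*} [AddCommGroup M] (f : E → R →+ M) {ε : E} {x : R}
    (hx : x ∈ s.comp ε) : lift s f x = f ε x := by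
  let := Classical.decEq E
  let := DirectSum.IsInternal.chooseDecomposition s.comp s.isInternal
  simp [lift, DirectSum.decompose_of_mem s.comp hx]

lemma mem_iSup (x : R) : x ∈ ⨆ ε, s.comp ε := by
  let := Classical.decEq E
  let := DirectSum.IsInternal.chooseDecomposition s.comp s.isInternal
  induction x using DirectSum.Decomposition.inductionOn s.comp with
  | zero => exact zero_mem _
  | homogeneous m => exact AddSubgroup.mem_iSup_of_mem _ m.2
  | add m m' h h' => exact add_mem h h'

lemma gr_induction {P : R → Prop} (x : R) (h : ∀ ε, ∀ x ∈ s.comp ε, P x)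
    (ha : ∀ x y, P x → P y → P (x + y)) : P x :=
  AddSubgroup.iSup_induction s.comp (C := P) (mem_iSup s x) h (h 1 0 (zero_mem _)) ha

open Classical in
noncomputable def proj (ε : E) : R →+ R :=
  lift s (fun δ => if δ = ε then AddMonoidHom.id R else 0)

lemma proj_same {ε : E} {x : R} (hx : x ∈ s.comp ε) : proj s ε x = x := by
  simp [proj, lift_of_mem s _ hx]

lemma proj_ne {ε δ : E} {x : R} (hx : x ∈ s.comp δ) (h : δ ≠ ε) : proj s ε x = 0 := by
  simp [proj, lift_of_mem s _ hx, h]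

lemma proj_mem (ε : E) (x : R) : proj s ε x ∈ s.comp ε := by
  induction x using gr_induction s with
  | h δ x hx =>
    by_cases h : δ = ε
    · subst h; rwa [proj_same s hx]
    · rw [proj_ne s hx h]; exact zero_mem _
  | ha x y hx hy => rw [map_add]; exact add_mem hx hy

lemma deg_unique {ε δ : E} {x : R} (hx : x ∈ s.comp ε) (hx' : x ∈ s.comp δ) (h0 : x ≠ 0) :
    ε = δ := by
  by_contra h
  exact h0 ((proj_same s hx').symm.trans (proj_ne s hx h))

/-- an element whose components all lie in an additive subgroup lies in it -/
lemma mem_of_proj {H : AddSubgroup R} (x : R) (h : ∀ ε, proj s ε x ∈ H) : x ∈ H := by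
  classical
  have key : ∀ x : R, ∃ t : Finset E, x = ∑ ε ∈ t, proj s ε x ∧ ∀ ε ∉ t, proj s ε x = 0 := by
    intro x
    induction x using gr_induction s with
    | h δ x hx =>
      refine ⟨{δ}, by simp [proj_same s hx], fun ε hε => proj_ne s hx ?_⟩
      rintro rfl; simp at hε
    | ha x y hx hy =>
      obtain ⟨t, ht, ht'⟩ := hx
      obtain ⟨u, hu, hu'⟩ := hy
      refine ⟨t ∪ u, ?_, ?_⟩
      · simp only [map_add, Finset.sum_add_distrib]
        rw [← Finset.sum_subset Finset.subset_union_left (fun ε _ h => ht' ε h),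
          ← Finset.sum_subset Finset.subset_union_right (fun ε _ h => hu' ε h), ← ht, ← hu]
      · intro ε hε
        simp only [Finset.mem_union, not_or] at hε
        rw [map_add, ht' ε hε.1, hu' ε hε.2, add_zero]
  obtain ⟨t, ht, -⟩ := key x
  rw [ht]
  exact sum_mem fun ε _ => h ε

lemma exists_proj_ne_zero {x : R} (hx : x ≠ 0) : ∃ ε, proj s ε x ≠ 0 := by
  by_contra! h
  exact hx (by simpa using mem_of_proj s (H := ⊥) x (by simpa using h))

lemma proj_mul {δ : E} {x : R} (hx : x ∈ s.comp δ) (ε : E) (y : R) :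
    proj s (δ * ε) (x * y) = x * proj s ε y := by
  induction y using gr_induction s with
  | h γ y hy =>
    by_cases h : γ = ε
    · subst h; rw [proj_same s hy, proj_same s (s.mul_mem hx hy)]
    · rw [proj_ne s hy h, proj_ne s (s.mul_mem hx hy) (by simpa using h), mul_zero]
  | ha y z hy hz => rw [mul_add, map_add, map_add, hy, hz, mul_add]

lemma one_mem : (1 : R) ∈ s.comp 1 := by
  have : ∀ x : R, x * proj s 1 1 = x := by
    intro x
    induction x using gr_induction s with
    | h γ x hx =>
      rw [← proj_mul s hx, mul_one, mul_one, proj_same s hx]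
    | ha y z hy hz => rw [add_mul, hy, hz]
  have h := this 1
  rw [one_mul] at h
  rw [← h]
  exact proj_mem s _ _

/-- build a direct sum decomposition from projections -/
lemma isInternal_of_proj {R : Type*} [AddCommGroup R] {ι : Type*} [DecidableEq ι]
    (c : ι → AddSubgroup R) (p : ι → R → R)
    (p0 : ∀ i, p i 0 = 0) (padd : ∀ i x y, p i (x + y) = p i x + p i y)
    (hs : ∀ i, ∀ x ∈ c i, p i x = x)
    (hn : ∀ i j, ∀ x ∈ c j, j ≠ i → p i x = 0) (hsup : ∀ x, x ∈ ⨆ i, c i) :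
    DirectSum.IsInternal c := by
  let q : ι → R →+ R := fun i => ⟨⟨p i, p0 i⟩, padd i⟩
  have key : ∀ (x : DirectSum ι (fun i => c i)) i, q i (DirectSum.coeAddMonoidHom c x) = x i := by
    intro x i
    induction x using DirectSum.induction_on with
    | zero => simp
    | of j y =>
      rw [DirectSum.coeAddMonoidHom_of]
      by_cases h : j = i
      · subst h; rw [DirectSum.of_eq_same]; exact hs _ _ y.2
      · rw [DirectSum.of_eq_of_ne _ _ _ (Ne.symm h)]; exact hn _ _ _ y.2 h
    | add x y hx hy => rw [map_add, map_add, hx, hy]; rfl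
  constructor
  · rw [injective_iff_map_eq_zero]
    intro x hx
    ext i
    rw [← key, hx, map_zero]; rfl
  · intro x
    refine AddSubgroup.iSup_induction c (C := fun x => ∃ a, DirectSum.coeAddMonoidHom c a = x)
      (hsup x) ?_ ?_ ?_
    · intro i x hx
      exact ⟨DirectSum.of (fun i => c i) i ⟨x, hx⟩, by simp⟩
    · exact ⟨0, map_zero _⟩
    · rintro x y ⟨a, rfl⟩ ⟨b, rfl⟩
      exact ⟨a + b, map_add _ _ _⟩

/-- pushforward criterion -/
lemma pushforward_of_le {F : Type*} [CommGroup F] (t : Grading R F) (f : E →* F)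
    (h : ∀ ε, s.comp ε ≤ t.comp (f ε)) (φ : F) :
    t.comp φ = ⨆ δ ∈ f ⁻¹' {φ}, s.comp δ := by
  apply le_antisymm
  · intro x hx
    have key : ∀ x, proj t φ x ∈ ⨆ δ ∈ f ⁻¹' {φ}, s.comp δ := by
      intro x
      induction x using gr_induction s with
      | h γ x hx =>
        by_cases hf : f γ = φ
        · rw [proj_same t (hf ▸ h γ hx)]
          exact AddSubgroup.mem_iSup_of_mem γ (AddSubgroup.mem_iSup_of_mem hf hx)
        · rw [proj_ne t (h γ hx) hf]; exact zero_mem _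
      | ha x y hx hy => rw [map_add]; exact add_mem hx hy
    rw [← proj_same t hx]; exact key x
  · refine iSup₂_le fun δ hδ => ?_
    have : f δ = φ := hδ
    rw [← this]; exact h δ

lemma le_of_pushforward {F : Type*} [CommGroup F] (t : Grading R F) (f : E →* F)
    (h : ∀ φ, t.comp φ = ⨆ δ ∈ f ⁻¹' {φ}, s.comp δ) (ε : E) :
    s.comp ε ≤ t.comp (f ε) := by
  rw [h]
  exact le_iSup₂_of_le ε rfl le_rfl

end Basic

section Twist
variable {R : Type*} [CommRing R] {E : Type*} [CommGroup E] (s : Grading R E)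

noncomputable def twist (σ : R →+* ℂ) (χ : E →* Circle) : R →+* ℂ :=
  let l : R →+ ℂ := lift s (fun ε => (AddMonoidHom.mulLeft (χ ε : ℂ)).comp σ.toAddMonoidHom)
  have hl : ∀ {ε x}, x ∈ s.comp ε → l x = χ ε * σ x := fun hx => by
    simp [l, lift_of_mem s _ hx]
  { l with
    map_one' := by
      change l 1 = 1
      rw [hl (one_mem s)]; simp
    map_mul' := fun x y => by
      change l (x * y) = l x * l y
      induction x using gr_induction s with
      | h γ x hx =>
        induction y using gr_induction s with
        | h δ y hy =>
          rw [hl hx, hl hy, hl (s.mul_mem hx hy)]; simp; ring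
        | ha y z hy hz => rw [mul_add, map_add, map_add, hy, hz, mul_add]
      | ha y z hy hz => rw [add_mul, map_add, map_add, hy, hz, add_mul] }

lemma twist_of_mem (σ : R →+* ℂ) (χ : E →* Circle) {ε : E} {x : R} (hx : x ∈ s.comp ε) :
    twist s σ χ x = χ ε * σ x := by
  change lift s _ x = _
  simp [lift_of_mem s _ hx]

lemma twist_twist (σ : R →+* ℂ) (χ ψ : E →* Circle) :
    twist s (twist s σ χ) ψ = twist s σ (χ * ψ) := by
  ext x
  induction x using gr_induction s with
  | h γ x hx => simp only [twist_of_mem s _ _ hx]; simp; ring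
  | ha y z hy hz => rw [map_add, map_add, hy, hz]

lemma twist_one (σ : R →+* ℂ) : twist s σ 1 = σ := by
  ext x
  induction x using gr_induction s with
  | h γ x hx => simp only [twist_of_mem s _ _ hx]; simp
  | ha y z hy hz => rw [map_add, map_add, hy, hz]

lemma exists_char {ε : E} (h : ε ≠ 1) : ∃ χ : E →* Circle, χ ε ≠ 1 := by
  obtain ⟨c, hc⟩ := CharacterModule.exists_character_apply_ne_zero_of_ne_zero
    (A := Additive E) (a := Additive.ofMul ε) (by simpa using h)
  let j0 : ℚ →+ AddCircle (1 : ℝ) :=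
    (QuotientAddGroup.mk' (AddSubgroup.zmultiples (1 : ℝ))).comp (Rat.castHom ℝ).toAddMonoidHom
  have hker : AddSubgroup.zmultiples (1 : ℚ) = j0.ker := by
    ext q
    simp only [AddMonoidHom.mem_ker, AddSubgroup.mem_zmultiples_iff]
    change _ ↔ ((q : ℝ) : AddCircle (1:ℝ)) = 0
    rw [AddCircle.coe_eq_zero_iff]
    constructor
    · rintro ⟨k, rfl⟩; exact ⟨k, by simp⟩
    · rintro ⟨k, hk⟩; exact ⟨k, by simp at hk ⊢; exact_mod_cast hk⟩
  let j : AddCircle (1 : ℚ) →+ AddCircle (1 : ℝ) := QuotientAddGroup.lift _ j0 hker.le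
  have hj : Function.Injective j := by
    rw [injective_iff_map_eq_zero]
    intro a
    induction a using QuotientAddGroup.induction_on with
    | H q =>
      intro h
      have : q ∈ j0.ker := h
      rw [← hker] at this
      exact (QuotientAddGroup.eq_zero_iff q).2 this
  let χ : E →* Circle :=
    { toFun := fun e => AddCircle.toCircle (j (c (Additive.ofMul e)))
      map_one' := by simp
      map_mul' := fun x y => by simp [AddCircle.toCircle_add] }
  refine ⟨χ, fun h1 => hc ?_⟩
  apply hj
  apply AddCircle.injective_toCircle one_ne_zero
  rw [map_zero, AddCircle.toCircle_zero]
  exact h1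

lemma orth (O : Finset (R →+* ℂ)) (hO : ∀ σ ∈ O, ∀ χ, twist s σ χ ∈ O) {ε δ : E} (hne : ε ≠ δ)
    {x y : R} (hx : x ∈ s.comp ε) (hy : y ∈ s.comp δ) :
    ∑ σ ∈ O, σ x * starRingEnd ℂ (σ y) = 0 := by
  obtain ⟨χ, hχ⟩ := exists_char (ε := ε * δ⁻¹) (by simpa [mul_inv_eq_one] using hne)
  have h1 : ∑ σ ∈ O, σ x * starRingEnd ℂ (σ y)
      = ∑ σ ∈ O, (twist s σ χ) x * starRingEnd ℂ (twist s σ χ y) := by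
    symm
    refine Finset.sum_nbij' (fun σ => twist s σ χ) (fun σ => twist s σ χ⁻¹)
      (fun σ h => hO σ h _) (fun σ h => hO σ h _) ?_ ?_ ?_
    · intro σ _; simp [twist_twist, twist_one]
    · intro σ _; simp [twist_twist, twist_one]
    · intro σ _; rfl
  have h2 : ∑ σ ∈ O, (twist s σ χ) x * starRingEnd ℂ (twist s σ χ y)
      = (χ (ε * δ⁻¹) : ℂ) * ∑ σ ∈ O, σ x * starRingEnd ℂ (σ y) := by
    rw [Finset.mul_sum]
    refine Finset.sum_congr rfl fun σ _ => ?_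
    rw [twist_of_mem s _ _ hx, twist_of_mem s _ _ hy, map_mul, map_mul, Circle.coe_mul, map_inv,
      Circle.coe_inv_eq_conj]
    ring
  rw [h2] at h1
  by_contra hS
  apply hχ
  ext
  have := mul_right_cancel₀ hS ((one_mul _).trans h1)
  rw [← this]; rfl

noncomputable def nrm (O : Finset (R →+* ℂ)) (x : R) : ℝ := ∑ σ ∈ O, ‖σ x‖ ^ 2

lemma nrm_nonneg (O : Finset (R →+* ℂ)) (x : R) : 0 ≤ nrm O x :=
  Finset.sum_nonneg fun _ _ => by positivity

lemma pyth (O : Finset (R →+* ℂ)) (hO : ∀ σ ∈ O, ∀ χ, twist s σ χ ∈ O) (ε : E) (x : R) :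
    nrm O x = nrm O (proj s ε x) + nrm O (x - proj s ε x) := by
  set a := proj s ε x with ha
  have ham : a ∈ s.comp ε := proj_mem s ε x
  have key : ∀ y, ∑ σ ∈ O, σ a * starRingEnd ℂ (σ (y - proj s ε y)) = 0 := by
    intro y
    induction y using gr_induction s with
    | h γ y hy =>
      by_cases h : γ = ε
      · subst h; simp [proj_same s hy]
      · rw [proj_ne s hy h, sub_zero]
        exact orth s O hO (Ne.symm h) ham hy
    | ha y z hy hz =>
      have : y + z - proj s ε (y + z) = (y - proj s ε y) + (z - proj s ε z) := by
        rw [map_add]; ring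
      rw [this]
      generalize y - proj s ε y = y' at hy ⊢
      generalize z - proj s ε z = z' at hz ⊢
      simp only [map_add, mul_add, Finset.sum_add_distrib, hy, hz, add_zero]
  have hk := congrArg Complex.re (key x)
  rw [← ha, Complex.re_sum, Complex.zero_re] at hk
  have : ∀ σ ∈ O, ‖σ x‖ ^ 2 = ‖σ a‖ ^ 2 + ‖σ (x - a)‖ ^ 2
      + 2 * (σ a * starRingEnd ℂ (σ (x - a))).re := by
    intro σ _
    have : σ x = σ a + σ (x - a) := by rw [← map_add]; congr 1; ring
    rw [this, ← Complex.normSq_eq_norm_sq, ← Complex.normSq_eq_norm_sq,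
      ← Complex.normSq_eq_norm_sq, Complex.normSq_add]
  unfold nrm
  rw [Finset.sum_congr rfl this, Finset.sum_add_distrib, Finset.sum_add_distrib, ← Finset.mul_sum,
    hk]
  ring

end Twist

section Lattice

lemma exists_split {R : Type*} [CommRing R] [Fintype (R →+* ℂ)] {E : Type*} [CommGroup E] (s : Grading R E)
    (hpos : ∀ y : R, y ≠ 0 → 0 < nrm Finset.univ y) {x : R} (hx : ∀ e, x ∉ s.comp e) :
    ∃ y z, x = y + z ∧ nrm Finset.univ y < nrm Finset.univ x ∧
      nrm Finset.univ z < nrm Finset.univ x := by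
  have h0 : x ≠ 0 := fun h => hx 1 (h ▸ zero_mem _)
  obtain ⟨ε, hε⟩ := exists_proj_ne_zero s h0
  have hz : x - proj s ε x ≠ 0 := fun h => hx ε (by
    rw [sub_eq_zero.1 h]; exact proj_mem s ε x)
  have := pyth s Finset.univ (fun _ _ _ => Finset.mem_univ _) ε x
  have h1 := hpos _ hε
  have h2 := hpos _ hz
  exact ⟨proj s ε x, x - proj s ε x, by ring, by linarith, by linarith⟩

variable {R : Type*} [CommRing R] [Module.Finite ℤ R]

lemma hom_finite : Finite (R →+* ℂ) :=
  Finite.of_injective (fun σ : R →+* ℂ => σ.toIntAlgHom) fun σ τ h => by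
    ext x
    exact DFunLike.congr_fun h x

lemma exists_hom_ne [Module.Free ℤ R] [IsReduced R] {x : R} (hx : x ≠ 0) :
    ∃ σ : R →+* ℂ, σ x ≠ 0 := by
  let S : Submonoid R :=
    { carrier := {y | ∃ (n : ℤ) (k : ℕ), n ≠ 0 ∧ y = n • x ^ k}
      one_mem' := ⟨1, 0, one_ne_zero, by simp⟩
      mul_mem' := by
        rintro _ _ ⟨n, k, hn, rfl⟩ ⟨m, l, hm, rfl⟩
        exact ⟨n * m, k + l, mul_ne_zero hn hm, by rw [smul_mul_smul_comm, pow_add]⟩ }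
  have hdis : Disjoint ((⊥ : Ideal R) : Set R) (S : Set R) := by
    rw [Set.disjoint_left]
    rintro y hy ⟨n, k, hn, hk⟩
    have hy0 : y = 0 := by simpa using hy
    rw [hy0] at hk
    have := (smul_eq_zero.1 hk.symm).resolve_left hn
    exact hx (IsReduced.eq_zero x ⟨k, this⟩)
  obtain ⟨P, hP, -, hPS⟩ := Ideal.exists_le_prime_disjoint ⊥ S hdis
  rw [Set.disjoint_left] at hPS
  have hinj : Function.Injective (algebraMap ℤ (R ⧸ P)) := by
    rw [injective_iff_map_eq_zero]
    intro n hn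
    by_contra hn0
    refine hPS (a := (n : R)) ?_ ⟨n, 0, hn0, by simp⟩
    apply (Ideal.Quotient.eq_zero_iff_mem).1
    simpa using hn
  have : Module.IsTorsionFree ℤ (R ⧸ P) := by
    have : FaithfulSMul ℤ (R ⧸ P) := (faithfulSMul_iff_algebraMap_injective ℤ (R ⧸ P)).2 hinj
    infer_instance
  have : Module.Finite ℤ (R ⧸ P) := inferInstance
  let l : (R ⧸ P) →ₐ[ℤ] ℂ := IsAlgClosed.lift
  have hl : Function.Injective l := by
    have h1 : RingHom.ker (l : (R ⧸ P) →+* ℂ) = ⊥ := by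
      apply Ideal.eq_bot_of_comap_eq_bot (R := ℤ)
      rw [eq_bot_iff]
      intro n hn
      have h2 : l (algebraMap ℤ (R ⧸ P) n) = 0 := hn
      rw [AlgHom.commutes] at h2
      simpa using h2
    exact (RingHom.injective_iff_ker_eq_bot (l : (R ⧸ P) →+* ℂ)).2 h1
  refine ⟨(l : (R ⧸ P) →+* ℂ).comp (Ideal.Quotient.mk P), fun h => ?_⟩
  have h1 : (Ideal.Quotient.mk P) x = 0 := hl (by simpa using h)
  exact hPS (Ideal.Quotient.eq_zero_iff_mem.1 h1) ⟨1, 1, one_ne_zero, by simp⟩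

lemma finite_bdd [Module.Free ℤ R] [IsReduced R] (B : ℝ) :
    {x : R | ∀ σ : R →+* ℂ, ‖σ x‖ ≤ B}.Finite := by
  have hfin := hom_finite (R := R)
  have hintegral : ∀ (x : R), IsIntegral ℤ x := fun x => Algebra.IsIntegral.isIntegral x
  -- the values at each embedding form a finite set
  have hval : ∀ σ : R →+* ℂ, (σ '' {x : R | ∀ σ : R →+* ℂ, ‖σ x‖ ≤ B}).Finite := by
    intro σ
    obtain ⟨t, ht⟩ := (Module.Finite.fg_top : (⊤ : Submodule ℤ R).FG)
    let K := IntermediateField.adjoin ℚ (σ '' (t : Set R))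
    have hZ : ∀ x, IsIntegral ℤ (σ x) := fun x => (hintegral x).map σ.toIntAlgHom
    have : FiniteDimensional ℚ K := IntermediateField.finiteDimensional_adjoin (by
      rintro _ ⟨x, -, rfl⟩
      exact (hZ x).tower_top)
    have : NumberField K := ⟨⟩
    have hmem : ∀ x, σ x ∈ K := by
      intro x
      have hx : x ∈ Submodule.span ℤ (t : Set R) := ht ▸ Submodule.mem_top
      induction hx using Submodule.span_induction with
      | mem x h => exact IntermediateField.subset_adjoin _ _ ⟨x, h, rfl⟩
      | zero => rw [map_zero]; exact zero_mem _
      | add x y _ _ hx hy => rw [map_add]; exact add_mem hx hy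
      | smul n x _ hx => rw [map_zsmul]; exact zsmul_mem hx n
    let τ : R →+* K := σ.codRestrict K.toSubring hmem
    refine ((NumberField.Embeddings.finite_of_norm_le K ℂ B).image (algebraMap K ℂ)).subset ?_
    rintro _ ⟨x, hx, rfl⟩
    exact ⟨τ x, ⟨(hintegral x).map τ.toIntAlgHom, fun φ => hx (φ.comp τ)⟩, rfl⟩
  refine Set.Finite.of_finite_image (f := fun x (σ : R →+* ℂ) => σ x) ?_ ?_
  · refine (Set.Finite.pi' hval).subset ?_
    rintro _ ⟨x, hx, rfl⟩ σ
    exact ⟨x, hx, rfl⟩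
  · intro x _ y _ h
    by_contra hne
    obtain ⟨σ, hσ⟩ := exists_hom_ne (sub_ne_zero.2 hne)
    exact hσ (by rw [map_sub, sub_eq_zero]; exact congrFun h σ)

lemma bihom [Module.Free ℤ R] [IsReduced R] {E F : Type*} [CommGroup E] [CommGroup F]
    (s : Grading R E) (t : Grading R F) (x : R) :
    x ∈ AddSubgroup.closure {y : R | (∃ ε, y ∈ s.comp ε) ∧ ∃ γ, y ∈ t.comp γ} := by
  classical
  have := hom_finite (R := R)
  have := Fintype.ofFinite (R →+* ℂ)
  let N : R → ℝ := nrm Finset.univ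
  have hpos : ∀ y, y ≠ 0 → 0 < N y := by
    intro y hy
    obtain ⟨σ, hσ⟩ := exists_hom_ne hy
    exact Finset.sum_pos' (fun _ _ => by positivity) ⟨σ, Finset.mem_univ _, by positivity⟩
  have hfin : ∀ B, {y | N y ≤ B}.Finite := by
    intro B
    refine (finite_bdd (R := R) (B + 1)).subset fun y hy σ => ?_
    have h1 : ‖σ y‖ ^ 2 ≤ N y :=
      Finset.single_le_sum (f := fun σ : R →+* ℂ => ‖σ y‖ ^ 2) (fun _ _ => by positivity)
        (Finset.mem_univ σ)
    have hy' : N y ≤ B := hy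
    nlinarith [sq_nonneg (‖σ y‖ - 1), norm_nonneg (σ y)]
  have main : ∀ (n : ℕ) (x : R), {y | N y ≤ N x}.ncard = n →
      x ∈ AddSubgroup.closure {y : R | (∃ ε, y ∈ s.comp ε) ∧ ∃ γ, y ∈ t.comp γ} := by
    intro n
    induction n using Nat.strong_induction_on with
    | _ n ih =>
    intro x hx
    have hlt : ∀ y, N y < N x →
        y ∈ AddSubgroup.closure {y : R | (∃ ε, y ∈ s.comp ε) ∧ ∃ γ, y ∈ t.comp γ} := by
      intro y hy
      refine ih _ ?_ y rfl
      rw [← hx]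
      refine Set.ncard_lt_ncard ⟨fun z hz => le_trans hz hy.le, fun h => ?_⟩ (hfin _)
      exact absurd (h (le_refl (N x))) (not_le.2 hy)
    by_cases h0 : x = 0
    · rw [h0]; exact zero_mem _
    by_cases hs : ∃ ε, x ∈ s.comp ε
    · by_cases ht : ∃ ε, x ∈ t.comp ε
      · exact AddSubgroup.subset_closure ⟨hs, ht⟩
      · obtain ⟨y, z, hyz, hy, hz⟩ := exists_split t hpos (fun e h => ht ⟨e, h⟩)
        rw [hyz]; exact add_mem (hlt y hy) (hlt z hz)
    · obtain ⟨y, z, hyz, hy, hz⟩ := exists_split s hpos (fun e h => hs ⟨e, h⟩)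
      rw [hyz]; exact add_mem (hlt y hy) (hlt z hz)
  exact main _ x rfl

lemma proj_comm [Module.Free ℤ R] [IsReduced R] {E F : Type*} [CommGroup E] [CommGroup F]
    (s : Grading R E) (t : Grading R F) (ε : E) (γ : F) (x : R) :
    proj s ε (proj t γ x) = proj t γ (proj s ε x) := by
  have hx := bihom s t x
  induction hx using AddSubgroup.closure_induction with
  | mem x h =>
    obtain ⟨⟨ε', h1⟩, γ', h2⟩ := h
    by_cases he : ε' = ε
    · subst he
      by_cases hg : γ' = γ
      · subst hg; rw [proj_same s h1, proj_same t h2, proj_same s h1]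
      · rw [proj_same s h1, proj_ne t h2 hg, map_zero]
    · by_cases hg : γ' = γ
      · subst hg; rw [proj_same t h2, proj_ne s h1 he, map_zero]
      · rw [proj_ne t h2 hg, proj_ne s h1 he, map_zero, map_zero]
  | zero => simp
  | add x y _ _ hx hy => simp only [map_add, hx, hy]
  | neg x _ hx => simp only [map_neg, hx]

end Lattice

section GroupRing
variable {A : Type*} [CommRing A] [Module.Finite ℤ A] [Module.Free ℤ A] [IsReduced A]
variable {G : Type*} [CommGroup G] [Finite G]
open MonoidAlgebra

lemma reduced : IsReduced (MonoidAlgebra A G) := by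
  classical
  have := Fintype.ofFinite G
  have htr : ∀ x : MonoidAlgebra A G, Algebra.trace A (MonoidAlgebra A G) x
      = (Fintype.card G : ℤ) • x.coeff 1 := by
    intro x
    rw [Algebra.trace_eq_matrix_trace (MonoidAlgebra.basis G A), Matrix.trace]
    have : ∀ g : G, (Algebra.leftMulMatrix (MonoidAlgebra.basis G A) x).diag g = x.coeff 1 := by
      intro g
      rw [Matrix.diag_apply, Algebra.leftMulMatrix_eq_repr_mul]
      change (x * single g 1).coeff g = _
      rw [coeff_mul_single_eq_coeff_mul 1 (by intro a _; simp), mul_one]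
    rw [Finset.sum_congr rfl fun g _ => this g]; simp
  have h1 : ∀ x : MonoidAlgebra A G, IsNilpotent x → x.coeff 1 = 0 := by
    intro x hx
    have h2 : IsNilpotent (Algebra.trace A (MonoidAlgebra A G) x) :=
      by
      rw [Algebra.trace_apply]
      exact LinearMap.isNilpotent_trace_of_isNilpotent (hx.map (Algebra.lmul A (MonoidAlgebra A G)))
    have h3 := h2.eq_zero
    rw [htr] at h3
    exact (smul_eq_zero.1 h3).resolve_left (by simp)
  refine ⟨fun x hx => ?_⟩
  ext g
  have h2 : IsNilpotent (x * single g⁻¹ 1) := (Commute.all _ _).isNilpotent_mul_right hx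
  have := h1 _ h2
  rw [coeff_mul_single_eq_coeff_mul g (by intro a _; simp [mul_inv_eq_one]), mul_one] at this
  exact this

/-- the group ring graded by `Γ × G` -/
noncomputable def grProd {A : Type*} [CommRing A] {G : Type*} [CommGroup G]
    {Γ : Type*} [CommGroup Γ] (gr : Grading A Γ) : Grading (MonoidAlgebra A G) (Γ × G) where
  comp x := (gr.comp x.1).map (MonoidAlgebra.singleAddHom x.2)
  mul_mem := by
    rintro ⟨γ, g⟩ ⟨δ, h⟩ _ _ ⟨a, ha, rfl⟩ ⟨b, hb, rfl⟩
    exact ⟨a * b, gr.mul_mem ha hb, by simp [single_mul_single]⟩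
  isInternal := by
    let _ := Classical.decEq G
    refine @isInternal_of_proj _ _ _ (Classical.decEq _) _ (fun i x => single i.2 (proj gr i.1 (x.coeff i.2))) ?_ ?_ ?_ ?_ ?_
    · intro i; simp
    · intro i x y; simp
    · rintro ⟨γ, g⟩ _ ⟨a, ha, rfl⟩
      simp [proj_same gr ha]
    · rintro ⟨γ, g⟩ ⟨δ, h⟩ _ ⟨a, ha, rfl⟩ hne
      by_cases hg : h = g
      · subst hg
        have : δ ≠ γ := fun e => hne (by rw [e])
        simp [proj_ne gr ha this]
      · simp [hg]
    · intro x
      induction x using MonoidAlgebra.induction_linear with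
      | zero => exact zero_mem _
      | add x y hx hy => exact add_mem hx hy
      | single g a =>
        induction a using gr_induction gr with
        | h γ a ha => exact AddSubgroup.mem_iSup_of_mem (γ, g) ⟨a, ha, rfl⟩
        | ha a b ha hb => rw [single_add]; exact add_mem ha hb

/-- the group ring graded by `G` -/
noncomputable def grG (A : Type*) [CommRing A] (G : Type*) [CommGroup G] :
    Grading (MonoidAlgebra A G) G where
  comp x := (MonoidAlgebra.singleAddHom x).range
  mul_mem := by
    rintro g h _ _ ⟨a, rfl⟩ ⟨b, rfl⟩
    exact ⟨a * b, by simp [single_mul_single]⟩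
  isInternal := by
    let _ := Classical.decEq G
    refine @isInternal_of_proj _ _ _ (Classical.decEq _) _ (fun i x => single i (x.coeff i)) ?_ ?_ ?_ ?_ ?_
    · intro i; simp
    · intro i x y; simp
    · rintro g _ ⟨a, rfl⟩
      simp
    · rintro g h _ ⟨a, rfl⟩ hne
      simp [hne]
    · intro x
      induction x using MonoidAlgebra.induction_linear with
      | zero => exact zero_mem _
      | add x y hx hy => exact add_mem hx hy
      | single g a => exact AddSubgroup.mem_iSup_of_mem g ⟨a, rfl⟩

lemma proj_single {E : Type*} [CommGroup E] (s : Grading (MonoidAlgebra A G) E) (ε : E) (g : G)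
    (a : A) : proj s ε (single g a) = single g ((proj s ε (single g a)).coeff g) := by
  have := reduced (A := A) (G := G)
  have hm : (single g a : MonoidAlgebra A G) ∈ (grG A G).comp g := ⟨a, rfl⟩
  have h := proj_comm s (grG A G) ε g (single g a)
  rw [proj_same _ hm] at h
  have h2 := proj_mem (grG A G) g (proj s ε (single g a))
  rw [← h] at h2
  obtain ⟨b, hb⟩ := h2
  rw [← hb]
  simp

lemma sum_le {R : Type*} [CommRing R] [Module.Finite ℤ R] {E : Type*} [CommGroup E]
    (s : Grading R E) (u : R) (hu : ∀ τ : R →+* ℂ, ‖τ u‖ = 1) (σ : R →+* ℂ) {ε δ : E}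
    (hne : δ ≠ ε) : ‖σ (proj s ε u)‖ ^ 2 + ‖σ (proj s δ u)‖ ^ 2 ≤ 1 := by
  classical
  have := hom_finite (R := R)
  let O : Finset (R →+* ℂ) := (Set.toFinite (Set.range fun χ => twist s σ χ)).toFinset
  have hO : ∀ τ ∈ O, ∀ χ, twist s τ χ ∈ O := by
    intro τ hτ χ
    simp only [O, Set.Finite.mem_toFinset, Set.mem_range] at hτ ⊢
    obtain ⟨ψ, rfl⟩ := hτ
    exact ⟨_, (twist_twist s _ _ _).symm⟩
  have hσ : σ ∈ O := by
    simp only [O, Set.Finite.mem_toFinset, Set.mem_range]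
    exact ⟨1, twist_one s σ⟩
  have hn : ∀ {e x}, x ∈ s.comp e → nrm O x = O.card * ‖σ x‖ ^ 2 := by
    intro e x hx
    rw [nrm, ← nsmul_eq_mul]
    refine Finset.sum_eq_card_nsmul fun τ hτ => ?_
    simp only [O, Set.Finite.mem_toFinset, Set.mem_range] at hτ
    obtain ⟨ψ, rfl⟩ := hτ
    rw [twist_of_mem s _ _ hx, norm_mul, Circle.norm_coe, one_mul]
  have hnu : nrm O u = O.card := by simp [nrm, hu]
  have h1 := pyth s O hO ε u
  have h2 := pyth s O hO δ (u - proj s ε u)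
  rw [map_sub, proj_ne s (proj_mem s ε u) hne.symm, sub_zero] at h2
  rw [hnu, h2, hn (proj_mem s ε u), hn (proj_mem s δ u)] at h1
  have h3 := nrm_nonneg O (u - proj s ε u - proj s δ u)
  have hc : (0 : ℝ) < O.card := by exact_mod_cast Finset.card_pos.2 ⟨σ, hσ⟩
  have : (O.card : ℝ) * (‖σ (proj s ε u)‖ ^ 2 + ‖σ (proj s δ u)‖ ^ 2) ≤ O.card * 1 := by linarith
  exact le_of_mul_le_mul_left this hc

lemma exists_idem {R : Type*} [CommRing R] (a : R) (h : (Set.range fun n : ℕ => a ^ n).Finite) :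
    ∃ k, k ≠ 0 ∧ IsIdempotentElem (a ^ k) := by
  have : ¬ Function.Injective (fun n : ℕ => a ^ n) := fun hi => Set.infinite_range_of_injective hi h
  simp only [Function.Injective, not_forall] at this
  obtain ⟨i, j, hij, hne⟩ := this
  wlog hlt : i < j generalizing i j
  · exact this j i hij.symm (Ne.symm hne) (by omega)
  obtain ⟨d, rfl⟩ := Nat.exists_eq_add_of_lt hlt
  set D := d + 1
  have h1 : ∀ n, i ≤ n → a ^ (n + D) = a ^ n := by
    intro n hn
    obtain ⟨m, rfl⟩ := Nat.exists_eq_add_of_le hn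
    have : i + m + D = m + (i + d + 1) := by omega
    rw [this, pow_add, ← hij, ← pow_add]
    congr 1; omega
  have h2 : ∀ c n, i ≤ n → a ^ (n + c * D) = a ^ n := by
    intro c
    induction c with
    | zero => simp
    | succ c ih =>
      intro n hn
      rw [add_mul, one_mul, ← add_assoc, h1 _ (by omega), ih n hn]
  refine ⟨(i + 1) * D, by positivity, ?_⟩
  rw [IsIdempotentElem, ← pow_add, h2]
  have : 1 ≤ D := by omega
  nlinarith

lemma single_homog (hconn : IsConnectedRing A) {E : Type*} [CommGroup E]
    (s : Grading (MonoidAlgebra A G) E) (g : G) :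
    ∃ ε, (single g 1 : MonoidAlgebra A G) ∈ s.comp ε := by
  have := reduced (A := A) (G := G)
  have := hconn.1
  set u : MonoidAlgebra A G := single g 1 with hu
  have hu0 : u ≠ 0 := by simp [hu]
  have hσu : ∀ τ : MonoidAlgebra A G →+* ℂ, ‖τ u‖ = 1 := by
    intro τ
    apply Complex.norm_eq_one_of_pow_eq_one (n := orderOf g) _ (orderOf_pos g).ne'
    rw [← map_pow, hu, single_pow, pow_orderOf_eq_one, one_pow, ← one_def, map_one]
  obtain ⟨ε, hε⟩ := exists_proj_ne_zero s hu0
  have hfac : ∀ δ, ∃ a : A, proj s δ u = single 1 a * u := by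
    intro δ
    exact ⟨_, by rw [hu, proj_single, single_mul_single, one_mul, mul_one]⟩
  -- nonzero components have absolute value one everywhere
  have key : ∀ δ, proj s δ u ≠ 0 → ∀ σ : MonoidAlgebra A G →+* ℂ, ‖σ (proj s δ u)‖ = 1 := by
    intro δ hδ σ
    obtain ⟨a, ha⟩ := hfac δ
    have hb : ∀ τ : MonoidAlgebra A G →+* ℂ, ‖τ (single 1 a)‖ ≤ 1 := by
      intro τ
      have h1 : ‖τ (proj s δ u)‖ ≤ 1 := by
        by_cases hex : ∃ δ', δ' ≠ δ
        · obtain ⟨δ', hne⟩ := hex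
          have := sum_le s u hσu τ hne
          nlinarith [sq_nonneg ‖τ (proj s δ' u)‖, norm_nonneg (τ (proj s δ u))]
        · push Not at hex
          have hm : u ∈ s.comp δ := mem_of_proj s u fun δ' => by
            rw [hex δ']; exact proj_mem s _ _
          rw [proj_same s hm, hσu]
      rwa [ha, map_mul, norm_mul, hσu, mul_one] at h1
    have hfin : (Set.range fun n : ℕ => a ^ n).Finite := by
      refine Set.Finite.of_finite_image (f := fun a => (single 1 a : MonoidAlgebra A G)) ?_
        (fun x _ y _ h => by simpa using h)
      refine (finite_bdd (R := MonoidAlgebra A G) 1).subset ?_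
      rintro _ ⟨_, ⟨n, rfl⟩, rfl⟩ τ
      have : (single 1 (a ^ n) : MonoidAlgebra A G) = single 1 a ^ n := by simp [single_pow]
      change ‖τ (single 1 (a ^ n))‖ ≤ 1
      rw [this, map_pow, norm_pow]
      exact pow_le_one₀ (norm_nonneg _) (hb τ)
    obtain ⟨k, hk, hid⟩ := exists_idem a hfin
    rcases hconn.2 _ hid with h | h
    · have : a = 0 := IsReduced.eq_zero a ⟨k, h⟩
      exact absurd (by rw [ha, this]; simp) hδ
    · rw [ha, map_mul, norm_mul, hσu, mul_one]
      apply Complex.norm_eq_one_of_pow_eq_one (n := k) _ hk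
      rw [← map_pow, single_pow, one_pow, h, ← one_def, map_one]
  obtain ⟨σ, -⟩ := exists_hom_ne hu0
  have hz : ∀ δ, δ ≠ ε → proj s δ u = 0 := by
    intro δ hne
    by_contra h
    have := sum_le s u hσu σ hne
    rw [key ε hε, key δ h] at this
    norm_num at this
  refine ⟨ε, mem_of_proj s u fun δ => ?_⟩
  by_cases h : δ = ε
  · subst h; exact proj_mem s _ _
  · rw [hz δ h]; exact zero_mem _

lemma exists_comp (hconn : IsConnectedRing A) {E : Type*} [CommGroup E]
    (s : Grading (MonoidAlgebra A G) E) :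
    ∃ φ : G →* E, ∀ g, (single g 1 : MonoidAlgebra A G) ∈ s.comp (φ g) := by
  have := hconn.1
  choose f hf using single_homog hconn s
  refine ⟨MonoidHom.mk' f fun a b => ?_, hf⟩
  refine deg_unique s (hf _) ?_ (by simp)
  have := s.mul_mem (hf a) (hf b)
  rwa [single_mul_single, one_mul] at this

/-- the restricted grading on `A` -/
noncomputable def restr {E : Type*} [CommGroup E] (s : Grading (MonoidAlgebra A G) E) :
    Grading A E where
  comp ε := (s.comp ε).comap (MonoidAlgebra.singleAddHom 1)
  mul_mem := by
    intro γ δ x y hx hy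
    have := s.mul_mem hx hy
    simpa [single_mul_single] using this
  isInternal := by
    let _ := Classical.decEq G
    refine @isInternal_of_proj _ _ _ (Classical.decEq _) _ (fun ε a => (proj s ε (single 1 a)).coeff 1) ?_ ?_ ?_ ?_ ?_
    · intro i; simp
    · intro i x y; simp
    · intro i x hx
      have hx' : single 1 x ∈ s.comp i := hx
      simp [proj_same s hx']
    · intro i j x hx hne
      have hx' : single 1 x ∈ s.comp j := hx
      simp [proj_ne s hx' hne]
    · intro x
      set H := ⨆ i, (s.comp i).comap (MonoidAlgebra.singleAddHom (R := A) (1 : G)) with hH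
      have h : (single 1 x : MonoidAlgebra A G) ∈ H.map (MonoidAlgebra.singleAddHom (1 : G)) := by
        apply mem_of_proj s
        intro ε
        refine ⟨(proj s ε (single 1 x)).coeff 1, ?_, (proj_single s ε 1 x).symm⟩
        refine AddSubgroup.mem_iSup_of_mem ε ?_
        change single 1 _ ∈ s.comp ε
        rw [← proj_single]
        exact proj_mem s _ _
      obtain ⟨y, hy, hxy⟩ := h
      have : y = x := by simpa using hxy
      rwa [← this]

end GroupRing

section Universal

lemma exists_hom_of_universal {A : Type u} [CommRing A] [Module.Finite ℤ A]
    {Γ : Type v} [CommGroup Γ] (gr : Grading A Γ) (hgr : gr.IsUniversal)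
    {E : Type w} [CommGroup E] (s : Grading A E) :
    ∃ f : Γ →* E, ∀ γ, gr.comp γ ≤ s.comp (f γ) := by
  classical
  have : Countable A := Finsupp.Countable.of_moduleFinite (R := ℤ)
  let S := {ε : E // s.comp ε ≠ ⊥}
  have hS : ∀ ε : S, ∃ x : A, x ∈ s.comp ε ∧ x ≠ 0 := fun ε =>
    ((s.comp ε).ne_bot_iff_exists_ne_zero.1 ε.2).elim fun x hx => ⟨x, x.2, by simpa using hx⟩
  choose c hc hc0 using hS
  have : Countable S := Function.Injective.countable (f := c) fun a b h =>
    Subtype.ext (deg_unique s (hc a) (h ▸ hc b) (hc0 a))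
  let E0 : Subgroup E := (FreeGroup.lift (fun ε : S => (ε : E))).range
  have : Countable E0 := (Set.countable_range (FreeGroup.lift (fun ε : S => (ε : E)))).to_subtype
  have : Small.{v} E0 := Countable.toSmall _
  have hE0 : ∀ ε, s.comp ε ≠ ⊥ → ε ∈ E0 := fun ε h => ⟨FreeGroup.of ⟨ε, h⟩, by simp⟩
  let ι : Shrink.{v} E0 →* E := E0.subtype.comp (Shrink.mulEquiv (α := E0)).toMonoidHom
  have hι : Function.Injective ι :=
    E0.subtype_injective.comp (Shrink.mulEquiv (α := E0)).injective
  have hιs : ∀ ε ∈ E0, ∃ e, ι e = ε := fun ε h =>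
    ⟨(Shrink.mulEquiv (α := E0)).symm ⟨ε, h⟩, by simp [ι]⟩
  let t : Grading A (Shrink.{v} E0) :=
    { comp := fun e => s.comp (ι e)
      mul_mem := fun γ δ x y hx hy => by
        rw [map_mul]; exact s.mul_mem hx hy
      isInternal := by
        refine isInternal_of_proj _ (fun e x => proj s (ι e) x) ?_ ?_ ?_ ?_ ?_
        · intro i; simp
        · intro i x y; simp
        · intro i x hx; exact proj_same s hx
        · intro i j x hx hne; exact proj_ne s hx (fun h => hne (hι h))
        · intro x
          apply mem_of_proj s
          intro ε
          by_cases h : s.comp ε = ⊥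
          · have := proj_mem s ε x
            rw [h, AddSubgroup.mem_bot] at this
            rw [this]; exact zero_mem _
          · obtain ⟨e, rfl⟩ := hιs ε (hE0 ε h)
            exact AddSubgroup.mem_iSup_of_mem e (proj_mem s _ x) }
  obtain ⟨f, hf, -⟩ := hgr _ _ t
  exact ⟨ι.comp f, fun γ => le_of_pushforward gr t f hf γ⟩

lemma trivial_grading (A : Type u) [CommRing A] (Q : Type v) [CommGroup Q] :
    ∃ t : Grading A Q, t.comp 1 = ⊤ := by
  classical
  refine ⟨{ comp := fun q => if q = 1 then ⊤ else ⊥, mul_mem := ?_, isInternal := ?_ }, by simp⟩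
  · intro γ δ x y hx hy
    by_cases h1 : γ = 1 <;> by_cases h2 : δ = 1 <;> simp_all
  · refine isInternal_of_proj _ (fun e x => if e = 1 then x else 0) ?_ ?_ ?_ ?_ ?_
    · intro i; simp
    · intro i x y; split_ifs <;> simp
    · intro i x hx; by_cases h : i = 1 <;> simp_all
    · intro i j x hx hne; by_cases h : i = 1 <;> by_cases h' : j = 1 <;> simp_all
    · intro x; exact AddSubgroup.mem_iSup_of_mem 1 (by simp)

lemma closure_support {A : Type u} [CommRing A]
    {Γ : Type v} [CommGroup Γ] (gr : Grading A Γ) (hgr : gr.IsUniversal) :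
    Subgroup.closure {γ | gr.comp γ ≠ ⊥} = ⊤ := by
  set H := Subgroup.closure {γ | gr.comp γ ≠ ⊥} with hH
  obtain ⟨t, ht⟩ := trivial_grading A (Γ ⧸ H)
  have key : ∀ f : Γ →* Γ ⧸ H, (∀ γ, gr.comp γ ≠ ⊥ → f γ = 1) →
      ∀ ε, t.comp ε = ⨆ δ ∈ f ⁻¹' {ε}, gr.comp δ := by
    intro f hf
    apply pushforward_of_le gr t f
    intro γ
    by_cases h : gr.comp γ = ⊥
    · rw [h]; exact bot_le
    · rw [hf γ h, ht]; exact le_top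
  have heq := (hgr _ _ t).unique (key (QuotientGroup.mk' H) fun γ h =>
    (QuotientGroup.eq_one_iff γ).2 (Subgroup.subset_closure h)) (key 1 fun _ _ => rfl)
  rw [eq_top_iff]
  intro γ _
  exact (QuotientGroup.eq_one_iff γ).1 (DFunLike.congr_fun heq γ)

end Universal

end UG

/-- Let `A` be a connected reduced order with universal grading
`(Γ, (A_γ))` and degree map `d : μ(A) → Γ`, and let `G` be a finite abelian group. Then the
family `(A_γ·g)_{(γ,g) ∈ Γ × G}` is a universal grading of `A[G]`, and, identifying
`μ(A[G])` with `μ(A) × G` via `(ζ,g) ↦ ζ·g`, the degree map of `A[G]` is `d × id_G`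
(i.e. the root of unity `ζ·g` lies in the component of degree `(d ζ, g)`). -/
theorem universal_grading_of_groupring
    {A : Type u} [CommRing A] [Module.Free ℤ A] [Module.Finite ℤ A] [IsReduced A]
    (hconn : IsConnectedRing A)
    {Γ : Type v} [CommGroup Γ] (gr : Grading A Γ) (hgr : gr.IsUniversal)
    (d : CommGroup.torsion Aˣ →* Γ)
    (hd : ∀ ζ : CommGroup.torsion Aˣ, ((ζ : Aˣ) : A) ∈ gr.comp (d ζ))
    (G : Type w) [CommGroup G] [Finite G] :
    ∃ gr' : Grading (MonoidAlgebra A G) (Γ × G),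
      (∀ (γ : Γ) (g : G),
        gr'.comp (γ, g) = (gr.comp γ).map (MonoidAlgebra.singleAddHom g)) ∧
      gr'.IsUniversal ∧
      ∀ (ζ : CommGroup.torsion Aˣ) (g : G),
        (MonoidAlgebra.single g ((ζ : Aˣ) : A) : MonoidAlgebra A G) ∈ gr'.comp (d ζ, g) := by
  classical
  have hnt := hconn.1
  refine ⟨UG.grProd gr, fun γ g => rfl, ?_, fun ζ g => ⟨_, hd ζ, rfl⟩⟩
  intro E _ s
  obtain ⟨φ, hφ⟩ := UG.exists_comp hconn s
  obtain ⟨f, hf⟩ := UG.exists_hom_of_universal gr hgr (UG.restr s)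
  refine ⟨f.coprod φ, ?_, ?_⟩
  · apply UG.pushforward_of_le
    rintro ⟨γ, g⟩ _ ⟨a, ha, rfl⟩
    have h1 : MonoidAlgebra.single 1 a ∈ s.comp (f γ) := hf γ ha
    have h2 := s.mul_mem h1 (hφ g)
    rw [MonoidAlgebra.single_mul_single, one_mul, mul_one] at h2
    exact h2
  · intro f' hf'
    have hle := UG.le_of_pushforward _ s f' hf'
    have hA : ∀ x, f' (x, 1) = f x := by
      intro x
      have hx : x ∈ Subgroup.closure {γ | gr.comp γ ≠ ⊥} := by
        rw [UG.closure_support gr hgr]; trivial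
      have heq : Set.EqOn (f'.comp (MonoidHom.inl Γ G)) f {γ | gr.comp γ ≠ ⊥} := by
        intro γ hγ
        obtain ⟨a, ha⟩ := (gr.comp γ).ne_bot_iff_exists_ne_zero.1 hγ
        have h1 : MonoidAlgebra.single 1 (a : A) ∈ s.comp (f γ) := hf γ a.2
        have h2 : MonoidAlgebra.single 1 (a : A) ∈ s.comp (f' (γ, 1)) :=
          hle (γ, 1) ⟨a, a.2, rfl⟩
        exact UG.deg_unique s h2 h1 (by simpa using ha)
      exact MonoidHom.eqOn_closure heq hx
    have hB : ∀ x, f' (1, x) = φ x := by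
      intro x
      have h2 : MonoidAlgebra.single x (1 : A) ∈ s.comp (f' (1, x)) :=
        hle (1, x) ⟨1, UG.one_mem gr, rfl⟩
      exact UG.deg_unique s h2 (hφ x) (by simp)
    refine MonoidHom.ext fun x => ?_
    obtain ⟨γ, g⟩ := x
    rw [MonoidHom.coprod_apply, ← hA, ← hB, ← map_mul]
    simp
end
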